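/- arXiv:2004.09326 — 3 statements merged into one kernel-verified Lean document; each statement's English description precedes it below -/
import Mathlib

section
/- Let p ≥ 1 and r ≥ 1 be integers such that p ≥ 2 or r ≥ 2, and let G = ⟨a₁,…,a_p, s₁,…,s_r | s₁²,…,s_r², a₁²a₂²⋯a_p²·s₁s₂⋯s_r⟩ be the fundamental group of the closed non-orientable 2-orbifold of genus p with r cone points, all of order 2. Then every generating n-tuple of G is either reducible, or n = p + r − 1 and the tuple is Nielsen equivalent to (a₁,…,a_p, s₁,…,s_{i−1}, s_{i+1},…,s_r) for some index 1 ≤ i ≤ r (the images of the standard generators with exactly one s_i omitted). -/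
/-- An elementary Nielsen transformation on an `n`-tuple of elements of a group:
(T1) invert an entry, (T2) swap two distinct entries, (T3) replace an entry by its
product with another (distinct) entry. -/
inductive NielsenStep {G : Type*} [Group G] {n : ℕ} : (Fin n → G) → (Fin n → G) → Prop
  | inv (T : Fin n → G) (i : Fin n) : NielsenStep T (Function.update T i (T i)⁻¹)
  | swap (T : Fin n → G) (i j : Fin n) (hij : i ≠ j) : NielsenStep T (T ∘ Equiv.swap i j)
  | mul (T : Fin n → G) (i j : Fin n) (hij : i ≠ j) :
      NielsenStep T (Function.update T i (T i * T j))

/-- Two `n`-tuples of elements of a group are Nielsen equivalent if a finite chain of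
elementary Nielsen transformations carries one to the other. -/
def NielsenEquiv {G : Type*} [Group G] {n : ℕ} (T T' : Fin n → G) : Prop :=
  Relation.ReflTransGen NielsenStep T T'

/-- A tuple is reducible if it is Nielsen equivalent to a tuple whose last entry is the
identity. -/
def Reducible {G : Type*} [Group G] {n : ℕ} (T : Fin n → G) : Prop :=
  ∃ (hn : 0 < n) (T' : Fin n → G), NielsenEquiv T T' ∧ T' ⟨n - 1, by omega⟩ = 1

/-- The relator `a₁²a₂²⋯a_p² · s₁s₂⋯s_r` in the free group on the generators `a₁,…,a_p`
(left summand) and `s₁,…,s_r` (right summand). -/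
def coneRelatorN (p r : ℕ) : FreeGroup (Fin p ⊕ Fin r) :=
  (List.ofFn fun j : Fin p =>
      (FreeGroup.of (Sum.inl j) : FreeGroup (Fin p ⊕ Fin r)) ^ 2).prod *
    (List.ofFn fun i : Fin r => FreeGroup.of (Sum.inr i)).prod

/-- The relations `s₁², …, s_r²` and `a₁²a₂²⋯a_p²·s₁s₂⋯s_r`. -/
def coneRelsN (p r : ℕ) : Set (FreeGroup (Fin p ⊕ Fin r)) :=
  {w | (∃ i : Fin r, w = FreeGroup.of (Sum.inr i) ^ 2) ∨ w = coneRelatorN p r}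



namespace Orb

/-- A labelled graph: finitely many edge names, with source, target, label, and a base vertex. -/
structure Gr (X : Type) where
  E : Finset ℕ
  s : ℕ → ℕ
  t : ℕ → ℕ
  l : ℕ → X
  o : ℕ

variable {X H K : Type} [Group H] [Group K]

/-- Origin of a dart (an edge with a direction). -/
def Gr.src (Z : Gr X) (d : ℕ × Bool) : ℕ := if d.2 = true then Z.s d.1 else Z.t d.1
/-- End of a dart. -/
def Gr.tgt (Z : Gr X) (d : ℕ × Bool) : ℕ := if d.2 = true then Z.t d.1 else Z.s d.1

@[simp] lemma Gr.src_true (Z : Gr X) (e : ℕ) : Z.src (e, true) = Z.s e := rfl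
@[simp] lemma Gr.src_false (Z : Gr X) (e : ℕ) : Z.src (e, false) = Z.t e := rfl
@[simp] lemma Gr.tgt_true (Z : Gr X) (e : ℕ) : Z.tgt (e, true) = Z.t e := rfl
@[simp] lemma Gr.tgt_false (Z : Gr X) (e : ℕ) : Z.tgt (e, false) = Z.s e := rfl

/-- Value of a dart under a labelling of the edges in a group. -/
def val (μ : ℕ → H) (d : ℕ × Bool) : H := if d.2 = true then μ d.1 else (μ d.1)⁻¹

@[simp] lemma val_true (μ : ℕ → H) (e : ℕ) : val μ (e, true) = μ e := rfl
@[simp] lemma val_false (μ : ℕ → H) (e : ℕ) : val μ (e, false) = (μ e)⁻¹ := rfl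

/-- `W Z μ a g b`: there is a walk in `Z` from `a` to `b` whose `μ`-value is `g`. -/
inductive W (Z : Gr X) (μ : ℕ → H) : ℕ → H → ℕ → Prop
  | nil (a : ℕ) : W Z μ a 1 a
  | cons (d : ℕ × Bool) (g : H) (c : ℕ) (hd : d.1 ∈ Z.E) (h : W Z μ (Z.tgt d) g c) :
      W Z μ (Z.src d) (val μ d * g) c

lemma W.append {Z : Gr X} {μ : ℕ → H} {a b c : ℕ} {g h : H} (h1 : W Z μ a g b)
    (h2 : W Z μ b h c) : W Z μ a (g * h) c := by
  induction h1 with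
  | nil a => simpa using h2
  | cons d g c hd _ ih => rw [mul_assoc]; exact W.cons d _ _ hd (ih h2)

lemma W.single {Z : Gr X} {μ : ℕ → H} (d : ℕ × Bool) (hd : d.1 ∈ Z.E) :
    W Z μ (Z.src d) (val μ d) (Z.tgt d) := by
  simpa using W.cons d 1 _ hd (W.nil (μ := μ) (Z.tgt d))

lemma W.edge {Z : Gr X} {μ : ℕ → H} (e : ℕ) (hd : e ∈ Z.E) :
    W Z μ (Z.s e) (μ e) (Z.t e) := W.single (e, true) hd

lemma W.edge' {Z : Gr X} {μ : ℕ → H} (e : ℕ) (hd : e ∈ Z.E) :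
    W Z μ (Z.t e) (μ e)⁻¹ (Z.s e) := W.single (e, false) hd

lemma W.symm {Z : Gr X} {μ : ℕ → H} {a b : ℕ} {g : H} (h1 : W Z μ a g b) :
    W Z μ b g⁻¹ a := by
  induction h1 with
  | nil a => simpa using W.nil a
  | cons d g c hd _ ih =>
    rw [mul_inv_rev]
    refine ih.append ?_
    obtain ⟨e, b⟩ := d
    cases b
    · simpa using W.edge (μ := μ) e hd
    · simpa using W.edge' (μ := μ) e hd

lemma W.congr {Z : Gr X} {μ : ℕ → H} {a b a' b' : ℕ} {g g' : H} (h : W Z μ a g b)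
    (ha : a = a') (hg : g = g') (hb : b = b') : W Z μ a' g' b' := by
  subst ha hg hb; exact h

/-- Transport of walks along a map of vertices, with a gauge. -/
lemma W.transport {Y : Gr X} {X' : Type} {Z : Gr X'} {μ : ℕ → H} {ν : ℕ → H} (q : ℕ → ℕ) (h : ℕ → H)
    (hE : ∀ e ∈ Y.E, W Z ν (q (Y.s e)) (h (Y.s e) * μ e * (h (Y.t e))⁻¹) (q (Y.t e)))
    {a c : ℕ} {g : H} (hw : W Y μ a g c) : W Z ν (q a) (h a * g * (h c)⁻¹) (q c) := by
  induction hw with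
  | nil a => simpa using W.nil (q a)
  | cons d g c hd _ ih =>
    obtain ⟨e, b⟩ := d
    cases b
    · have := (hE e hd).symm.append ih
      refine this.congr rfl ?_ rfl
      simp [mul_assoc]
    · have := (hE e hd).append ih
      refine this.congr rfl ?_ rfl
      simp [mul_assoc]

lemma W.transport1 {Y : Gr X} {X' : Type} {Z : Gr X'} {μ : ℕ → H} {ν : ℕ → H} (q : ℕ → ℕ)
    (hE : ∀ e ∈ Y.E, W Z ν (q (Y.s e)) (μ e) (q (Y.t e)))
    {a c : ℕ} {g : H} (hw : W Y μ a g c) : W Z ν (q a) g (q c) := by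
  have := W.transport (Y := Y) (Z := Z) (μ := μ) (ν := ν) q (fun _ => 1) (by simpa using hE) hw
  simpa using this

lemma W.transport0 {Y : Gr X} {Z : Gr X} {μ : ℕ → H} {ν : ℕ → H}
    (hE : ∀ e ∈ Y.E, W Z ν (Y.s e) (μ e) (Y.t e))
    {a c : ℕ} {g : H} (hw : W Y μ a g c) : W Z ν a g c :=
  W.transport1 id hE hw

lemma W.map {Z : Gr X} {μ : ℕ → H} (φ : H →* K) {a b : ℕ} {g : H} (h : W Z μ a g b) :
    W Z (fun e => φ (μ e)) a (φ g) b := by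
  induction h with
  | nil a => simpa using W.nil a
  | cons d g c hd _ ih =>
    have := W.cons (μ := fun e => φ (μ e)) d _ _ hd ih
    refine this.congr rfl ?_ rfl
    obtain ⟨e, b⟩ := d
    cases b <;> simp

lemma W.unmap {Z : Gr X} {μ : ℕ → H} (φ : H →* K) {a b : ℕ} {g : K}
    (h : W Z (fun e => φ (μ e)) a g b) : ∃ g', φ g' = g ∧ W Z μ a g' b := by
  induction h with
  | nil a => exact ⟨1, by simp, W.nil a⟩
  | cons d g c hd _ ih =>
    obtain ⟨g', h1, h2⟩ := ih
    refine ⟨val μ d * g', ?_, W.cons d _ _ hd h2⟩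
    obtain ⟨e, b⟩ := d
    cases b <;> simp [h1]

lemma W.path {Z : Gr X} {μ : ℕ → H} (D : ℕ → ℕ × Bool) (x : ℕ → ℕ) (n : ℕ)
    (h : ∀ j < n, (D j).1 ∈ Z.E ∧ Z.src (D j) = x j ∧ Z.tgt (D j) = x (j + 1)) :
    W Z μ (x 0) ((List.range n).map (fun j => val μ (D j))).prod (x n) := by
  induction n with
  | zero => simpa using W.nil (x 0)
  | succ n ih =>
    rw [List.prod_range_succ]
    have h1 := ih (fun j hj => h j (by omega))
    obtain ⟨ha, hb, hc⟩ := h n (by omega)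
    exact h1.append ((W.single (D n) ha).congr hb rfl hc)

section cyc
variable {L : ℕ} [NeZero L]

/-- Product around the cycle starting at `k`. -/
def cyc (f : ZMod L → H) (k : ZMod L) : H :=
  ((List.range L).map (fun j : ℕ => f (k + (j : ZMod L)))).prod

/-- Product around the cycle starting after `k` and stopping before `k`. -/
def rest (f : ZMod L → H) (k : ZMod L) : H :=
  ((List.range (L - 1)).map (fun j : ℕ => f (k + 1 + (j : ZMod L)))).prod

lemma cyc_eq (f : ZMod L → H) (k : ZMod L) : cyc f k = f k * rest f k := by
  obtain ⟨n, hn⟩ := Nat.exists_eq_succ_of_ne_zero (NeZero.ne L)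
  unfold cyc rest
  have : L - 1 = n := by omega
  rw [this]
  have h2 : List.range L = List.range (n+1) := by rw [hn]
  rw [h2, List.prod_range_succ']
  congr 1
  · simp
  · congr 2
    funext j
    push_cast
    congr 1
    ring

lemma cyc_eq' (f : ZMod L → H) (k : ZMod L) : cyc f (k + 1) = rest f k * f k := by
  obtain ⟨n, hn⟩ := Nat.exists_eq_succ_of_ne_zero (NeZero.ne L)
  unfold cyc rest
  have : L - 1 = n := by omega
  rw [this]
  have h2 : List.range L = List.range (n+1) := by rw [hn]
  rw [h2, List.prod_range_succ]
  congr 2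
  have : ((n + 1 : ℕ) : ZMod L) = 0 := by
    have : n + 1 = L := hn.symm
    rw [this]; exact ZMod.natCast_self L
  have h3 : (n : ZMod L) = -1 := by
    push_cast at this
    linear_combination this
  rw [h3]; ring

lemma cyc_succ {f : ZMod L → H} {k : ZMod L} (h : cyc f k = 1) : cyc f (k + 1) = 1 := by
  rw [cyc_eq] at h
  rw [cyc_eq', eq_inv_of_mul_eq_one_right h]; simp

lemma zmod_ind {p : ZMod L → Prop} {k : ZMod L} (h : p k) (hs : ∀ i, p i → p (i + 1))
    (j : ZMod L) : p j := by
  have : ∀ n : ℕ, p (k + n) := by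
    intro n
    induction n with
    | zero => simpa using h
    | succ n ih => have := hs _ ih; push_cast; rwa [← add_assoc]
  have h1 := this (j - k).val
  rw [ZMod.natCast_zmod_val] at h1
  simpa using h1

lemma cyc_all {f : ZMod L → H} {k : ZMod L} (h : cyc f k = 1) (j : ZMod L) : cyc f j = 1 :=
  zmod_ind (p := fun j => cyc f j = 1) h (fun _ => cyc_succ) j

lemma cyc_congr {f g : ZMod L → H} (h : ∀ i, f i = g i) (k : ZMod L) : cyc f k = cyc g k := by
  have : f = g := funext h
  rw [this]

lemma cast_ne {j : ℕ} (h0 : 0 < j) (h : j < L) : (j : ZMod L) ≠ 0 := by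
  intro h1
  rw [ZMod.natCast_eq_zero_iff] at h1
  exact absurd (Nat.le_of_dvd h0 h1) (by omega)

lemma rest_congr {f g : ZMod L → H} (k : ZMod L) (h : ∀ i, i ≠ k → f i = g i) :
    rest f k = rest g k := by
  unfold rest
  congr 1
  apply List.map_congr_left
  intro j hj
  rw [List.mem_range] at hj
  apply h
  intro h1
  have : ((j + 1 : ℕ) : ZMod L) = 0 := by push_cast; linear_combination h1
  exact cast_ne (by omega) (by omega) this

end cyc
end Orb

namespace Orb

/-- The algebraic data: a cyclic relator `R`, involutive letters `S`, the group `G`, and a lift `P`. -/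
structure Dat (X G P : Type) [Group G] [Group P] (L : ℕ) [NeZero L] where
  R : ZMod L → X
  S : X → Prop
  hol : X → G
  psi : X → P
  pr : P →* G
  hS : ∀ i j, S (R i) → R j = R i → j = i
  hA : ∀ i, ¬ S (R i) → ∃ j0, R j0 = R i ∧ R (j0 + 1) = R i ∧ ∀ j, R j = R i → j = j0 ∨ j = j0 + 1
  hex : ∃ i, S (R i)
  hall : ∀ x, ∃ i, R i = x
  h10 : (1 : ZMod L) ≠ 0
  hol_sq : ∀ x, S x → hol x * hol x = 1
  hN : ∀ w : FreeGroup X, FreeGroup.lift hol w = 1 →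
    w ∈ Subgroup.normalClosure ({w | ∃ x, S x ∧ w = FreeGroup.of x * FreeGroup.of x} ∪
      {cyc (fun i => FreeGroup.of (R i)) 0})
  hol_cyc : cyc (fun i => hol (R i)) 0 = 1
  pr_psi : ∀ x, pr (psi x) = hol x
  psi_cyc : cyc (fun i => psi (R i)) 0 = 1
  psi_gen : Subgroup.closure (Set.range psi) = ⊤

variable {X G P : Type} [Group G] [Group P] {L : ℕ} [NeZero L] (C : Dat X G P L)

/-- The dart `d` of `Z` reads the letter `x`. -/
def Reads (Z : Gr X) (d : ℕ × Bool) (x : X) : Prop :=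
  d.1 ∈ Z.E ∧ Z.l d.1 = x ∧ (d.2 = true ∨ C.S x)

def Face (Z : Gr X) (d : ZMod L → ℕ × Bool) : Prop :=
  (∀ i, Reads C Z (d i) (C.R i)) ∧ ∀ i, Z.tgt (d i) = Z.src (d (i + 1))

def GapFace (Z : Gr X) (d : ZMod L → ℕ × Bool) (k : ZMod L) : Prop :=
  (∀ i, Reads C Z (d i) (C.R i)) ∧ (∀ i, i ≠ k → Z.tgt (d i) = Z.src (d (i + 1))) ∧
    Z.tgt (d k) ≠ Z.src (d (k + 1))

def Folded (Z : Gr X) : Prop :=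
  ∀ e ∈ Z.E, ∀ e' ∈ Z.E, ∀ b b', Z.src (e, b) = Z.src (e', b') → Z.l e = Z.l e' →
    (b = b' ∨ C.S (Z.l e)) → e = e'

abbrev hl (Z : Gr X) : ℕ → G := fun e => C.hol (Z.l e)

def Reach (Z : Gr X) (v : ℕ) : Prop := ∃ g, W Z (hl C Z) Z.o g v
def Conn (Z : Gr X) : Prop := ∀ e ∈ Z.E, Reach C Z (Z.s e)
def Surj (Z : Gr X) : Prop := ∀ g : G, W Z (hl C Z) Z.o g Z.o

def Good (Z : Gr X) (Φ : Finset (ZMod L → ℕ × Bool)) : Prop :=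
  ∃ lam : ℕ → P, (∀ e ∈ Z.E, C.pr (lam e) = C.hol (Z.l e)) ∧
    (∀ d ∈ Φ, cyc (fun i => val lam (d i)) 0 = 1) ∧ ∀ g : P, W Z lam Z.o g Z.o

def Coll (Φ : Finset (ZMod L → ℕ × Bool)) : Prop :=
  ∀ z ⊆ Φ, z.Nonempty → ∃ d ∈ z, ∃ k, ∀ d' ∈ z, ∀ j, (d' j).1 = (d k).1 → d' = d ∧ j = k

structure State (Z : Gr X) (Φ : Finset (ZMod L → ℕ × Bool)) : Prop where
  folded : Folded C Z
  face : ∀ d ∈ Φ, Face C Z d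
  inj : ∀ d ∈ Φ, ∀ d' ∈ Φ, ∀ i, Z.src (d i) = Z.src (d' i) → d = d'
  conn : Conn C Z
  surj : Surj C Z

variable {C}

lemma Reach.step {Z : Gr X} {d : ℕ × Bool} (h : Reach C Z (Z.src d)) (hd : d.1 ∈ Z.E) :
    Reach C Z (Z.tgt d) := by
  obtain ⟨g, hg⟩ := h
  exact ⟨_, hg.append (W.single d hd)⟩

lemma Conn.src {Z : Gr X} (h : Conn C Z) (d : ℕ × Bool) (hd : d.1 ∈ Z.E) :
    Reach C Z (Z.src d) := by
  obtain ⟨e, b⟩ := d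
  cases b
  · exact Reach.step (d := (e, true)) (h e hd) hd
  · exact h e hd

lemma Folded.fwd {Z : Gr X} (hf : Folded C Z) {d d' : ℕ × Bool} {x : X} (h : Reads C Z d x)
    (h' : Reads C Z d' x) (hs : Z.src d = Z.src d') : d.1 = d'.1 ∧ Z.tgt d = Z.tgt d' := by
  obtain ⟨e, b⟩ := d
  obtain ⟨e', b'⟩ := d'
  obtain ⟨h1, h2, h3⟩ := h
  obtain ⟨h1', h2', h3'⟩ := h'
  simp only at h1 h2 h3 h1' h2' h3'
  have : e = e' := by
    refine hf e h1 e' h1' b b' hs (h2.trans h2'.symm) ?_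
    rw [h2]
    rcases h3 with h | h
    · rcases h3' with h' | h'
      · left; rw [h, h']
      · exact Or.inr h'
    · exact Or.inr h
  subst this
  refine ⟨rfl, ?_⟩
  cases b <;> cases b' <;> simp_all

lemma Folded.bwd {Z : Gr X} (hf : Folded C Z) {d d' : ℕ × Bool} {x : X} (h : Reads C Z d x)
    (h' : Reads C Z d' x) (hs : Z.tgt d = Z.tgt d') : d.1 = d'.1 ∧ Z.src d = Z.src d' := by
  obtain ⟨e, b⟩ := d
  obtain ⟨e', b'⟩ := d'
  obtain ⟨h1, h2, h3⟩ := h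
  obtain ⟨h1', h2', h3'⟩ := h'
  simp only at h1 h2 h3 h1' h2' h3'
  have : e = e' := by
    refine hf e h1 e' h1' (!b) (!b') ?_ (h2.trans h2'.symm) ?_
    · cases b <;> cases b' <;> simpa using hs
    rw [h2]
    rcases h3 with h | h
    · rcases h3' with h' | h'
      · left; rw [h, h']
      · exact Or.inr h'
    · exact Or.inr h
  subst this
  refine ⟨rfl, ?_⟩
  cases b <;> cases b' <;> simp_all

lemma Face.eq_src {Z : Gr X} (hf : Folded C Z) {d d' : ZMod L → ℕ × Bool} (h : Face C Z d)
    (h' : Face C Z d') {i : ZMod L} (hi : Z.src (d i) = Z.src (d' i)) (j : ZMod L) :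
    Z.src (d j) = Z.src (d' j) := by
  refine zmod_ind (p := fun j => Z.src (d j) = Z.src (d' j)) hi (fun i hi => ?_) j
  rw [← h.2, ← h'.2]
  exact (hf.fwd (h.1 i) (h'.1 i) hi).2

/-- A gap face shares no position vertex with a face. -/
lemma GapFace.disj {Z : Gr X} (hf : Folded C Z) {d d' : ZMod L → ℕ × Bool} {k : ZMod L}
    (h : GapFace C Z d k) (h' : Face C Z d') (i : ZMod L) : Z.src (d i) ≠ Z.src (d' i) := by
  intro hi
  -- forward from `i` to `k`
  have key : ∀ n : ℕ, n < L → Z.src (d (k + 1 + n)) = Z.src (d' (k + 1 + n)) → False := by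
    intro n hn hs
    have hk : Z.src (d k) = Z.src (d' k) := by
      have : ∀ m : ℕ, n + m < L → Z.src (d (k + 1 + (n + m : ℕ))) = Z.src (d' (k + 1 + (n + m : ℕ))) := by
        intro m
        induction m with
        | zero => intro _; simpa using hs
        | succ m ih =>
          intro hm
          have ih := ih (by omega)
          have e1 : k + 1 + ((n + (m + 1) : ℕ) : ZMod L) = k + 1 + (n + m : ℕ) + 1 := by
            push_cast; ring
          rw [e1, ← h'.2, ← h.2.1]
          · exact (hf.fwd (h.1 _) (h'.1 _) ih).2
          · intro hc
            have : ((n + m + 1 : ℕ) : ZMod L) = 0 := by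
              push_cast; push_cast at hc; linear_combination hc
            exact cast_ne (by omega) (by omega) this
      have := this (L - 1 - n) (by omega)
      have e : ((n + (L - 1 - n) : ℕ) : ZMod L) = -1 := by
        have : n + (L - 1 - n) + 1 = L := by omega
        have h2 : ((n + (L - 1 - n) + 1 : ℕ) : ZMod L) = 0 := by rw [this]; simp
        push_cast at h2 ⊢
        linear_combination h2
      rw [e] at this
      simpa using this
    have hk1 : Z.src (d (k + 1)) = Z.src (d' (k + 1)) := by
      induction n with
      | zero => simpa using hs
      | succ n ih =>
        refine ih (by omega) ?_
        have e1 : k + 1 + ((n + 1 : ℕ) : ZMod L) = k + 1 + n + 1 := by push_cast; ring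
        rw [e1, ← h'.2, ← h.2.1] at hs
        · exact (hf.bwd (h.1 _) (h'.1 _) hs).2
        · intro hc
          have : ((n + 1 : ℕ) : ZMod L) = 0 := by
            push_cast; linear_combination hc
          exact cast_ne (by omega) (by omega) this
    apply h.2.2
    rw [hk1, ← h'.2]
    exact (hf.fwd (h.1 _) (h'.1 _) hk).2
  refine key (i - (k + 1)).val (ZMod.val_lt _) ?_
  rw [ZMod.natCast_zmod_val]
  simpa using hi

/-- No three distinct crossings of one edge. -/
lemma three {Z : Gr X} {z : Finset (ZMod L → ℕ × Bool)}
    (hr : ∀ d ∈ z, ∀ i, Reads C Z (d i) (C.R i))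
    (hinj : ∀ d ∈ z, ∀ d' ∈ z, ∀ i, d i = d' i → d = d')
    {a b c : (ZMod L → ℕ × Bool) × ZMod L} (ha : a.1 ∈ z) (hb : b.1 ∈ z) (hc : c.1 ∈ z)
    (hab : (a.1 a.2).1 = (b.1 b.2).1) (hac : (a.1 a.2).1 = (c.1 c.2).1) :
    a = b ∨ a = c ∨ b = c := by
  have gen : ∀ a b : (ZMod L → ℕ × Bool) × ZMod L, a.1 ∈ z → b.1 ∈ z →
      (a.1 a.2).1 = (b.1 b.2).1 → a.2 = b.2 → (a.1 a.2).2 = (b.1 b.2).2 → a = b := by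
    rintro ⟨d, i⟩ ⟨d', j⟩ h1 h2 h3 h4 h5
    simp only at h1 h2 h3 h4 h5
    subst h4
    rw [hinj d h1 d' h2 i (Prod.ext h3 h5)]
  have ra := hr _ ha a.2
  have rb := hr _ hb b.2
  have rc := hr _ hc c.2
  have Rab : C.R b.2 = C.R a.2 := by rw [← rb.2.1, ← ra.2.1, hab]
  have Rac : C.R c.2 = C.R a.2 := by rw [← rc.2.1, ← ra.2.1, hac]
  by_cases hs : C.S (C.R a.2)
  · have e1 := C.hS _ _ hs Rab
    have e2 := C.hS _ _ hs Rac
    rcases h1 : (a.1 a.2).2 <;> rcases h2 : (b.1 b.2).2 <;> rcases h3 : (c.1 c.2).2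
    · exact Or.inl (gen a b ha hb hab e1.symm (by rw [h1, h2]))
    · exact Or.inl (gen a b ha hb hab e1.symm (by rw [h1, h2]))
    · exact Or.inr (Or.inl (gen a c ha hc hac e2.symm (by rw [h1, h3])))
    · exact Or.inr (Or.inr (gen b c hb hc (hab.symm.trans hac) (e1.trans e2.symm) (by rw [h2, h3])))
    · exact Or.inr (Or.inr (gen b c hb hc (hab.symm.trans hac) (e1.trans e2.symm) (by rw [h2, h3])))
    · exact Or.inr (Or.inl (gen a c ha hc hac e2.symm (by rw [h1, h3])))
    · exact Or.inl (gen a b ha hb hab e1.symm (by rw [h1, h2]))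
    · exact Or.inl (gen a b ha hb hab e1.symm (by rw [h1, h2]))
  · obtain ⟨j0, -, -, hj⟩ := C.hA _ hs
    have t1 := ra.2.2.resolve_right hs
    have t2 := rb.2.2.resolve_right (by rwa [Rab])
    have t3 := rc.2.2.resolve_right (by rwa [Rac])
    rcases hj _ rfl with h1 | h1 <;> rcases hj _ Rab with h2 | h2 <;> rcases hj _ Rac with h3 | h3
    · exact Or.inl (gen a b ha hb hab (h1.trans h2.symm) (by rw [t1, t2]))
    · exact Or.inl (gen a b ha hb hab (h1.trans h2.symm) (by rw [t1, t2]))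
    · exact Or.inr (Or.inl (gen a c ha hc hac (h1.trans h3.symm) (by rw [t1, t3])))
    · exact Or.inr (Or.inr (gen b c hb hc (hab.symm.trans hac) (h2.trans h3.symm) (by rw [t2, t3])))
    · exact Or.inr (Or.inr (gen b c hb hc (hab.symm.trans hac) (h2.trans h3.symm) (by rw [t2, t3])))
    · exact Or.inr (Or.inl (gen a c ha hc hac (h1.trans h3.symm) (by rw [t1, t3])))
    · exact Or.inl (gen a b ha hb hab (h1.trans h2.symm) (by rw [t1, t2]))
    · exact Or.inl (gen a b ha hb hab (h1.trans h2.symm) (by rw [t1, t2]))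

/-- Boundary count modulo two. -/
lemma parity {Z : Gr X} {z : Finset (ZMod L → ℕ × Bool)}
    (hr : ∀ d ∈ z, ∀ i, Reads C Z (d i) (C.R i))
    (hinj : ∀ d ∈ z, ∀ d' ∈ z, ∀ i, d i = d' i → d = d')
    (hp : ∀ d ∈ z, ∀ k, ∃ d' ∈ z, ∃ j, (d' j).1 = (d k).1 ∧ ¬ (d' = d ∧ j = k))
    {D : ZMod L → ℕ × Bool} {k : ZMod L} (hD : D ∈ z) (hg : GapFace C Z D k)
    (hface : ∀ d ∈ z, d ≠ D → Face C Z d) : False := by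
  classical
  set u := Z.tgt (D k) with hu
  let δ : ℕ → ZMod 2 := fun v => if v = u then 1 else 0
  have dd : ∀ v, δ v + δ v = 0 := fun v => by
    have : ∀ x : ZMod 2, x + x = 0 := by decide
    exact this _
  have hpart : ∀ c : (ZMod L → ℕ × Bool) × ZMod L, ∃ c' : (ZMod L → ℕ × Bool) × ZMod L,
      c ∈ z ×ˢ Finset.univ → c' ∈ z ×ˢ Finset.univ ∧ (c'.1 c'.2).1 = (c.1 c.2).1 ∧ c' ≠ c := by
    rintro ⟨d, i⟩
    by_cases h : d ∈ z
    · obtain ⟨d', h1, j, h2, h3⟩ := hp d h i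
      refine ⟨(d', j), fun _ => ⟨by simp [h1], h2, ?_⟩⟩
      intro h4
      exact h3 (by simpa using h4)
    · exact ⟨(d, i), fun h' => absurd (by simpa using h') h⟩
  choose g hgp using hpart
  have sum0 : ∑ c ∈ z ×ˢ (Finset.univ : Finset (ZMod L)),
      (δ (Z.src (c.1 c.2)) + δ (Z.tgt (c.1 c.2))) = 0 := by
    refine Finset.sum_involution (fun c _ => g c) ?_ ?_ ?_ ?_
    · intro c hc
      obtain ⟨h1, h2, h3⟩ := hgp c hc
      have : δ (Z.src ((g c).1 (g c).2)) + δ (Z.tgt ((g c).1 (g c).2)) =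
          δ (Z.src (c.1 c.2)) + δ (Z.tgt (c.1 c.2)) := by
        have aux : ∀ d : ℕ × Bool, δ (Z.src d) + δ (Z.tgt d) = δ (Z.s d.1) + δ (Z.t d.1) := by
          rintro ⟨e, b⟩
          cases b
          · simp [add_comm]
          · simp
        rw [aux, aux, h2]
      rw [this]
      have : ∀ x : ZMod 2, x + x = 0 := by decide
      exact this _
    · intro c hc _
      exact (hgp c hc).2.2
    · intro c hc
      exact (hgp c hc).1
    · intro c hc
      obtain ⟨h1, h2, h3⟩ := hgp c hc
      obtain ⟨h4, h5, h6⟩ := hgp (g c) h1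
      rcases three hr hinj (a := g (g c)) (b := g c) (c := c) (Finset.mem_product.1 h4).1
        (Finset.mem_product.1 h1).1 (Finset.mem_product.1 hc).1 h5 (h5.trans h2) with h | h | h
      · exact absurd h h6
      · exact h
      · exact absurd h h3
  have sum1 : ∑ c ∈ z ×ˢ (Finset.univ : Finset (ZMod L)),
      (δ (Z.src (c.1 c.2)) + δ (Z.tgt (c.1 c.2))) = 1 := by
    rw [Finset.sum_product]
    have inner : ∀ d : ZMod L → ℕ × Bool, ∑ i : ZMod L, (δ (Z.src (d i)) + δ (Z.tgt (d i))) =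
        ∑ i : ZMod L, (δ (Z.src (d (i + 1))) + δ (Z.tgt (d i))) := by
      intro d
      rw [Finset.sum_add_distrib, Finset.sum_add_distrib]
      congr 1
      exact (Equiv.sum_comp (Equiv.addRight (1 : ZMod L)) (fun i => δ (Z.src (d i)))).symm
    rw [Finset.sum_congr rfl (fun d _ => inner d)]
    rw [Finset.sum_eq_single_of_mem D hD]
    · rw [Finset.sum_eq_single_of_mem k (Finset.mem_univ _)]
      · have : Z.src (D (k + 1)) ≠ u := fun h => hg.2.2 (by rw [h])
        simp [δ, this, hu.symm]
      · intro i _ hi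
        rw [hg.2.1 i hi]; exact dd _
    · intro d hd hne
      apply Finset.sum_eq_zero
      intro i _
      rw [(hface d hd hne).2 i]; exact dd _
  rw [sum0] at sum1
  exact absurd sum1 (by decide)

end Orb

namespace Orb
variable {X G P : Type} [Group G] [Group P] {L : ℕ} [NeZero L] {C : Dat X G P L}

lemma prod_range_perm {A : Type} (τ : ℕ → Equiv.Perm A) (x : ℕ → A)
    (h : ∀ n, τ n (x (n + 1)) = x n) (n : ℕ) :
    ((List.range n).map τ).prod (x n) = x 0 := by
  induction n with
  | zero => simp
  | succ n ih => rw [List.prod_range_succ, Equiv.Perm.mul_apply, h, ih]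

/-- A closed subcomplex without free edges is impossible. -/
lemma noclosed {Z : Gr X} {z : Finset (ZMod L → ℕ × Bool)} (hz : State C Z z)
    (hp : ∀ d ∈ z, ∀ k, ∃ d' ∈ z, ∃ j, (d' j).1 = (d k).1 ∧ ¬ (d' = d ∧ j = k))
    (hne : z.Nonempty) : False := by
  classical
  have hf := hz.folded
  have rd : ∀ d ∈ z, ∀ i, Reads C Z (d i) (C.R i) := fun d hd => (hz.face d hd).1
  -- corners propagate
  have corner : ∀ u i, (∃ d ∈ z, Z.src (d i) = u) → ∃ d ∈ z, Z.src (d (i + 1)) = u := by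
    rintro u i ⟨d, hd, hu⟩
    by_cases hs : C.S (C.R i)
    · obtain ⟨d', hd', j, h1, h2⟩ := hp d hd i
      have hj : j = i := by
        apply C.hS _ _ hs
        rw [← (rd d hd i).2.1, ← (rd d' hd' j).2.1, h1]
      subst hj
      refine ⟨d', hd', ?_⟩
      rw [← (hz.face d' hd').2, ← hu]
      have h3 : (d' j).2 ≠ (d j).2 := by
        intro h3
        have : d' j = d j := Prod.ext h1 h3
        exact h2 ⟨hz.inj d' hd' d hd j (by rw [this]), rfl⟩
      revert h1 h3
      obtain ⟨e, b⟩ := d j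
      obtain ⟨e', b'⟩ := d' j
      rintro rfl h3
      cases b <;> cases b' <;> simp_all
    · obtain ⟨j0, ha, hb, hc⟩ := C.hA i hs
      have tr : ∀ d ∈ z, ∀ j, C.R j = C.R i → (d j).2 = true := by
        intro d hd j hj
        exact (rd d hd j).2.2.resolve_right (by rwa [hj])
      rcases hc i rfl with h | h
      · subst h
        obtain ⟨d', hd', j, h1, h2⟩ := hp d hd i
        have hRj : C.R j = C.R i := by
          rw [← (rd d hd i).2.1, ← (rd d' hd' j).2.1, h1]
        have e : d' j = d i := Prod.ext h1 (by rw [tr d' hd' j hRj, tr d hd i rfl])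
        rcases hc j hRj with h | h
        · subst h
          exact absurd ⟨hz.inj d' hd' d hd j (by rw [e]), rfl⟩ h2
        · subst h
          exact ⟨d', hd', by rw [e, hu]⟩
      · obtain ⟨d', hd', j, h1, h2⟩ := hp d hd j0
        have hRj : C.R j = C.R i := by
          rw [← ha, ← (rd d hd j0).2.1, ← (rd d' hd' j).2.1, h1]
        have e : d' j = d j0 := Prod.ext h1 (by rw [tr d' hd' j hRj, tr d hd j0 ha])
        rcases hc j hRj with h' | h'
        · subst h'
          exact absurd ⟨hz.inj d' hd' d hd j (by rw [e]), rfl⟩ h2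
        · subst h'
          refine ⟨d', hd', ?_⟩
          rw [h, ← (hz.face d' hd').2, e, (hz.face d hd).2, ← h, hu]
  have corners : ∀ u, (∃ i, ∃ d ∈ z, Z.src (d i) = u) → ∀ i, ∃ d ∈ z, Z.src (d i) = u := by
    rintro u ⟨i, h⟩ j
    exact zmod_ind (p := fun i => ∃ d ∈ z, Z.src (d i) = u) h (corner u) j
  let A := {u : ℕ // ∃ i, ∃ d ∈ z, Z.src (d i) = u}
  have memA : ∀ d ∈ z, ∀ i, ∃ i', ∃ d' ∈ z, Z.src (d' i') = Z.src (d i) :=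
    fun d hd i => ⟨i, d, hd, rfl⟩
  -- the permutations
  have perm : ∀ x : X, ∃ τ : Equiv.Perm A, ∀ i, C.R i = x → ∀ d (hd : d ∈ z),
      τ ⟨Z.src (d (i + 1)), memA d hd _⟩ = ⟨Z.src (d i), memA d hd _⟩ := by
    intro x
    obtain ⟨i, hi⟩ := C.hall x
    have hch : ∀ u : A, ∃ d ∈ z, Z.src (d (i + 1)) = u.1 := fun u => corners u.1 u.2 (i + 1)
    choose D hD hDs using hch
    let f : A → A := fun u => ⟨Z.src (D u i), memA _ (hD u) _⟩
    have hf' : ∀ j, C.R j = x → ∀ d (hd : d ∈ z),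
      f ⟨Z.src (d (j + 1)), memA d hd _⟩ = ⟨Z.src (d j), memA d hd _⟩ := by
      intro j hj d hd
      apply Subtype.ext
      simp only [f]
      set u : A := ⟨Z.src (d (j + 1)), memA d hd _⟩
      have h1 := hDs u
      have h2 : Z.tgt (D u i) = Z.tgt (d j) := by
        rw [(hz.face _ (hD u)).2, (hz.face _ hd).2, h1]
      exact (hf.bwd (hi ▸ rd _ (hD u) i) (hj ▸ rd _ hd j) h2).2
    have hinj : Function.Injective f := by
      intro u v huv
      have h1 : Z.src (D u i) = Z.src (D v i) := congrArg Subtype.val huv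
      have h2 := hz.inj _ (hD u) _ (hD v) i h1
      apply Subtype.ext
      rw [← hDs u, ← hDs v, h2]
    have hsurj : Function.Surjective f := by
      intro u
      obtain ⟨d, hd, h⟩ := corners u.1 u.2 i
      refine ⟨⟨Z.src (d (i + 1)), memA d hd _⟩, ?_⟩
      rw [hf' i hi d hd]
      exact Subtype.ext h
    exact ⟨Equiv.ofBijective f ⟨hinj, hsurj⟩, hf'⟩
  choose τ hτ using perm
  let φ : FreeGroup X →* Equiv.Perm A := FreeGroup.lift τ
  -- darts act as they should
  have hdart : ∀ (dd : ℕ × Bool) (x : X), Reads C Z dd x →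
      ((∃ i, ∃ d ∈ z, Z.src (d i) = Z.tgt dd) ∨ (∃ i, ∃ d ∈ z, Z.src (d i) = Z.src dd)) →
      ∃ (h1 : ∃ i, ∃ d ∈ z, Z.src (d i) = Z.tgt dd) (h2 : ∃ i, ∃ d ∈ z, Z.src (d i) = Z.src dd),
        τ x ⟨Z.tgt dd, h1⟩ = ⟨Z.src dd, h2⟩ := by
    intro dd x hr hor
    obtain ⟨i, hi⟩ := C.hall x
    have : ∃ d ∈ z, Z.src (d (i + 1)) = Z.tgt dd ∧ Z.src (d i) = Z.src dd := by
      rcases hor with h | h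
      · obtain ⟨d, hd, h⟩ := corners _ h (i + 1)
        refine ⟨d, hd, h, ?_⟩
        refine (hf.bwd (hi ▸ rd d hd i) hr ?_).2
        rw [(hz.face d hd).2, h]
      · obtain ⟨d, hd, h⟩ := corners _ h i
        refine ⟨d, hd, ?_, h⟩
        rw [← (hz.face d hd).2]
        exact (hf.fwd (hi ▸ rd d hd i) hr h).2
    obtain ⟨d, hd, h1, h2⟩ := this
    refine ⟨⟨_, d, hd, h1⟩, ⟨_, d, hd, h2⟩, ?_⟩
    have := hτ x i hi d hd
    simp only [h1, h2] at this
    exact this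
  have hwalk : ∀ a w c, W Z (fun e => FreeGroup.of (Z.l e)) a w c →
      ∀ hc : (∃ i, ∃ d ∈ z, Z.src (d i) = c), ∃ ha : (∃ i, ∃ d ∈ z, Z.src (d i) = a),
        φ w ⟨c, hc⟩ = ⟨a, ha⟩ := by
    intro a w c h
    induction h with
    | nil a => intro hc; exact ⟨hc, by simp⟩
    | cons d g c hd _ ih =>
      intro hc
      obtain ⟨ha, h1⟩ := ih hc
      obtain ⟨e, b⟩ := d
      cases b
      · obtain ⟨h3, h4, h5⟩ := hdart (e, true) (Z.l e) ⟨hd, rfl, Or.inl rfl⟩ (Or.inr ha)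
        refine ⟨h3, ?_⟩
        rw [map_mul, Equiv.Perm.mul_apply, h1]
        simp only [val_false, map_inv, φ, FreeGroup.lift_apply_of]
        rw [Equiv.Perm.inv_eq_iff_eq]
        exact h5.symm
      · obtain ⟨h3, h4, h5⟩ := hdart (e, true) (Z.l e) ⟨hd, rfl, Or.inl rfl⟩ (Or.inl ha)
        refine ⟨h4, ?_⟩
        rw [map_mul, Equiv.Perm.mul_apply, h1]
        simpa [φ] using h5
  have hker : ∀ w, FreeGroup.lift C.hol w = 1 → φ w = 1 := by
    intro w hw
    have h1 := C.hN w hw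
    have h2 : Subgroup.normalClosure ({w | ∃ x, C.S x ∧ w = FreeGroup.of x * FreeGroup.of x} ∪
      {cyc (fun i => FreeGroup.of (C.R i)) 0}) ≤ φ.ker := by
      apply Subgroup.normalClosure_le_normal
      rintro w (⟨x, hx, rfl⟩ | hw)
      · change φ _ = 1
        rw [map_mul]
        simp only [φ, FreeGroup.lift_apply_of]
        ext1 u
        rw [Equiv.Perm.mul_apply, Equiv.Perm.one_apply]
        obtain ⟨i, hi⟩ := C.hall x
        obtain ⟨d, hd, h⟩ := corners u.1 u.2 (i + 1)
        have hu : u = ⟨Z.src (d (i + 1)), memA d hd _⟩ := Subtype.ext h.symm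
        rw [hu, hτ x i hi d hd]
        have hr := rd d hd i
        rw [hi] at hr
        have hr' : Reads C Z ((d i).1, !(d i).2) x := ⟨hr.1, hr.2.1, Or.inr hx⟩
        have e1 : Z.tgt ((d i).1, !(d i).2) = Z.src (d i) := by
          obtain ⟨e, b⟩ := d i; cases b <;> simp
        have e2 : Z.src ((d i).1, !(d i).2) = Z.src (d (i + 1)) := by
          rw [← (hz.face d hd).2]; obtain ⟨e, b⟩ := d i; cases b <;> simp
        obtain ⟨q1, q2, q3⟩ := hdart _ x hr' (Or.inl (by rw [e1]; exact memA d hd _))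
        simp only [e1, e2] at q3
        exact q3
      · change φ _ = 1
        rw [Set.mem_singleton_iff] at hw
        rw [hw]
        ext1 u
        obtain ⟨d, hd, h⟩ := corners u.1 u.2 0
        have hu : u = ⟨Z.src (d 0), memA d hd _⟩ := Subtype.ext h.symm
        rw [Equiv.Perm.one_apply, hu]
        unfold cyc
        rw [map_list_prod, List.map_map]
        have := prod_range_perm (fun n : ℕ => τ (C.R (n : ZMod L)))
          (fun n : ℕ => (⟨Z.src (d (n : ZMod L)), memA d hd _⟩ : A)) (by
            intro n
            have := hτ _ (n : ZMod L) rfl d hd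
            simpa using this) L
        simp only [Nat.cast_zero, ZMod.natCast_self] at this
        simpa [φ, Function.comp_def] using this
    exact h2 h1
  -- base vertex
  obtain ⟨d0, hd0⟩ := hne
  have unl : ∀ a g c, W Z (hl C Z) a g c → ∃ w, FreeGroup.lift C.hol w = g ∧
      W Z (fun e => FreeGroup.of (Z.l e)) a w c := by
    intro a g c h
    apply W.unmap (FreeGroup.lift C.hol)
    simpa using h
  have hreach : ∀ d ∈ z, ∀ i, Z.src (d i) = Z.o := by
    intro d hd i
    obtain ⟨g, hg⟩ := hz.conn.src (d i) (rd d hd i).1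
    obtain ⟨w, hw, hw'⟩ := unl _ _ _ hg
    obtain ⟨w', hv, hv'⟩ := unl _ _ _ (hz.surj g)
    obtain ⟨ho, h1⟩ := hwalk _ _ _ hw' (memA d hd i)
    obtain ⟨ho', h2⟩ := hwalk _ _ _ hv' ho
    have h3 : φ (w⁻¹ * w') = 1 := hker _ (by rw [map_mul, map_inv, hw, hv]; simp)
    rw [map_mul, map_inv, inv_mul_eq_one] at h3
    rw [← h3] at h2
    have := (φ w).injective (h1.trans h2.symm)
    exact congrArg Subtype.val this
  obtain ⟨i, hi⟩ := C.hex
  obtain ⟨d', hd', j, h1, h2⟩ := hp d0 hd0 i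
  apply h2
  constructor
  · exact hz.inj _ hd' _ hd0 i (by rw [hreach _ hd', hreach _ hd0])
  · apply C.hS _ _ hi
    rw [← (rd _ hd0 i).2.1, ← (rd _ hd' j).2.1, h1]

lemma State.coll {Z : Gr X} {Ψ : Finset (ZMod L → ℕ × Bool)} (hz : State C Z Ψ)
    {D : ZMod L → ℕ × Bool} {k : ZMod L} (hg : GapFace C Z D k) : Coll (insert D Ψ) := by
  intro z hzs hne
  by_contra hcon
  have hp : ∀ d ∈ z, ∀ k, ∃ d' ∈ z, ∃ j, (d' j).1 = (d k).1 ∧ ¬ (d' = d ∧ j = k) := by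
    intro d hd k
    by_contra hc
    apply hcon
    refine ⟨d, hd, k, fun d' hd' j hj => ?_⟩
    by_contra h
    exact hc ⟨d', hd', j, hj, h⟩
  have hm : ∀ d ∈ z, d ≠ D → d ∈ Ψ := fun d hd h => (Finset.mem_insert.1 (hzs hd)).resolve_left h
  by_cases hD : D ∈ z
  · refine parity (C := C) (Z := Z) (z := z) ?_ ?_ hp hD hg (fun d hd h => hz.face d (hm d hd h))
    · intro d hd
      by_cases h : d = D
      · rw [h]; exact hg.1
      · exact (hz.face d (hm d hd h)).1
    · intro d hd d' hd' i hi
      by_cases h : d = D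
      · by_cases h' : d' = D
        · rw [h, h']
        · subst h
          exact absurd (by rw [hi]) (hg.disj hz.folded (hz.face d' (hm _ hd' h')) i)
      · by_cases h' : d' = D
        · subst h'
          exact absurd (by rw [hi]) (hg.disj hz.folded (hz.face d (hm _ hd h)) i)
        · exact hz.inj d (hm d hd h) d' (hm d' hd' h') i (by rw [hi])
  · have hs : ∀ d ∈ z, d ∈ Ψ := fun d hd => hm d hd (fun h => hD (h ▸ hd))
    exact noclosed (Z := Z) ⟨hz.folded, fun d hd => hz.face d (hs d hd),
      fun d hd d' hd' => hz.inj d (hs d hd) d' (hs d' hd'), hz.conn, hz.surj⟩ hp hne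

end Orb

namespace Orb
variable {X G P : Type} [Group G] [Group P] {L : ℕ} [NeZero L] {C : Dat X G P L}

variable (C) in
def Step (Z : Gr X) (u : ℕ) (x : X) (w : ℕ) : Prop := ∃ d, Reads C Z d x ∧ Z.src d = u ∧ Z.tgt d = w

lemma Step.rev {Z : Gr X} {u w : ℕ} {x : X} (hx : C.S x) (h : Step C Z u x w) : Step C Z w x u := by
  obtain ⟨⟨e, b⟩, h1, h2, h3⟩ := h
  refine ⟨(e, !b), ⟨h1.1, h1.2.1, Or.inr hx⟩, ?_, ?_⟩
  · rw [← h3]; cases b <;> simp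
  · rw [← h2]; cases b <;> simp

lemma Reads.step {Z : Gr X} {d : ℕ × Bool} {x : X} (h : Reads C Z d x) :
    Step C Z (Z.src d) x (Z.tgt d) := ⟨d, h, rfl, rfl⟩

lemma hol_inv {x : X} (hx : C.S x) : (C.hol x)⁻¹ = C.hol x :=
  inv_eq_of_mul_eq_one_left (C.hol_sq x hx)

lemma Reads.val_hl {Z : Gr X} {d : ℕ × Bool} {x : X} (h : Reads C Z d x) :
    val (hl C Z) d = C.hol x := by
  obtain ⟨e, b⟩ := d
  obtain ⟨h1, h2, h3⟩ := h
  simp only at h1 h2 h3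
  cases b
  · have := hol_inv (h3.resolve_left (by simp))
    simp [hl, h2, this]
  · simp [hl, h2]

lemma Reads.val_pr {Z : Gr X} {lam : ℕ → P} {d : ℕ × Bool} {x : X} (h : Reads C Z d x)
    (hlam : C.pr (lam d.1) = C.hol (Z.l d.1)) : C.pr (val lam d) = C.hol x := by
  rw [← h.val_hl]
  obtain ⟨e, b⟩ := d
  cases b
  · simp only at hlam; simp [hl, hlam]
  · simpa [hl] using hlam

lemma Step.w {Z : Gr X} {u w : ℕ} {x : X} (h : Step C Z u x w) : W Z (hl C Z) u (C.hol x) w := by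
  obtain ⟨d, h1, h2, h3⟩ := h
  exact (W.single d h1.1).congr h2 h1.val_hl h3

variable (C) in
def Morph (f : ℕ → ℕ) (Y Z : Gr X) : Prop := ∀ e ∈ Y.E, Step C Z (f (Y.s e)) (Y.l e) (f (Y.t e))

lemma Morph.step {f : ℕ → ℕ} {Y Z : Gr X} (hf : Morph C f Y Z) {u w : ℕ} {x : X}
    (h : Step C Y u x w) : Step C Z (f u) x (f w) := by
  obtain ⟨⟨e, b⟩, ⟨h1, h2, h3⟩, rfl, rfl⟩ := h
  simp only at h1 h2 h3
  have := hf e h1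
  rw [h2] at this
  cases b
  · exact this.rev (h3.resolve_left (by simp))
  · exact this

lemma Morph.w {f : ℕ → ℕ} {Y Z : Gr X} (hf : Morph C f Y Z) {a c : ℕ} {g : G}
    (h : W Y (hl C Y) a g c) : W Z (hl C Z) (f a) g (f c) :=
  W.transport1 f (fun e he => (hf e he).w) h

variable (C) in
structure RelF (f : ℕ → ℕ) (Y : Gr X) (Φ : Finset (ZMod L → ℕ × Bool)) (Z : Gr X)
    (Ψ : Finset (ZMod L → ℕ × Bool)) : Prop where
  o : f Y.o = Z.o
  morph : Morph C f Y Z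
  good : Good C Z Ψ → Good C Y Φ

variable {Y Z Z' : Gr X} {Φ Ψ Ψ' : Finset (ZMod L → ℕ × Bool)} {f f' : ℕ → ℕ}

lemma RelF.surj (h : RelF C f Y Φ Z Ψ) (hs : Surj C Y) : Surj C Z := fun g =>
  (h.morph.w (hs g)).congr h.o rfl h.o

lemma RelF.reach (h : RelF C f Y Φ Z Ψ) {v : ℕ} (hv : Reach C Y v) : Reach C Z (f v) := by
  obtain ⟨g, hg⟩ := hv
  exact ⟨g, (h.morph.w hg).congr h.o rfl rfl⟩

lemma RelF.comp (h : RelF C f Y Φ Z Ψ) (h' : RelF C f' Z Ψ Z' Ψ') :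
    RelF C (f' ∘ f) Y Φ Z' Ψ' where
  o := by simp [h.o, h'.o]
  morph := fun e he => h'.morph.step (h.morph e he)
  good := fun hg => h.good (h'.good hg)

lemma Morph.id (Z : Gr X) : Morph C _root_.id Z Z := fun e he =>
  ⟨(e, true), ⟨he, rfl, Or.inl rfl⟩, rfl, rfl⟩

lemma RelF.refl (Z : Gr X) (Ψ : Finset (ZMod L → ℕ × Bool)) : RelF C _root_.id Z Ψ Z Ψ :=
  ⟨rfl, Morph.id Z, _root_.id⟩

/-- Walk around a face except for position `k`. -/
lemma gap_walk {H : Type} [Group H] {Z : Gr X} {μ : ℕ → H} (d : ZMod L → ℕ × Bool) (k : ZMod L)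
    (he : ∀ i, i ≠ k → (d i).1 ∈ Z.E)
    (hc : ∀ i, i ≠ k → Z.tgt (d i) = Z.src (d (i + 1))) :
    W Z μ (Z.src (d (k + 1))) (rest (fun i => val μ (d i)) k) (Z.src (d k)) := by
  have hne : ∀ j : ℕ, j < L - 1 → k + 1 + (j : ZMod L) ≠ k := by
    intro j hj h1
    have : ((j + 1 : ℕ) : ZMod L) = 0 := by push_cast; linear_combination h1
    exact cast_ne (by omega) (by omega) this
  have := W.path (Z := Z) (μ := μ) (fun j => d (k + 1 + (j : ZMod L)))
    (fun j => Z.src (d (k + 1 + (j : ZMod L)))) (L - 1) (by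
      intro j hj
      refine ⟨he _ (hne j hj), rfl, ?_⟩
      rw [hc _ (hne j hj)]
      congr 2
      push_cast; ring)
  refine this.congr (by simp) rfl ?_
  have e : ((L - 1 : ℕ) : ZMod L) = -1 := by
    have h0 := NeZero.ne L
    have : L - 1 + 1 = L := by omega
    have h2 : ((L - 1 + 1 : ℕ) : ZMod L) = 0 := by rw [this]; simp
    push_cast at h2
    linear_combination h2
  rw [e]; simp

/-- Collapsing vertices joined by trivial walks. -/
lemma collapse_walk {H : Type} [Group H] {Z Z2 : Gr X} {μ μ2 : ℕ → H} (q : ℕ → ℕ)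
    (hq : ∀ w, W Z μ w 1 (q w))
    (hE : ∀ e ∈ Z2.E, e ∈ Z.E ∧ Z2.s e = q (Z.s e) ∧ Z2.t e = q (Z.t e) ∧ μ e = μ2 e)
    {a c : ℕ} {g : H} (h : W Z2 μ2 (q a) g (q c)) : W Z μ a g c := by
  have h1 : W Z μ (q a) g (q c) := by
    refine W.transport0 ?_ h
    intro e he
    obtain ⟨h1, h2, h3, h4⟩ := hE e he
    rw [h2, h3, ← h4]
    have := ((hq (Z.s e)).symm.append (W.edge (μ := μ) e h1)).append (hq (Z.t e))
    exact this.congr rfl (by simp) rfl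
  exact (((hq a).append h1).append (hq c).symm).congr rfl (by simp) rfl

def Gr.vmap (Z : Gr X) (q : ℕ → ℕ) : Gr X :=
  { Z with s := fun e => q (Z.s e), t := fun e => q (Z.t e), o := q Z.o }

@[simp] lemma Gr.vmap_src (Z : Gr X) (q : ℕ → ℕ) (d : ℕ × Bool) :
    (Z.vmap q).src d = q (Z.src d) := by
  obtain ⟨e, b⟩ := d; cases b <;> rfl
@[simp] lemma Gr.vmap_tgt (Z : Gr X) (q : ℕ → ℕ) (d : ℕ × Bool) :
    (Z.vmap q).tgt d = q (Z.tgt d) := by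
  obtain ⟨e, b⟩ := d; cases b <;> rfl

lemma closeGap (hz : State C Z Ψ) {D : ZMod L → ℕ × Bool} {k : ZMod L} (hg : GapFace C Z D k) :
    ∃ (Z' : Gr X) (q : ℕ → ℕ), (∀ d ∈ insert D Ψ, Face C Z' d) ∧ Coll (insert D Ψ) ∧ Conn C Z' ∧
      Surj C Z' ∧ RelF C q Z Ψ Z' (insert D Ψ) ∧ Z'.E.card = Z.E.card ∧
      (∀ d, Z'.src d = q (Z.src d)) ∧ (∀ d, Z'.tgt d = q (Z.tgt d)) := by
  let q : ℕ → ℕ := fun v => if v = Z.tgt (D k) then Z.src (D (k + 1)) else v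
  have hm : Morph C q Z (Z.vmap q) := fun e he =>
    ⟨(e, true), ⟨he, rfl, Or.inl rfl⟩, rfl, rfl⟩
  have hrel : RelF C q Z Ψ (Z.vmap q) (insert D Ψ) := by
    refine ⟨rfl, hm, ?_⟩
    rintro ⟨lam, h1, h2, h3⟩
    refine ⟨lam, h1, fun d hd => h2 d (Finset.mem_insert_of_mem hd), fun g => ?_⟩
    refine collapse_walk q ?_ ?_ (h3 g)
    · intro w
      by_cases hw : w = Z.tgt (D k)
      · have h4 := (gap_walk (μ := lam) D k (fun i _ => (hg.1 i).1) hg.2.1).append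
          (W.single (D k) (hg.1 k).1)
        have h5 : cyc (fun i => val lam (D i)) (k + 1) = 1 :=
          cyc_all (h2 D (Finset.mem_insert_self _ _)) _
        rw [cyc_eq'] at h5
        rw [h5] at h4
        have := h4.symm
        refine this.congr hw.symm (by simp) (by simp [q, hw])
      · simpa [q, hw] using W.nil w
    · intro e he
      exact ⟨he, rfl, rfl, rfl⟩
  refine ⟨Z.vmap q, q, ?_, hz.coll hg, ?_, hrel.surj hz.surj, hrel, rfl, by simp, by simp⟩
  · intro d hd
    rw [Finset.mem_insert] at hd
    rcases hd with rfl | hd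
    · refine ⟨fun i => hg.1 i, fun i => ?_⟩
      rw [Gr.vmap_src, Gr.vmap_tgt]
      by_cases hi : i = k
      · subst hi
        simp [q]
      · rw [hg.2.1 i hi]
    · refine ⟨fun i => (hz.face d hd).1 i, fun i => ?_⟩
      rw [Gr.vmap_src, Gr.vmap_tgt, (hz.face d hd).2]
  · intro e he
    exact hrel.reach (hz.conn e he)

/-- Remove an edge crossed once by a face with trivial product. -/
lemma erase_walk {H : Type} [Group H] {Z : Gr X} {μ : ℕ → H} (d : ZMod L → ℕ × Bool) (k : ZMod L)
    (he : ∀ i, (d i).1 ∈ Z.E) (hc : ∀ i, Z.tgt (d i) = Z.src (d (i + 1)))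
    (hone : ∀ i, i ≠ k → (d i).1 ≠ (d k).1) (h1 : cyc (fun i => val μ (d i)) 0 = 1)
    {Y : Gr X} (hY : ∀ e ∈ Z.E, e ≠ (d k).1 → e ∈ Y.E ∧ Y.s e = Z.s e ∧ Y.t e = Z.t e)
    {a c : ℕ} {g : H} (h : W Z μ a g c) : W Y μ a g c := by
  have hsrc : ∀ i, i ≠ k → Y.src (d i) = Z.src (d i) ∧ Y.tgt (d i) = Z.tgt (d i) := by
    intro i hi
    have := hY _ (he i) (hone i hi)
    revert this
    obtain ⟨e, b⟩ := d i
    rintro ⟨_, h2, h3⟩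
    cases b <;> simp_all
  have hw1 : W Y μ (Z.src (d (k + 1))) (rest (fun i => val μ (d i)) k) (Z.src (d k)) := by
    have := gap_walk (Z := { Z with E := Z.E.erase (d k).1 }) (μ := μ) d k
      (fun i hi => by simp [hone i hi, he i]) (fun i _ => hc i)
    refine W.transport0 ?_ this
    intro e hee
    simp only [Finset.mem_erase] at hee
    obtain ⟨h2, h3, h4⟩ := hY e hee.2 hee.1
    exact (W.edge e h2).congr h3 rfl h4
  have h2 : cyc (fun i => val μ (d i)) k = 1 := cyc_all h1 k
  rw [cyc_eq] at h2
  have h3 : (rest (fun i => val μ (d i)) k)⁻¹ = val μ (d k) := by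
    rw [← eq_inv_of_mul_eq_one_left h2]
  have hw2 := hw1.symm
  rw [h3, ← hc k] at hw2
  refine W.transport0 ?_ h
  intro e hee
  by_cases hek : e = (d k).1
  · rw [hek]
    revert hw2
    obtain ⟨e', b⟩ := d k
    cases b
    · intro hw2; simpa using hw2.symm
    · exact fun h => h
  · obtain ⟨h2, h3, h4⟩ := hY e hee hek
    exact (W.edge e h2).congr h3 rfl h4

lemma face_hol {d : ZMod L → ℕ × Bool} (h : ∀ i, Reads C Z (d i) (C.R i)) :
    cyc (fun i => val (hl C Z) (d i)) 0 = 1 := by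
  rw [cyc_congr (fun i => (h i).val_hl), C.hol_cyc]

end Orb

namespace Orb
variable {X G P : Type} [Group G] [Group P] {L : ℕ} [NeZero L] {C : Dat X G P L}
variable {Y Z Z' : Gr X} {Φ Ψ Ψ' : Finset (ZMod L → ℕ × Bool)} {f f' : ℕ → ℕ}

/-- Deleting a free edge together with its face. -/
lemma collapseFace (hf : ∀ d ∈ Φ, Face C Y d) {d : ZMod L → ℕ × Bool} {k : ZMod L} (hd : d ∈ Φ)
    (honce : ∀ d' ∈ Φ, ∀ j, (d' j).1 = (d k).1 → d' = d ∧ j = k)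
    (hg : Good C { Y with E := Y.E.erase (d k).1 } (Φ.erase d)) : Good C Y Φ := by
  obtain ⟨lam, h1, h2, h3⟩ := hg
  have hdf := hf d hd
  have hne : ∀ i, i ≠ k → (d i).1 ≠ (d k).1 := fun i hi h => hi (honce d hd i h).2
  set ρ := rest (fun i => val lam (d i)) k with hρ
  let lam' : ℕ → P := Function.update lam (d k).1 (if (d k).2 = true then ρ⁻¹ else ρ)
  have hv : ∀ dd : ℕ × Bool, dd.1 ≠ (d k).1 → val lam' dd = val lam dd := by
    rintro ⟨e, b⟩ h
    simp only at h
    cases b <;> simp [lam', h]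
  have hvk : val lam' (d k) = ρ⁻¹ := by
    simp only [val, lam', Function.update_self]
    split_ifs <;> simp
  have hprest : C.pr ρ = (C.hol (C.R k))⁻¹ := by
    have h4 : C.pr ρ = rest (fun i => C.hol (C.R i)) k := by
      rw [hρ]
      unfold rest
      rw [map_list_prod, List.map_map]
      have := rest_congr (f := fun i => C.pr (val lam (d i))) (g := fun i => C.hol (C.R i)) k (by
        intro i hi
        exact (hdf.1 i).val_pr (h1 _ (by simp [hne i hi, (hdf.1 i).1])))
      unfold rest at this
      simpa [Function.comp_def] using this
    have h5 : cyc (fun i => C.hol (C.R i)) k = 1 := cyc_all C.hol_cyc k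
    rw [cyc_eq] at h5
    rw [h4, eq_inv_of_mul_eq_one_right h5]
  refine ⟨lam', ?_, ?_, ?_⟩
  · intro e he
    by_cases hek : e = (d k).1
    · subst hek
      have hr := hdf.1 k
      simp only [lam', Function.update_self]
      rw [hr.2.1]
      rcases hb : (d k).2
      · have := hr.2.2.resolve_left (by simp [hb])
        simp [hprest, hol_inv this]
      · simp [hprest]
    · simp only [lam', Function.update_of_ne hek]
      exact h1 e (by simp [hek, he])
  · intro d' hd'
    by_cases h : d' = d
    · subst h
      apply cyc_all (k := k)
      rw [cyc_eq, rest_congr (g := fun i => val lam (d' i)) k (fun i hi => hv _ (hne i hi)), hvk, hρ]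
      simp
    · rw [cyc_congr (g := fun i => val lam (d' i))]
      · exact h2 d' (by simp [h, hd'])
      · intro i
        exact hv _ (fun h' => h (honce d' hd' i h').1)
  · intro g
    refine W.transport0 ?_ (h3 g)
    intro e he
    simp only [Finset.mem_erase] at he
    have := W.edge (Z := Y) (μ := lam') e he.2
    simpa [lam', he.1] using this

/-- One fold. -/
lemma foldOne (hconn : Conn C Y) (hs : Surj C Y) (hnf : ¬ Folded C Y) :
    ∃ (Z : Gr X) (q : ℕ → ℕ), RelF C q Y ∅ Z ∅ ∧ Conn C Z ∧ Surj C Z ∧ Z.E.card < Y.E.card := by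
  unfold Folded at hnf
  push Not at hnf
  obtain ⟨e, he, e', he', b, b', hsrc, hlab, hbb, hne⟩ := hnf
  let q : ℕ → ℕ := fun w => if w = Y.tgt (e', b') then Y.tgt (e, b) else w
  let Z : Gr X := { Y.vmap q with E := Y.E.erase e' }
  have hqv : q (Y.tgt (e, b)) = Y.tgt (e, b) := by simp [q]
  have hqv' : q (Y.tgt (e', b')) = Y.tgt (e, b) := by simp [q]
  have heZ : e ∈ Z.E := by simp [Z, hne, he]
  have hm : Morph C q Y Z := by
    intro x hx
    by_cases hxe : x = e'
    · subst hxe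
      have key : Step C Z (q (Y.src (x, b'))) (Y.l x) (q (Y.tgt (x, b'))) ∨
          (¬ C.S (Y.l x)) := by
        by_cases hS : C.S (Y.l x)
        · left
          refine ⟨(e, b), ⟨heZ, hlab, Or.inr hS⟩, ?_, ?_⟩
          · have : Z.src (e, b) = q (Y.src (e, b)) := Y.vmap_src q _
            rw [this, hsrc]
          · have : Z.tgt (e, b) = q (Y.tgt (e, b)) := Y.vmap_tgt q _
            rw [this, hqv, hqv']
        · exact Or.inr hS
      by_cases hS : C.S (Y.l x)
      · have := key.resolve_right (by simpa using hS)
        cases b'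
        · exact this.rev hS
        · exact this
      · have hb : b = b' := hbb.resolve_right (by rwa [hlab])
        subst hb
        refine ⟨(e, true), ⟨heZ, hlab, Or.inl rfl⟩, ?_, ?_⟩
        · change q (Y.s e) = q (Y.s x)
          cases b
          · exact hqv.trans hqv'.symm
          · exact congrArg q hsrc
        · change q (Y.t e) = q (Y.t x)
          cases b
          · exact congrArg q hsrc
          · exact hqv.trans hqv'.symm
    · exact ⟨(x, true), ⟨by simp [Z, hxe, hx], rfl, Or.inl rfl⟩, rfl, rfl⟩
  have hrel : RelF C q Y ∅ Z ∅ := by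
    refine ⟨rfl, hm, ?_⟩
    rintro ⟨lam, h1, -, h3⟩
    let lam' : ℕ → P := Function.update lam e'
      (if b' = true then val lam (e, b) else (val lam (e, b))⁻¹)
    have hv' : val lam' (e', b') = val lam (e, b) := by
      simp only [val, lam', Function.update_self]
      split_ifs <;> simp
    have hv : val lam' (e, b) = val lam (e, b) := by
      simp only [val, lam', Function.update_of_ne hne]
    refine ⟨lam', ?_, by simp, ?_⟩
    · intro x hx
      by_cases hxe : x = e'
      · subst hxe
        have h5 := h1 e heZ
        have h6 : Z.l e = Y.l x := hlab
        rw [h6] at h5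
        rcases hbb with hbb | hS
        · subst hbb
          cases b <;> simp [lam', h5]
        · have := hol_inv hS
          rw [hlab] at this
          cases b <;> cases b' <;> simp [lam', h5, this]
      · have h5 := h1 x (by simp [Z, hxe, hx])
        have h6 : Z.l x = Y.l x := rfl
        rw [h6] at h5
        simpa [lam', hxe] using h5
    · intro g
      refine collapse_walk q ?_ ?_ (h3 g)
      · intro w
        by_cases hw : w = Y.tgt (e', b')
        · have h4 := (W.single (Z := Y) (μ := lam') (e', b') he').symm.append
            ((W.single (Z := Y) (μ := lam') (e, b) he).congr hsrc rfl rfl)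
          refine h4.congr hw.symm ?_ (by simp [q, hw])
          rw [hv, hv']; simp
        · simpa [q, hw] using W.nil w
      · intro x hx
        have hx' : x ≠ e' ∧ x ∈ Y.E := by simpa [Z] using hx
        refine ⟨hx'.2, rfl, rfl, by simp [lam', hx'.1]⟩
  refine ⟨Z, q, hrel, ?_, hrel.surj hs, ?_⟩
  · intro x hx
    have hx' : x ≠ e' ∧ x ∈ Y.E := by simpa [Z] using hx
    exact hrel.reach (hconn x hx'.2)
  · exact Finset.card_erase_lt_of_mem he'

/-- Adding a new edge with a face. -/
lemma addFace (hz : State C Z Ψ) {D : ZMod L → ℕ × Bool} {k : ZMod L} {n : ℕ} (hn : n ∉ Z.E)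
    (hD : ∀ i, i ≠ k → Reads C Z (D i) (C.R i))
    (hDk : D k = (n, true)) (hc : ∀ i, i ≠ k → i + 1 ≠ k → Z.tgt (D i) = Z.src (D (i + 1)))
    {u v : ℕ} (hu : Reach C Z u) (hu' : ∀ i, i + 1 = k → Z.tgt (D i) = u)
    (hv' : Z.src (D (k + 1)) = v)
    (h1 : ∀ d, Reads C Z d (C.R k) → Z.src d ≠ u) (h2 : ∀ d, Reads C Z d (C.R k) → Z.tgt d ≠ v) :
    ∃ Z', State C Z' (insert D Ψ) ∧ RelF C id Z Ψ Z' (insert D Ψ) ∧ Z'.E.card = Z.E.card + 1 ∧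
      Step C Z' u (C.R k) v := by
  classical
  have hk1 : k + 1 ≠ k := by simpa using C.h10
  let Z' : Gr X := ⟨insert n Z.E, Function.update Z.s n u, Function.update Z.t n v,
    Function.update Z.l n (C.R k), Z.o⟩
  have hsn : Z'.s n = u := by simp [Z']
  have htn : Z'.t n = v := by simp [Z']
  have hln : Z'.l n = C.R k := by simp [Z']
  have old : ∀ e ∈ Z.E, e ≠ n := fun e he h => hn (h ▸ he)
  have hs : ∀ e ∈ Z.E, Z'.s e = Z.s e := fun e he => by simp [Z', old e he]
  have ht : ∀ e ∈ Z.E, Z'.t e = Z.t e := fun e he => by simp [Z', old e he]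
  have hl' : ∀ e ∈ Z.E, Z'.l e = Z.l e := fun e he => by simp [Z', old e he]
  have hsrc : ∀ d : ℕ × Bool, d.1 ∈ Z.E → Z'.src d = Z.src d := by
    rintro ⟨e, b⟩ h
    cases b <;> simp [hs e h, ht e h]
  have htgt : ∀ d : ℕ × Bool, d.1 ∈ Z.E → Z'.tgt d = Z.tgt d := by
    rintro ⟨e, b⟩ h
    cases b <;> simp [hs e h, ht e h]
  have hrd : ∀ d x, Reads C Z d x → Reads C Z' d x := by
    rintro d x ⟨h3, h4, h5⟩
    exact ⟨Finset.mem_insert_of_mem h3, by rw [hl' _ h3, h4], h5⟩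
  have hnE : n ∈ Z'.E := Finset.mem_insert_self _ _
  have hrk : Reads C Z' (D k) (C.R k) := by rw [hDk]; exact ⟨hnE, hln, Or.inl rfl⟩
  have hDr : ∀ i, Reads C Z' (D i) (C.R i) := by
    intro i
    by_cases hi : i = k
    · subst hi; exact hrk
    · exact hrd _ _ (hD i hi)
  have hface : Face C Z' D := by
    refine ⟨hDr, fun i => ?_⟩
    by_cases hi : i = k
    · subst hi
      rw [hsrc _ (hD _ hk1).1, hv', hDk]
      exact htn
    · rw [htgt _ (hD i hi).1]
      by_cases hi' : i + 1 = k
      · rw [hi', hDk, hu' i hi']; exact hsn.symm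
      · rw [hc i hi hi', hsrc _ (hD _ hi').1]
  have hnew : ∀ (b : Bool) (e' : ℕ) (b' : Bool), e' ∈ Z.E → Z'.src (n, b) = Z.src (e', b') →
      C.R k = Z.l e' → (b = b' ∨ C.S (C.R k)) → False := by
    intro b e' b' he' hs' hl'' hor
    cases b
    · refine h2 (e', !b') ⟨he', hl''.symm, ?_⟩ ?_
      · rcases hor with h | h
        · left; simp [← h]
        · exact Or.inr h
      · have : Z'.src (n, false) = v := htn
        rw [← this, hs']
        cases b' <;> simp
    · refine h1 (e', b') ⟨he', hl''.symm, ?_⟩ ?_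
      · rcases hor with h | h
        · left; simp [← h]
        · exact Or.inr h
      · have : Z'.src (n, true) = u := hsn
        rw [← this, hs']
  have hfold : Folded C Z' := by
    intro e hE e' hE' b b' hss hll hor
    have he := Finset.mem_insert.1 hE
    have he' := Finset.mem_insert.1 hE'
    clear hE hE'
    rcases he with rfl | he
    · rcases he' with rfl | he'
      · rfl
      · exfalso
        rw [hsrc (e', b') he'] at hss
        rw [hln, hl' e' he'] at hll
        rw [hln] at hor
        exact hnew b e' b' he' hss hll hor
    · rcases he' with rfl | he'
      · exfalso
        rw [hsrc (e, b) he] at hss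
        rw [hln, hl' e he] at hll
        rw [hl' e he, hll] at hor
        exact hnew b' e b he hss.symm hll.symm (hor.imp Eq.symm id)
      · rw [hsrc (e, b) he, hsrc (e', b') he'] at hss
        rw [hl' e he, hl' e' he'] at hll
        rw [hl' e he] at hor
        exact hz.folded e he e' he' b b' hss hll hor
  have hfaceo : ∀ d ∈ Ψ, Face C Z' d := by
    intro d hd
    obtain ⟨ha, hb⟩ := hz.face d hd
    refine ⟨fun i => hrd _ _ (ha i), fun i => ?_⟩
    rw [hsrc _ (ha _).1, htgt _ (ha _).1, hb]
  have hmorph : Morph C id Z Z' := by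
    intro e he
    refine ⟨(e, true), hrd _ _ ⟨he, rfl, Or.inl rfl⟩, hs e he, ht e he⟩
  have hrel : RelF C id Z Ψ Z' (insert D Ψ) := by
    refine ⟨rfl, hmorph, ?_⟩
    rintro ⟨lam, ha, hb, hc'⟩
    refine ⟨lam, ?_, fun d hd => hb d (Finset.mem_insert_of_mem hd), fun g => ?_⟩
    · intro e he
      rw [ha e (Finset.mem_insert_of_mem he), hl' e he]
    · refine erase_walk D k (fun i => (hDr i).1) hface.2 ?_ (hb D (Finset.mem_insert_self _ _)) ?_
        (hc' g)
      · intro i hi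
        rw [hDk]
        exact old _ (hD i hi).1
      · intro e he hne
        rw [hDk] at hne
        have he : e ∈ Z.E := (Finset.mem_insert.1 he).resolve_left hne
        exact ⟨he, (hs e he).symm, (ht e he).symm⟩
  have hcross : ∀ d ∈ Ψ, ∀ i, Z'.src (D i) ≠ Z'.src (d i) := by
    intro d hd i hi
    have := hface.eq_src hfold (hfaceo d hd) hi k
    have hr := (hz.face d hd).1 k
    apply h1 _ hr
    rw [← hsrc _ hr.1, ← this, hDk]
    exact hsn
  refine ⟨Z', ⟨hfold, ?_, ?_, ?_, hrel.surj hz.surj⟩, hrel, Finset.card_insert_of_notMem hn,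
    ⟨(n, true), hDk ▸ hrk, hsn, htn⟩⟩
  · intro d hd
    rcases Finset.mem_insert.1 hd with rfl | hd
    · exact hface
    · exact hfaceo d hd
  · intro d hd0 d' hd0' i hi
    rcases Finset.mem_insert.1 hd0 with rfl | hd
    · rcases Finset.mem_insert.1 hd0' with rfl | hd'
      · rfl
      · exact absurd hi (hcross _ hd' i)
    · rcases Finset.mem_insert.1 hd0' with rfl | hd'
      · exact absurd hi.symm (hcross _ hd i)
      · rw [hsrc _ ((hz.face d hd).1 i).1, hsrc _ ((hz.face d' hd').1 i).1] at hi
        exact hz.inj d hd d' hd' i hi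
  · intro e he
    rcases Finset.mem_insert.1 he with rfl | he
    · rw [hsn]; exact hrel.reach hu
    · rw [hs e he]; exact hrel.reach (hz.conn e he)

end Orb

namespace Orb
variable {X G P : Type} [Group G] [Group P] {L : ℕ} [NeZero L] {C : Dat X G P L}

lemma RelF.congr {Y Z : Gr X} {Φ Ψ : Finset (ZMod L → ℕ × Bool)} {f f' : ℕ → ℕ}
    (h : RelF C f Y Φ Z Ψ) (hf : f = f') : RelF C f' Y Φ Z Ψ := hf ▸ h

lemma Face.of_step {Y Z : Gr X} {d : ℕ × Bool} {x : X} {f : ℕ → ℕ} (h : Reads C Y d x)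
    (hs : Step C Z (f (Y.src d)) x (f (Y.tgt d))) :
    Step C Z (f (Y.s d.1)) (Y.l d.1) (f (Y.t d.1)) := by
  obtain ⟨e, b⟩ := d
  obtain ⟨h1, h2, h3⟩ := h
  simp only at h1 h2 h3
  simp only [h2]
  cases b
  · exact hs.rev (h3.resolve_left (by simp))
  · exact hs

theorem foldAll (m : ℕ) : ∀ (Y : Gr X) (Φ : Finset (ZMod L → ℕ × Bool)), Y.E.card = m →
    (∀ d ∈ Φ, Face C Y d) → Coll Φ → Conn C Y → Surj C Y →
    ∃ (Z : Gr X) (Ψ : Finset (ZMod L → ℕ × Bool)) (f : ℕ → ℕ), State C Z Ψ ∧ RelF C f Y Φ Z Ψ ∧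
      Z.E.card ≤ Y.E.card := by
  induction m using Nat.strong_induction_on with
  | _ m IH =>
  intro Y Φ hm hface hcoll hconn hsurj
  rcases Φ.eq_empty_or_nonempty with rfl | hne
  · by_cases hf : Folded C Y
    · exact ⟨Y, ∅, id, ⟨hf, by simp, by simp, hconn, hsurj⟩, RelF.refl Y ∅, le_rfl⟩
    · obtain ⟨Z1, q, h1, h2, h3, h4⟩ := foldOne hconn hsurj hf
      obtain ⟨Z, Ψ, f, h5, h6, h7⟩ := IH _ (hm ▸ h4) Z1 ∅ rfl (by simp) hcoll h2 h3
      exact ⟨Z, Ψ, f ∘ q, h5, h1.comp h6, by omega⟩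
  obtain ⟨d, hd, k, honce⟩ := hcoll Φ subset_rfl hne
  have hdf := hface d hd
  set e := (d k).1 with he
  have heE : e ∈ Y.E := (hdf.1 k).1
  have hk1 : k + 1 ≠ k := by simpa using C.h10
  have hne' : ∀ i, i ≠ k → (d i).1 ≠ e := fun i hi h => hi (honce d hd i h).2
  let Y1 : Gr X := { Y with E := Y.E.erase e }
  have hcard : Y1.E.card + 1 = Y.E.card := Finset.card_erase_add_one heE
  have hwalk : ∀ a g c, W Y (hl C Y) a g c → W Y1 (hl C Y) a g c := by
    intro a g c h
    refine erase_walk d k (fun i => (hdf.1 i).1) hdf.2 hne' (face_hol hdf.1) ?_ h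
    intro e' h1 h2
    exact ⟨Finset.mem_erase.2 ⟨h2, h1⟩, rfl, rfl⟩
  have hface1 : ∀ d' ∈ Φ.erase d, Face C Y1 d' := by
    intro d' hd'
    rw [Finset.mem_erase] at hd'
    obtain ⟨h1, h2⟩ := hface d' hd'.2
    refine ⟨fun i => ⟨Finset.mem_erase.2 ⟨fun h => hd'.1 (honce d' hd'.2 i h).1, (h1 i).1⟩,
      (h1 i).2⟩, h2⟩
  have hcoll1 : Coll (Φ.erase d) := fun z hz => hcoll z (hz.trans (Finset.erase_subset _ _))
  have hreach1 : ∀ v, Reach C Y v → Reach C Y1 v := fun v ⟨g, hg⟩ => ⟨g, hwalk _ _ _ hg⟩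
  obtain ⟨Z1, Ψ1, f1, hst, hrel, hc1⟩ := IH (m - 1) (by omega) Y1 (Φ.erase d) (by omega) hface1 hcoll1
    (fun x hx => hreach1 _ (hconn x (Finset.mem_of_mem_erase hx)))
    (fun g => hwalk _ _ _ (hsurj g))
  have hgoodY : Good C Z1 Ψ1 → Good C Y Φ := fun h => collapseFace hface hd honce (hrel.good h)
  -- completing a morphism on the deleted edge
  have hcomplete : ∀ (Z : Gr X) (Ψ : Finset (ZMod L → ℕ × Bool)) (f : ℕ → ℕ),
      RelF C f Z1 Ψ1 Z Ψ → Step C Z (f (f1 (Y.src (d k)))) (C.R k) (f (f1 (Y.tgt (d k)))) →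
      RelF C (f ∘ f1) Y Φ Z Ψ := by
    intro Z Ψ f hr hs
    have h1 := hrel.comp hr
    refine ⟨h1.o, ?_, fun h => hgoodY (hr.good h)⟩
    intro x hx
    by_cases hxe : x = e
    · rw [hxe]
      exact Face.of_step (f := f ∘ f1) (hdf.1 k) hs
    · exact h1.morph x (Finset.mem_erase.2 ⟨hxe, hx⟩)
  have hdarts : ∀ i, ∃ dd, i ≠ k → Reads C Z1 dd (C.R i) ∧ Z1.src dd = f1 (Y.src (d i)) ∧
      Z1.tgt dd = f1 (Y.tgt (d i)) := by
    intro i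
    by_cases hi : i = k
    · exact ⟨(0, true), fun h => absurd hi h⟩
    · have h1 : Reads C Y1 (d i) (C.R i) :=
        ⟨Finset.mem_erase.2 ⟨hne' i hi, (hdf.1 i).1⟩, (hdf.1 i).2⟩
      obtain ⟨dd, h2⟩ := hrel.morph.step h1.step
      exact ⟨dd, fun _ => h2⟩
  choose D0 hD0 using hdarts
  set u := f1 (Y.src (d k)) with hu
  set v := f1 (Y.tgt (d k)) with hv
  -- a gap face allows to conclude
  have hgap : ∀ (δ : ℕ × Bool) (k' : ZMod L), GapFace C Z1 (Function.update D0 k δ) k' →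
      ∃ (Z : Gr X) (Ψ : Finset (ZMod L → ℕ × Bool)) (f : ℕ → ℕ), State C Z Ψ ∧ RelF C f Y Φ Z Ψ ∧
      Z.E.card ≤ Y.E.card := by
    intro δ k' hg
    set D := Function.update D0 k δ with hDdef
    have hDo : ∀ i, i ≠ k → D i = D0 i := fun i hi => by simp [D, hi]
    obtain ⟨Z2, q, g1, g2, g3, g4, g5, g6, g7, g8⟩ := closeGap hst hg
    have hF := g1 D (Finset.mem_insert_self _ _)
    have hstep : Step C Z2 (q u) (C.R k) (q v) := by
      refine ⟨D k, hF.1 k, ?_, ?_⟩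
      · have h1 := hF.2 (k - 1)
        rw [sub_add_cancel] at h1
        have hk2 : k - 1 ≠ k := by simpa using C.h10
        rw [← h1, hDo _ hk2, g8, (hD0 _ hk2).2.2, hdf.2, sub_add_cancel]
      · rw [hF.2, hDo _ hk1, g7, (hD0 _ hk1).2.1, ← hdf.2]
    have hr2 := hcomplete Z2 _ q g5 hstep
    obtain ⟨Z, Ψ, f, h5, h6, h7⟩ := IH Z2.E.card (by omega) Z2 _ rfl g1 g2 g3 g4
    exact ⟨Z, Ψ, f ∘ (q ∘ f1), h5, hr2.comp h6, by omega⟩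
  by_cases hA : ∃ δ, Reads C Z1 δ (C.R k) ∧ Z1.src δ = u
  · obtain ⟨δ, hδ, hδu⟩ := hA
    by_cases hδv : Z1.tgt δ = v
    · exact ⟨Z1, Ψ1, f1, hst, (hcomplete Z1 Ψ1 id (RelF.refl _ _) ⟨δ, hδ, hδu, hδv⟩), by omega⟩
    · refine hgap δ k ⟨?_, ?_, ?_⟩
      · intro i
        by_cases hi : i = k
        · subst hi; simpa using hδ
        · simpa [hi] using (hD0 i hi).1
      · intro i hi
        rw [Function.update_of_ne hi, (hD0 i hi).2.2, hdf.2]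
        by_cases hi' : i + 1 = k
        · rw [hi', Function.update_self, hδu]
        · rw [Function.update_of_ne hi', (hD0 _ hi').2.1]
      · rw [Function.update_self, Function.update_of_ne hk1, (hD0 _ hk1).2.1, ← hdf.2]
        exact hδv
  by_cases hB : ∃ δ, Reads C Z1 δ (C.R k) ∧ Z1.tgt δ = v
  · obtain ⟨δ, hδ, hδv⟩ := hB
    have hk2 : k - 1 ≠ k := by simpa using C.h10
    refine hgap δ (k - 1) ⟨?_, ?_, ?_⟩
    · intro i
      by_cases hi : i = k
      · subst hi; simpa using hδ
      · simpa [hi] using (hD0 i hi).1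
    · intro i hi
      have hi' : i + 1 ≠ k := fun h => hi (by rw [← h]; simp)
      rw [Function.update_of_ne hi', (hD0 _ hi').2.1, ← hdf.2]
      by_cases hik : i = k
      · rw [hik, Function.update_self, hδv]
      · rw [Function.update_of_ne hik, (hD0 _ hik).2.2]
    · rw [sub_add_cancel, Function.update_self, Function.update_of_ne hk2, (hD0 _ hk2).2.2, hdf.2,
        sub_add_cancel]
      exact fun h => hA ⟨δ, hδ, h.symm⟩
  obtain ⟨n, hn⟩ := Infinite.exists_notMem_finset Z1.E
  have hDo : ∀ i, i ≠ k → Function.update D0 k (n, true) i = D0 i := fun i hi => by simp [hi]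
  obtain ⟨Z, hst', hrel', hcard', hstep'⟩ := addFace hst (D := Function.update D0 k (n, true)) (k := k)
    (u := u) (v := v) hn (fun i hi => by rw [hDo i hi]; exact (hD0 i hi).1) (by simp)
    (fun i hi hi' => by rw [hDo i hi, hDo _ hi', (hD0 i hi).2.2, (hD0 _ hi').2.1, hdf.2])
    (hrel.reach (hreach1 _ (hconn.src _ (hdf.1 k).1)))
    (fun i hi => by
      have hik : i ≠ k := fun h => hk1 (by rw [← h, hi, h])
      rw [hDo i hik, (hD0 i hik).2.2, hdf.2, hi])
    (by rw [hDo _ hk1, (hD0 _ hk1).2.1, ← hdf.2])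
    (fun δ h1 h2 => hA ⟨δ, h1, h2⟩) (fun δ h1 h2 => hB ⟨δ, h1, h2⟩)
  exact ⟨Z, _, f1, hst', hcomplete Z _ id hrel' hstep', by omega⟩

end Orb

namespace Orb
variable {X G P : Type} [Group G] [Group P] {L : ℕ} [NeZero L] {C : Dat X G P L}
variable {Y Z Z' : Gr X} {Φ Ψ Ψ' : Finset (ZMod L → ℕ × Bool)} {f f' : ℕ → ℕ}

variable (C) in
/-- Step along a signed letter. -/
def BS (Z : Gr X) (u : ℕ) (p : X × Bool) (w : ℕ) : Prop :=
  if p.2 = true then Step C Z u p.1 w else Step C Z w p.1 u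

variable (C) in
/-- Walk along a word. -/
def SW (Z : Gr X) : ℕ → List (X × Bool) → ℕ → Prop
  | a, [], c => a = c
  | a, p :: l, c => ∃ b, BS C Z a p b ∧ SW Z b l c

variable (C) in
/-- Walk along some word representing a free group element. -/
def SWG (Z : Gr X) (a : ℕ) (w : FreeGroup X) (c : ℕ) : Prop := ∃ l, FreeGroup.mk l = w ∧ SW C Z a l c

lemma SW.append {a b c : ℕ} {l l' : List (X × Bool)} (h : SW C Z a l b) (h' : SW C Z b l' c) :
    SW C Z a (l ++ l') c := by
  induction l generalizing a with
  | nil => have : a = b := h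
           subst this; exact h'
  | cons p l ih =>
    obtain ⟨b', h1, h2⟩ := h
    exact ⟨b', h1, ih h2⟩

lemma SW.split {a c : ℕ} {l l' : List (X × Bool)} (h : SW C Z a (l ++ l') c) :
    ∃ b, SW C Z a l b ∧ SW C Z b l' c := by
  induction l generalizing a with
  | nil => exact ⟨a, rfl, h⟩
  | cons p l ih =>
    obtain ⟨b', h1, h2⟩ := h
    obtain ⟨b, h3, h4⟩ := ih h2
    exact ⟨b, ⟨b', h1, h3⟩, h4⟩

lemma BS.flip {u w : ℕ} {p : X × Bool} (h : BS C Z u p w) : BS C Z w (p.1, !p.2) u := by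
  obtain ⟨x, b⟩ := p
  cases b <;> simpa [BS] using h

lemma SWG.append {a b c : ℕ} {w w' : FreeGroup X} (h : SWG C Z a w b) (h' : SWG C Z b w' c) :
    SWG C Z a (w * w') c := by
  obtain ⟨l, rfl, h⟩ := h
  obtain ⟨l', rfl, h'⟩ := h'
  exact ⟨l ++ l', FreeGroup.mul_mk.symm, h.append h'⟩

lemma BS.swg {u w : ℕ} {p : X × Bool} (h : BS C Z u p w) : SWG C Z u (FreeGroup.mk [p]) w :=
  ⟨[p], rfl, w, h, rfl⟩

lemma SWG.nil (a : ℕ) : SWG C Z a 1 a := ⟨[], rfl, rfl⟩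

lemma SW.symm {a c : ℕ} {l : List (X × Bool)} (h : SW C Z a l c) :
    SWG C Z c (FreeGroup.mk l)⁻¹ a := by
  induction l generalizing a with
  | nil => have : a = c := h
           subst this
           have h1 : (FreeGroup.mk ([] : List (X × Bool)))⁻¹ = 1 := by
             rw [FreeGroup.inv_mk]; rfl
           rw [h1]; exact SWG.nil a
  | cons p l ih =>
    obtain ⟨b, h1, h2⟩ := h
    have h3 := ih h2
    have h4 := h3.append h1.flip.swg
    have : (FreeGroup.mk (p :: l))⁻¹ = (FreeGroup.mk l)⁻¹ * FreeGroup.mk [(p.1, !p.2)] := by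
      have e1 : FreeGroup.mk (p :: l) = FreeGroup.mk [p] * FreeGroup.mk l := by
        rw [FreeGroup.mul_mk]; rfl
      rw [e1, mul_inv_rev, FreeGroup.inv_mk (L := [p])]
      rfl
    rw [this]; exact h4

lemma SWG.symm {a c : ℕ} {w : FreeGroup X} (h : SWG C Z a w c) : SWG C Z c w⁻¹ a := by
  obtain ⟨l, rfl, h⟩ := h
  exact h.symm

lemma Morph.bs (hf : Morph C f Y Z) {u w : ℕ} {p : X × Bool} (h : BS C Y u p w) :
    BS C Z (f u) p (f w) := by
  obtain ⟨x, b⟩ := p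
  cases b
  · simp only [BS, Bool.false_eq_true, if_false] at h ⊢; exact hf.step h
  · simp only [BS, if_true] at h ⊢; exact hf.step h

lemma Morph.sw (hf : Morph C f Y Z) {u w : ℕ} {l : List (X × Bool)} (h : SW C Y u l w) :
    SW C Z (f u) l (f w) := by
  induction l generalizing u with
  | nil => exact congrArg f h
  | cons p l ih =>
    obtain ⟨b, h1, h2⟩ := h
    exact ⟨f b, hf.bs h1, ih h2⟩

lemma Morph.swg (hf : Morph C f Y Z) {u w : ℕ} {g : FreeGroup X} (h : SWG C Y u g w) :
    SWG C Z (f u) g (f w) := by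
  obtain ⟨l, h1, h2⟩ := h
  exact ⟨l, h1, hf.sw h2⟩

lemma W.swg {a c : ℕ} {w : FreeGroup X} (h : W Z (fun e => FreeGroup.of (Z.l e)) a w c) :
    SWG C Z a w c := by
  induction h with
  | nil a => exact SWG.nil a
  | cons d g c hd _ ih =>
    refine SWG.append ?_ ih
    obtain ⟨e, b⟩ := d
    have hs : Step C Z (Z.s e) (Z.l e) (Z.t e) := ⟨(e, true), ⟨hd, rfl, Or.inl rfl⟩, rfl, rfl⟩
    cases b
    · have h1 : BS C Z (Z.t e) (Z.l e, false) (Z.s e) := by simpa [BS] using hs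
      have h2 := h1.swg
      simpa [FreeGroup.of, FreeGroup.inv_mk, FreeGroup.invRev] using h2
    · have h1 : BS C Z (Z.s e) (Z.l e, true) (Z.t e) := by simpa [BS] using hs
      exact h1.swg

lemma SW.red (hf : Folded C Z) {a c : ℕ} {l l' : List (X × Bool)} (h : SW C Z a l c)
    (hr : FreeGroup.Red l l') : SW C Z a l' c := by
  induction hr with
  | refl => exact h
  | tail _ hstep ih =>
    cases hstep with
    | @not L₁ L₂ x b =>
      obtain ⟨b1, h1, h2⟩ := ih.split
      obtain ⟨b2, h3, b3, h4, h5⟩ := h2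
      have : b3 = b1 := by
        cases b
        · simp only [BS, Bool.not_false, Bool.false_eq_true, if_false, if_true] at h3 h4
          obtain ⟨d, r1, r2, r3⟩ := h3
          obtain ⟨d', r1', r2', r3'⟩ := h4
          rw [← r3, ← r3']
          exact ((hf.fwd r1 r1' (r2.trans r2'.symm)).2).symm
        · simp only [BS, Bool.not_true, Bool.false_eq_true, if_false, if_true] at h3 h4
          obtain ⟨d, r1, r2, r3⟩ := h3
          obtain ⟨d', r1', r2', r3'⟩ := h4
          rw [← r2, ← r2']
          exact ((hf.bwd r1 r1' (r3.trans r3'.symm)).2).symm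
      subst this
      exact h1.append h5

lemma SWG.step (hf : Folded C Z) {a c : ℕ} {x : X} (h : SWG C Z a (FreeGroup.of x) c) :
    Step C Z a x c := by
  classical
  obtain ⟨l, h1, h2⟩ := h
  have h3 : FreeGroup.reduce l = [(x, true)] := by
    have := congrArg FreeGroup.toWord h1
    simpa using this
  have h4 := h2.red hf (FreeGroup.reduce.red (L := l))
  rw [h3] at h4
  obtain ⟨b, h5, h6⟩ := h4
  have : b = c := h6
  subst this
  simpa [BS] using h5

/-- Extension by a pendant edge. -/
lemma ext1 (hz : State C Z Ψ) {v : ℕ} (hv : Reach C Z v) (p : X × Bool) :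
    ∃ (Z' : Gr X) (w : ℕ), State C Z' Ψ ∧ RelF C id Z Ψ Z' Ψ ∧ BS C Z' v p w := by
  classical
  by_cases hB : ∃ w, BS C Z v p w
  · obtain ⟨w, hw⟩ := hB
    exact ⟨Z, w, hz, RelF.refl Z Ψ, hw⟩
  obtain ⟨x, b⟩ := p
  have hno : ∀ e ∈ Z.E, ∀ b', Z.src (e, b') = v → Z.l e = x → (b' = b ∨ C.S x) → False := by
    intro e he b' h1 h2 h3
    apply hB
    refine ⟨Z.tgt (e, b'), ?_⟩
    have h4 : (b' = true → Step C Z v x (Z.tgt (e, b'))) := by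
      rintro rfl
      exact ⟨(e, true), ⟨he, h2, Or.inl rfl⟩, h1, rfl⟩
    have h5 : (b' = false → Step C Z (Z.tgt (e, b')) x v) := by
      rintro rfl
      exact ⟨(e, true), ⟨he, h2, Or.inl rfl⟩, rfl, h1⟩
    rcases h3 with rfl | h3
    · cases b'
      · simpa [BS] using h5
      · simpa [BS] using h4
    · have h6 : Step C Z v x (Z.tgt (e, b')) := by
        cases b'
        · exact (h5 rfl).rev h3
        · exact h4 rfl
      cases b
      · simpa [BS] using h6.rev h3
      · simpa [BS] using h6
  obtain ⟨n, hn⟩ := Infinite.exists_notMem_finset Z.E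
  obtain ⟨m, hm⟩ := Infinite.exists_notMem_finset (insert v (insert Z.o (Z.E.image Z.s ∪ Z.E.image Z.t)))
  simp only [Finset.mem_insert, Finset.mem_union, Finset.mem_image, not_or, not_exists, not_and] at hm
  obtain ⟨hmv, hmo, hms, hmt⟩ := hm
  let Z' : Gr X := ⟨insert n Z.E, Function.update Z.s n (if b = true then v else m),
    Function.update Z.t n (if b = true then m else v), Function.update Z.l n x, Z.o⟩
  have old : ∀ e ∈ Z.E, e ≠ n := fun e he h => hn (h ▸ he)
  have hs : ∀ e ∈ Z.E, Z'.s e = Z.s e := fun e he => by simp [Z', old e he]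
  have ht : ∀ e ∈ Z.E, Z'.t e = Z.t e := fun e he => by simp [Z', old e he]
  have hl' : ∀ e ∈ Z.E, Z'.l e = Z.l e := fun e he => by simp [Z', old e he]
  have hln : Z'.l n = x := by simp [Z']
  have hsrc : ∀ d : ℕ × Bool, d.1 ∈ Z.E → Z'.src d = Z.src d := by
    rintro ⟨e, b⟩ h
    cases b <;> simp [hs e h, ht e h]
  have htgt : ∀ d : ℕ × Bool, d.1 ∈ Z.E → Z'.tgt d = Z.tgt d := by
    rintro ⟨e, b⟩ h
    cases b <;> simp [hs e h, ht e h]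
  have hn1 : Z'.src (n, b) = v := by cases b <;> simp [Z']
  have hn2 : Z'.src (n, !b) = m := by cases b <;> simp [Z']
  have hn3 : Z'.tgt (n, b) = m := by cases b <;> simp [Z']
  have hmsrc : ∀ d : ℕ × Bool, d.1 ∈ Z.E → Z.src d ≠ m := by
    rintro ⟨e, b⟩ h
    cases b
    · exact hmt e h
    · exact hms e h
  have hrd : ∀ d x, Reads C Z d x → Reads C Z' d x := by
    rintro d x ⟨h3, h4, h5⟩
    exact ⟨Finset.mem_insert_of_mem h3, by rw [hl' _ h3, h4], h5⟩
  have hnE : n ∈ Z'.E := Finset.mem_insert_self _ _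
  have hnew : ∀ (c : Bool) (e' : ℕ) (b' : Bool), e' ∈ Z.E → Z'.src (n, c) = Z.src (e', b') →
      x = Z.l e' → (c = b' ∨ C.S x) → False := by
    intro c e' b' he' hs' hl'' hor
    by_cases hcb : c = b
    · subst hcb
      rw [hn1] at hs'
      exact hno e' he' b' hs'.symm hl''.symm (hor.imp Eq.symm id)
    · have : c = !b := by cases b <;> cases c <;> simp_all
      rw [this, hn2] at hs'
      exact hmsrc _ he' hs'.symm
  have hfold : Folded C Z' := by
    intro e hE e' hE' b b' hss hll hor
    have he := Finset.mem_insert.1 hE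
    have he' := Finset.mem_insert.1 hE'
    clear hE hE'
    rcases he with rfl | he
    · rcases he' with rfl | he'
      · rfl
      · exfalso
        rw [hsrc (e', b') he'] at hss
        rw [hln, hl' e' he'] at hll
        rw [hln] at hor
        exact hnew b e' b' he' hss hll hor
    · rcases he' with rfl | he'
      · exfalso
        rw [hsrc (e, b) he] at hss
        rw [hln, hl' e he] at hll
        rw [hl' e he, hll] at hor
        exact hnew b' e b he hss.symm hll.symm (hor.imp Eq.symm id)
      · rw [hsrc (e, b) he, hsrc (e', b') he'] at hss
        rw [hl' e he, hl' e' he'] at hll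
        rw [hl' e he] at hor
        exact hz.folded e he e' he' b b' hss hll hor
  have hmorph : Morph C id Z Z' := by
    intro e he
    refine ⟨(e, true), hrd _ _ ⟨he, rfl, Or.inl rfl⟩, hs e he, ht e he⟩
  have hrel : RelF C id Z Ψ Z' Ψ := by
    refine ⟨rfl, hmorph, ?_⟩
    rintro ⟨lam, ha, hb, hc'⟩
    refine ⟨lam, ?_, hb, fun g => ?_⟩
    · intro e he
      rw [ha e (Finset.mem_insert_of_mem he), hl' e he]
    · have key := W.transport (Z := Z) (ν := lam) (fun w => if w = m then v else w)
        (fun w => if w = m then val lam (n, b) else 1) (Y := Z') (μ := lam) (by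
          intro e he
          rcases Finset.mem_insert.1 he with rfl | he
          · cases b
            · have e1 : Z'.s e = m := by simp [Z']
              have e2 : Z'.t e = v := by simp [Z']
              rw [e1, e2]
              simpa [Ne.symm hmv] using W.nil v
            · have e1 : Z'.s e = v := by simp [Z']
              have e2 : Z'.t e = m := by simp [Z']
              rw [e1, e2]
              simpa [Ne.symm hmv] using W.nil v
          · rw [hs e he, ht e he]
            have := W.edge (Z := Z) (μ := lam) e he
            simpa [hms e he, hmt e he] using this) (hc' g)
      have e3 : Z'.o = Z.o := rfl
      simpa [e3, Ne.symm hmo] using key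
  refine ⟨Z', m, ⟨hfold, ?_, ?_, ?_, hrel.surj hz.surj⟩, hrel, ?_⟩
  · intro d hd
    obtain ⟨ha, hb⟩ := hz.face d hd
    refine ⟨fun i => hrd _ _ (ha i), fun i => ?_⟩
    rw [hsrc _ (ha _).1, htgt _ (ha _).1, hb]
  · intro d hd d' hd' i hi
    rw [hsrc _ ((hz.face d hd).1 i).1, hsrc _ ((hz.face d' hd').1 i).1] at hi
    exact hz.inj d hd d' hd' i hi
  · have hrv : Reach C Z' v := hrel.reach hv
    intro e he
    rcases Finset.mem_insert.1 he with rfl | he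
    · cases b
      · have h1 := Reach.step (d := (e, false)) (hn1 ▸ hrv) hnE
        exact h1
      · have : Z'.s e = v := hn1
        rw [this]; exact hrv
    · rw [hs e he]; exact hrel.reach (hz.conn e he)
  · cases b
    · simp only [BS, Bool.false_eq_true, if_false]
      exact ⟨(n, true), ⟨hnE, hln, Or.inl rfl⟩, hn2, hn1⟩
    · simp only [BS, if_true]
      exact ⟨(n, true), ⟨hnE, hln, Or.inl rfl⟩, hn1, hn3⟩

lemma extList (l : List (X × Bool)) : ∀ (Z : Gr X) (v : ℕ), State C Z Ψ → Reach C Z v →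
    ∃ (Z' : Gr X) (w : ℕ), State C Z' Ψ ∧ RelF C id Z Ψ Z' Ψ ∧ SW C Z' v l w ∧ Reach C Z' w := by
  induction l with
  | nil => intro Z v hz hv; exact ⟨Z, v, hz, RelF.refl Z Ψ, rfl, hv⟩
  | cons p l ih =>
    intro Z v hz hv
    obtain ⟨Z1, w1, h1, h2, h3⟩ := ext1 hz hv p
    have hw : Reach C Z1 w1 := by
      have hv1 : Reach C Z1 v := h2.reach hv
      obtain ⟨x, b⟩ := p
      obtain ⟨g, hg⟩ := hv1
      cases b
      · simp only [BS, Bool.false_eq_true, if_false] at h3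
        exact ⟨_, hg.append h3.w.symm⟩
      · simp only [BS, if_true] at h3
        exact ⟨_, hg.append h3.w⟩
    obtain ⟨Z2, w2, h4, h5, h6, h7⟩ := ih Z1 w1 h1 hw
    exact ⟨Z2, w2, h4, h2.comp h5, ⟨w1, h5.morph.bs h3, h6⟩, h7⟩

lemma SW.func {x : ℕ → X} {n : ℕ} {a c : ℕ}
    (h : SW C Z a ((List.range n).map (fun j => (x j, true))) c) :
    ∃ y : ℕ → ℕ, y 0 = a ∧ y n = c ∧ ∀ j < n, Step C Z (y j) (x j) (y (j + 1)) := by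
  induction n generalizing c with
  | zero => exact ⟨fun _ => a, rfl, h, by simp⟩
  | succ n ih =>
    rw [List.range_succ, List.map_append] at h
    obtain ⟨b, h1, b', h2, h3⟩ := h.split
    have : b' = c := h3
    subst this
    obtain ⟨y, y0, yn, hy⟩ := ih h1
    refine ⟨fun j => if j ≤ n then y j else b', by simp [y0], by simp, ?_⟩
    intro j hj
    by_cases hjn : j = n
    · subst hjn
      simpa [yn, BS] using h2
    · have hj' : j < n := by omega
      simpa [show j ≤ n by omega, show j + 1 ≤ n by omega] using hy j hj'

/-- The relator can be read as a closed path after an extension. -/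
lemma faceLemma (hz : State C Z Ψ) {v : ℕ} (hv : Reach C Z v) :
    ∃ (Z' : Gr X) (Ψ' : Finset (ZMod L → ℕ × Bool)) (f : ℕ → ℕ), State C Z' Ψ' ∧ RelF C f Z Ψ Z' Ψ' ∧
      SWG C Z' (f v) (cyc (fun i => FreeGroup.of (C.R i)) 0) (f v) := by
  obtain ⟨Z1, w, h1, h2, h3, -⟩ := extList ((List.range L).map (fun j : ℕ => (C.R (j : ZMod L), true)))
    Z v hz hv
  have hmk : FreeGroup.mk ((List.range L).map (fun j : ℕ => (C.R (j : ZMod L), true))) =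
      cyc (fun i => FreeGroup.of (C.R i)) 0 := by
    unfold cyc
    have : ∀ l : List ℕ, FreeGroup.mk (l.map (fun j : ℕ => (C.R (j : ZMod L), true))) =
        (l.map (fun j : ℕ => FreeGroup.of (C.R (0 + (j : ZMod L))))).prod := by
      intro l
      induction l with
      | nil => rfl
      | cons a l ih =>
        rw [List.map_cons, List.map_cons, List.prod_cons, ← ih, FreeGroup.of, FreeGroup.mul_mk]
        simp
    exact this _
  by_cases hw : w = v
  · subst hw
    exact ⟨Z1, Ψ, id, h1, h2, _, hmk, h3⟩
  obtain ⟨y, y0, yL, hy⟩ := SW.func (x := fun j : ℕ => C.R (j : ZMod L)) h3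
  have hD : ∀ i : ZMod L, ∃ d, Reads C Z1 d (C.R i) ∧ Z1.src d = y i.val ∧ Z1.tgt d = y (i.val + 1) := by
    intro i
    have := hy i.val (ZMod.val_lt i)
    rwa [ZMod.natCast_zmod_val] at this
  choose D hD using hD
  have hL : (-1 : ZMod L).val + 1 = L := by
    obtain ⟨m, rfl⟩ := Nat.exists_eq_succ_of_ne_zero (NeZero.ne L)
    rw [Nat.succ_eq_add_one, ZMod.val_neg_one]
  have hgap : GapFace C Z1 D (-1) := by
    refine ⟨fun i => (hD i).1, ?_, ?_⟩
    · intro i hi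
      rw [(hD i).2.2, (hD _).2.1]
      congr 1
      have h5 : i.val + 1 < L := by
        have := ZMod.val_lt i
        by_contra hc
        apply hi
        apply ZMod.val_injective L
        omega
      have : i + 1 = ((i.val + 1 : ℕ) : ZMod L) := by push_cast; rw [ZMod.natCast_zmod_val]
      rw [this, ZMod.val_natCast, Nat.mod_eq_of_lt h5]
    · rw [(hD _).2.2, (hD _).2.1, hL, yL, neg_add_cancel, ZMod.val_zero, y0]
      exact hw
  obtain ⟨Z2, q, g1, g2, g3, g4, g5, g6, g7, g8⟩ := closeGap h1 hgap
  obtain ⟨Z3, Ψ3, f3, k1, k2, -⟩ := foldAll _ Z2 _ rfl g1 g2 g3 g4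
  have hq : q w = q v := by
    have := (g1 D (Finset.mem_insert_self _ _)).2 (-1)
    rw [g7, g8, (hD _).2.2, (hD _).2.1, hL, yL, neg_add_cancel, ZMod.val_zero, y0] at this
    exact this
  have hr := g5.comp k2
  refine ⟨Z3, Ψ3, (f3 ∘ q) ∘ id, k1, h2.comp hr, ?_⟩
  have h9 := hr.morph.sw h3
  refine ⟨_, hmk, ?_⟩
  have e : (f3 ∘ q) w = (f3 ∘ q) v := congrArg f3 hq
  rw [e] at h9
  exact h9

lemma jLemma {w : FreeGroup X} (hw : FreeGroup.lift C.hol w = 1) :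
    ∀ (Z : Gr X) (Ψ : Finset (ZMod L → ℕ × Bool)) (v : ℕ), State C Z Ψ → Reach C Z v →
    ∃ (Z' : Gr X) (Ψ' : Finset (ZMod L → ℕ × Bool)) (f : ℕ → ℕ), State C Z' Ψ' ∧ RelF C f Z Ψ Z' Ψ' ∧
      SWG C Z' (f v) w (f v) := by
  have h := C.hN w hw
  clear hw
  unfold Subgroup.normalClosure at h
  induction h using Subgroup.closure_induction with
  | mem w hw =>
    intro Z Ψ v hz hv
    rw [Group.mem_conjugatesOfSet_iff] at hw
    obtain ⟨r, hr, hconj⟩ := hw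
    rw [isConj_iff] at hconj
    obtain ⟨g, rfl⟩ := hconj
    obtain ⟨l, rfl⟩ : ∃ l, FreeGroup.mk l = g := by
      classical
      exact ⟨g.toWord, FreeGroup.mk_toWord⟩
    obtain ⟨Z1, u, h1, h2, h3, h4⟩ := extList l Z v hz hv
    have key : ∃ (Z' : Gr X) (Ψ' : Finset (ZMod L → ℕ × Bool)) (f : ℕ → ℕ), State C Z' Ψ' ∧
        RelF C f Z1 Ψ Z' Ψ' ∧ SWG C Z' (f u) r (f u) := by
      rcases hr with ⟨x, hx, rfl⟩ | hr
      · obtain ⟨Z2, u2, k1, k2, k3⟩ := ext1 h1 h4 (x, true)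
        refine ⟨Z2, Ψ, id, k1, k2, ?_⟩
        have k4 : BS C Z2 u2 (x, true) u := by
          simp only [BS, if_true] at k3 ⊢
          exact k3.rev hx
        exact k3.swg.append k4.swg
      · rw [Set.mem_singleton_iff] at hr
        rw [hr]
        exact faceLemma h1 h4
    obtain ⟨Z2, Ψ2, f, k1, k2, k3⟩ := key
    refine ⟨Z2, Ψ2, f ∘ id, k1, h2.comp k2, ?_⟩
    have h5 : SWG C Z2 (f v) (FreeGroup.mk l) (f u) := k2.morph.swg ⟨l, rfl, h3⟩
    exact (h5.append k3).append h5.symm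
  | one =>
    intro Z Ψ v hz hv
    exact ⟨Z, Ψ, id, hz, RelF.refl Z Ψ, SWG.nil _⟩
  | mul a b _ _ iha ihb =>
    intro Z Ψ v hz hv
    obtain ⟨Z1, Ψ1, f1, h1, h2, h3⟩ := iha Z Ψ v hz hv
    obtain ⟨Z2, Ψ2, f2, k1, k2, k3⟩ := ihb Z1 Ψ1 (f1 v) h1 (h2.reach hv)
    exact ⟨Z2, Ψ2, f2 ∘ f1, k1, h2.comp k2, (k2.morph.swg h3).append k3⟩
  | inv a _ iha =>
    intro Z Ψ v hz hv
    obtain ⟨Z1, Ψ1, f1, h1, h2, h3⟩ := iha Z Ψ v hz hv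
    exact ⟨Z1, Ψ1, f1, h1, h2, h3.symm⟩

end Orb

namespace Orb
variable {X G P : Type} [Group G] [Group P] {L : ℕ} [NeZero L] {C : Dat X G P L}
variable {Y Z Z' : Gr X} {Φ Ψ Ψ' : Finset (ZMod L → ℕ × Bool)} {f f' : ℕ → ℕ}

lemma readLoops (xs : List X) (hz : State C Z Ψ) :
    ∃ (Z' : Gr X) (Ψ' : Finset (ZMod L → ℕ × Bool)) (f : ℕ → ℕ), State C Z' Ψ' ∧ RelF C f Z Ψ Z' Ψ' ∧
      ∀ x ∈ xs, Step C Z' Z'.o x Z'.o := by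
  induction xs with
  | nil => exact ⟨Z, Ψ, id, hz, RelF.refl Z Ψ, by simp⟩
  | cons x xs ih =>
    obtain ⟨Z1, Ψ1, f1, h1, h2, h3⟩ := ih
    obtain ⟨w, hw, hw'⟩ : ∃ w, FreeGroup.lift C.hol w = C.hol x ∧
        W Z1 (fun e => FreeGroup.of (Z1.l e)) Z1.o w Z1.o := by
      apply W.unmap (FreeGroup.lift C.hol)
      simpa using h1.surj (C.hol x)
    have hk : FreeGroup.lift C.hol (w⁻¹ * FreeGroup.of x) = 1 := by
      rw [map_mul, map_inv, hw]; simp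
    obtain ⟨Z2, Ψ2, f2, k1, k2, k3⟩ := jLemma hk Z1 Ψ1 Z1.o h1 ⟨1, W.nil _⟩
    refine ⟨Z2, Ψ2, f2 ∘ f1, k1, h2.comp k2, ?_⟩
    intro y hy
    rcases List.mem_cons.1 hy with rfl | hy
    · have h5 := (k2.morph.swg (W.swg (C := C) hw')).append k3
      rw [mul_inv_cancel_left, k2.o] at h5
      exact h5.step k1.folded
    · have := k2.morph.step (h3 y hy)
      rwa [k2.o] at this

lemma finalGood (hz : State C Z Ψ) (hloop : ∀ x, Step C Z Z.o x Z.o) : Good C Z Ψ := by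
  classical
  have hedge : ∀ e ∈ Z.E, (Z.s e = Z.o ∨ Z.t e = Z.o) → Z.s e = Z.o ∧ Z.t e = Z.o := by
    intro e he h
    obtain ⟨d, h1, h2, h3⟩ := hloop (Z.l e)
    have hr : Reads C Z (e, true) (Z.l e) := ⟨he, rfl, Or.inl rfl⟩
    rcases h with h | h
    · have := (hz.folded.fwd hr h1 (by rw [h2]; exact h)).2
      exact ⟨h, this.trans h3⟩
    · have := (hz.folded.bwd hr h1 (by rw [h3]; exact h)).2
      exact ⟨this.trans h2, h⟩
  have hreach : ∀ a g c, W Z (hl C Z) a g c → a = Z.o → c = Z.o := by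
    intro a g c h
    induction h with
    | nil a => exact id
    | cons d g c hd _ ih =>
      intro ha
      apply ih
      obtain ⟨e, b⟩ := d
      cases b
      · exact (hedge e hd (Or.inr ha)).1
      · exact (hedge e hd (Or.inl ha)).2
  have hall : ∀ e ∈ Z.E, Z.s e = Z.o ∧ Z.t e = Z.o := by
    intro e he
    obtain ⟨g, hg⟩ := hz.conn e he
    exact hedge e he (Or.inl (hreach _ _ _ hg rfl))
  have hsrc : ∀ d : ℕ × Bool, d.1 ∈ Z.E → Z.src d = Z.o := by
    rintro ⟨e, b⟩ h
    cases b
    · exact (hall e h).2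
    · exact (hall e h).1
  let lam : ℕ → P := fun e => if ∃ d ∈ Ψ, ∃ i, d i = (e, false) then (C.psi (Z.l e))⁻¹ else C.psi (Z.l e)
  have hloopw : ∀ x, W Z lam Z.o (C.psi x) Z.o := by
    intro x
    obtain ⟨⟨e, b⟩, ⟨h1, h2, -⟩, -, -⟩ := hloop x
    simp only at h1 h2
    obtain ⟨hs, ht⟩ := hall e h1
    have hw := (W.edge (μ := lam) e h1).congr hs rfl ht
    by_cases hc : ∃ d ∈ Ψ, ∃ i, d i = (e, false)
    · have : lam e = (C.psi x)⁻¹ := by simp only [lam, if_pos hc, h2]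
      rw [this] at hw
      simpa using hw.symm
    · have : lam e = C.psi x := by simp only [lam, if_neg hc, h2]
      rwa [this] at hw
  refine ⟨lam, ?_, ?_, ?_⟩
  · intro e he
    simp only [lam]
    split_ifs with hc
    · obtain ⟨d, hd, i, hi⟩ := hc
      have hr := (hz.face d hd).1 i
      rw [hi] at hr
      have h2 : Z.l e = C.R i := hr.2.1
      have h3 : C.S (C.R i) := hr.2.2.resolve_left (by simp)
      rw [map_inv, C.pr_psi, h2, hol_inv h3]
    · exact C.pr_psi _
  · intro d hd
    rw [cyc_congr (g := fun i => C.psi (C.R i)), C.psi_cyc]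
    intro i
    have hr := (hz.face d hd).1 i
    rcases hdi : d i with ⟨e, b⟩
    rw [hdi] at hr
    obtain ⟨h1, h2, h3⟩ := hr
    simp only at h1 h2 h3
    cases b
    · have hc : ∃ d ∈ Ψ, ∃ i, d i = (e, false) := ⟨d, hd, i, hdi⟩
      simp only [val_false, lam, if_pos hc, h2, inv_inv]
    · have hc : ¬ ∃ d ∈ Ψ, ∃ i, d i = (e, false) := by
        rintro ⟨d', hd', j, hj⟩
        have hr' := (hz.face d' hd').1 j
        have hdd : d' = d := by
          apply hz.inj d' hd' d hd i
          rw [hsrc _ ((hz.face d' hd').1 i).1, hsrc _ ((hz.face d hd).1 i).1]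
        rw [hj] at hr'
        have h4 : Z.l e = C.R j := hr'.2.1
        have h5 : C.S (C.R j) := hr'.2.2.resolve_left (by simp)
        have : i = j := C.hS _ _ h5 (by rw [← h2, ← h4])
        rw [hdd, ← this, hdi] at hj
        simp at hj
      simp only [val_true, lam, if_neg hc, h2]
  · intro g
    have hg : g ∈ Subgroup.closure (Set.range C.psi) := by rw [C.psi_gen]; trivial
    induction hg using Subgroup.closure_induction with
    | mem x hx => obtain ⟨x, rfl⟩ := hx; exact hloopw x
    | one => exact W.nil _
    | mul a b _ _ ha hb => exact ha.append hb
    | inv a _ ha => exact ha.symm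

theorem State.good (hz : State C Z Ψ) : Good C Z Ψ := by
  obtain ⟨Z', Ψ', f, h1, h2, h3⟩ := readLoops ((List.range L).map (fun j : ℕ => C.R (j : ZMod L))) hz
  apply h2.good
  apply finalGood h1
  intro x
  apply h3
  obtain ⟨i, rfl⟩ := C.hall x
  rw [List.mem_map]
  exact ⟨i.val, by simpa using ZMod.val_lt i, by rw [ZMod.natCast_zmod_val]⟩

lemma W.gauge {H : Type} [Group H] {Z : Gr X} {μ : ℕ → H} (K : Subgroup H) (h : ℕ → H)
    (hE : ∀ e ∈ Z.E, h (Z.s e) * μ e * (h (Z.t e))⁻¹ ∈ K) {a c : ℕ} {g : H} (hw : W Z μ a g c) :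
    h a * g * (h c)⁻¹ ∈ K := by
  induction hw with
  | nil a => simpa using K.one_mem
  | cons d g c hd _ ih =>
    obtain ⟨e, b⟩ := d
    cases b
    · have := K.mul_mem (K.inv_mem (hE e hd)) ih
      simpa [mul_assoc] using this
    · have := K.mul_mem (hE e hd) ih
      simpa [mul_assoc] using this

/-- Value of a signed letter. -/
def sg {H : Type} [Group H] (μ : X → H) (p : X × Bool) : H := if p.2 = true then μ p.1 else (μ p.1)⁻¹

/-- Lifting of generating tuples, in terms of words. -/
theorem lift_words (ww : ℕ → ℕ → X × Bool) (mm : ℕ → ℕ) (n : ℕ)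
    (hgen : Subgroup.closure (Set.range (fun i : Fin n =>
      ((List.range (mm i)).map (fun j => sg C.hol (ww i j))).prod)) = ⊤) :
    ∃ t : Fin n → P, (∀ i : Fin n, C.pr (t i) = ((List.range (mm i)).map (fun j => sg C.hol (ww i j))).prod)
      ∧ Subgroup.closure (Set.range t) = ⊤ := by
  classical
  let v : ℕ → ℕ → ℕ := fun i j => if j = 0 ∨ j = mm i then 0 else Nat.pair i j + 1
  let Y : Gr X :=
    ⟨Finset.univ.biUnion (fun i : Fin n => (Finset.range (mm i)).image (fun j => Nat.pair i j)),
    fun e => if (ww e.unpair.1 e.unpair.2).2 = true then v e.unpair.1 e.unpair.2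
      else v e.unpair.1 (e.unpair.2 + 1),
    fun e => if (ww e.unpair.1 e.unpair.2).2 = true then v e.unpair.1 (e.unpair.2 + 1)
      else v e.unpair.1 e.unpair.2,
    fun e => (ww e.unpair.1 e.unpair.2).1, 0⟩
  have memE : ∀ e, e ∈ Y.E → ∃ i : Fin n, ∃ j < mm i, e = Nat.pair i j := by
    intro e he
    simp only [Y, Finset.mem_biUnion, Finset.mem_univ, true_and, Finset.mem_image,
      Finset.mem_range] at he
    obtain ⟨i, j, h1, h2⟩ := he
    exact ⟨i, j, h1, h2.symm⟩
  have memE' : ∀ (i : Fin n) (j : ℕ), j < mm i → Nat.pair i j ∈ Y.E := by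
    intro i j hj
    simp only [Y, Finset.mem_biUnion, Finset.mem_univ, true_and, Finset.mem_image,
      Finset.mem_range]
    exact ⟨i, j, hj, rfl⟩
  let D : ℕ → ℕ → ℕ × Bool := fun i j => (Nat.pair i j, (ww i j).2)
  have hsD : ∀ i j, Y.src (D i j) = v i j := by
    intro i j
    simp only [Gr.src, D, Y, Nat.unpair_pair]
    split_ifs <;> rfl
  have htD : ∀ i j, Y.tgt (D i j) = v i (j + 1) := by
    intro i j
    simp only [Gr.tgt, D, Y, Nat.unpair_pair]
    split_ifs <;> rfl
  have hv0 : ∀ i, v i 0 = 0 := fun i => by simp [v]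
  have hvm : ∀ i, v i (mm i) = 0 := fun i => by simp [v]
  have hpath : ∀ {H : Type} [Group H] (μ : ℕ → H) (i : Fin n) (j : ℕ), j ≤ mm i →
      W Y μ 0 ((List.range j).map (fun j => val μ (D i j))).prod (v i j) := by
    intro H _ μ i j hj
    have := W.path (Z := Y) (μ := μ) (D i) (v i) j (fun j' hj' =>
      ⟨memE' i j' (by omega), hsD i j', htD i j'⟩)
    exact this.congr (hv0 i) rfl rfl
  have hval : ∀ i j, val (hl C Y) (D i j) = sg C.hol (ww i j) := by
    intro i j
    simp [val, D, sg, hl, Y]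
  have hconn : Conn C Y := by
    intro e he
    obtain ⟨i, j, hj, rfl⟩ := memE e he
    have h1 := hpath (hl C Y) i j hj.le
    have h2 := hpath (hl C Y) i (j + 1) hj
    have h3 : Y.s (Nat.pair i j) = v i j ∨ Y.s (Nat.pair i j) = v i (j + 1) := by
      simp only [Y, Nat.unpair_pair]
      split_ifs
      · exact Or.inl rfl
      · exact Or.inr rfl
    rcases h3 with h3 | h3
    · rw [h3]; exact ⟨_, h1⟩
    · rw [h3]; exact ⟨_, h2⟩
  have hsurj : Surj C Y := by
    intro g
    have hg : g ∈ Subgroup.closure (Set.range (fun i : Fin n =>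
      ((List.range (mm i)).map (fun j => sg C.hol (ww i j))).prod)) := by rw [hgen]; trivial
    induction hg using Subgroup.closure_induction with
    | mem x hx =>
      obtain ⟨i, rfl⟩ := hx
      refine (hpath (hl C Y) i (mm i) le_rfl).congr rfl ?_ (hvm i)
      simp only [hval]
    | one => exact W.nil _
    | mul a b _ _ ha hb => exact ha.append hb
    | inv a _ ha => exact ha.symm
  obtain ⟨Z, Ψ, f, h1, h2, -⟩ := foldAll (C := C) _ Y ∅ rfl (by simp)
    (by intro z hz hne; rw [Finset.subset_empty.1 hz] at hne; simp at hne) hconn hsurj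
  obtain ⟨lam, g1, -, g3⟩ := h2.good h1.good
  let part : ℕ → ℕ → P := fun i j => ((List.range j).map (fun j => val lam (D i j))).prod
  refine ⟨fun i => part i (mm i), ?_, ?_⟩
  · intro i
    simp only [part]
    rw [map_list_prod, List.map_map]
    congr 1
    apply List.map_congr_left
    intro j hj
    rw [List.mem_range] at hj
    rw [← hval]
    have := g1 _ (memE' i j hj)
    simp only [Function.comp, val, D, hl]
    split_ifs
    · exact this
    · rw [map_inv, this]
  · rw [eq_top_iff]
    intro g _
    let h : ℕ → P := fun w => if w = 0 then 1 else part (w - 1).unpair.1 (w - 1).unpair.2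
    have hh : ∀ i j, j < mm i → h (v i j) = part i j := by
      intro i j hj
      by_cases hj0 : j = 0
      · subst hj0; simp [hv0, h, part]
      · have : v i j = Nat.pair i j + 1 := by
          simp only [v]; rw [if_neg]; omega
        rw [this]; simp [h]
    have hdart : ∀ (i : Fin n) (j : ℕ), j < mm i → h (v i j) * val lam (D i j) * (h (v i (j + 1)))⁻¹ ∈
        Subgroup.closure (Set.range (fun i : Fin n => part i (mm i))) := by
      intro i j hj
      have hs : part i j * val lam (D i j) = part i (j + 1) := by
        simp only [part]; rw [List.prod_range_succ]
      rw [hh i j hj, hs]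
      by_cases hj1 : j + 1 = mm i
      · rw [hj1, hvm]
        apply Subgroup.subset_closure
        exact ⟨i, by simp [h]⟩
      · rw [hh i (j + 1) (by omega)]
        simpa using Subgroup.one_mem _
    have := W.gauge (Subgroup.closure (Set.range (fun i : Fin n => part i (mm i)))) h (by
      intro e he
      obtain ⟨i, j, hj, rfl⟩ := memE e he
      have := hdart i j hj
      rw [← hsD, ← htD] at this
      simp only [D] at this
      rcases hb : (ww i j).2
      · rw [hb] at this
        have := Subgroup.inv_mem _ this
        simpa [mul_assoc] using this
      · rw [hb] at this
        simpa using this) (g3 g)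
    have ho : Y.o = 0 := rfl
    simpa [ho, h] using this

/-- Lifting of generating tuples. -/
theorem lift_tuple (hs : Function.Surjective (FreeGroup.lift C.hol)) {n : ℕ} (T : Fin n → G)
    (hT : Subgroup.closure (Set.range T) = ⊤) :
    ∃ t : Fin n → P, (∀ i, C.pr (t i) = T i) ∧ Subgroup.closure (Set.range t) = ⊤ := by
  classical
  choose w hw using fun i => hs (T i)
  obtain ⟨i0, -⟩ := C.hex
  let wl : ℕ → List (X × Bool) := fun i => if h : i < n then (w ⟨i, h⟩).toWord else []
  have hprod : ∀ l : List (X × Bool), ((List.range l.length).map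
      (fun j => sg C.hol (l.getD j (C.R i0, true)))).prod = FreeGroup.lift C.hol (FreeGroup.mk l) := by
    intro l
    rw [FreeGroup.lift_mk]
    congr 1
    apply List.ext_getElem
    · simp
    · intro j h1 h2
      simp only [List.length_map, List.length_range] at h1
      simp [sg, List.getD, h1, Bool.cond_eq_ite]
  have key : ∀ i : Fin n, ((List.range (wl i).length).map
      (fun j => sg C.hol ((wl i).getD j (C.R i0, true)))).prod = T i := by
    intro i
    rw [hprod]
    simp only [wl, i.isLt, dite_true]
    rw [FreeGroup.mk_toWord, hw]
  obtain ⟨t, h1, h2⟩ := lift_words (C := C) (fun i j => (wl i).getD j (C.R i0, true))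
    (fun i => (wl i).length) n (by simp only [key]; exact hT)
  exact ⟨t, fun i => (h1 i).trans (key i), h2⟩

end Orb

namespace Orb
section Nielsen
variable {A : Type} [DecidableEq A]

/-- common prefix length of two lists -/
def cpl {B : Type} [DecidableEq B] : List B → List B → ℕ
  | a :: l, b :: m => if a = b then cpl l m + 1 else 0
  | _, _ => 0

theorem cpl_split {B : Type} [DecidableEq B] : ∀ X Y : List B, ∃ l a b, X = l ++ a ∧ Y = l ++ b ∧
    l.length = cpl X Y ∧ ∀ u ∈ a.head?, ∀ v ∈ b.head?, u ≠ v
  | [], Y => ⟨[], [], Y, by simp [cpl]⟩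
  | a :: l, [] => ⟨[], a :: l, [], by simp [cpl]⟩
  | a :: l, b :: m => by
    by_cases h : a = b
    · obtain ⟨k, c, d, h1, h2, h3, h4⟩ := cpl_split l m
      exact ⟨a :: k, c, d, by simp [h1], by simp [h2, h], by simp [cpl, h, h3], h4⟩
    · exact ⟨[], a :: l, b :: m, by simp, by simp, by simp [cpl, h], by simpa using h⟩

theorem cpl_ultra {B : Type} [DecidableEq B] : ∀ X Y Z : List B,
    min (cpl X Y) (cpl Y Z) ≤ cpl X Z
  | [], Y, Z => by simp [cpl]
  | a :: l, [], Z => by simp [cpl]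
  | a :: l, b :: m, [] => by simp [cpl]
  | a :: l, b :: m, c :: k => by
    have := cpl_ultra l m k
    by_cases h1 : a = b
    · by_cases h2 : b = c
      · subst h1 h2; simp [cpl] at this ⊢; omega
      · simp [cpl, h2]
    · simp [cpl, h1]

theorem cpl_take {B : Type} [DecidableEq B] (X Y : List B) (h : ℕ) (hh : h ≤ cpl X Y) :
    X.take h = Y.take h ∧ h ≤ X.length ∧ h ≤ Y.length := by
  obtain ⟨l, a, b, h1, h2, h3, -⟩ := cpl_split X Y
  rw [← h3] at hh
  rw [h1, h2, List.take_append_of_le_length hh, List.take_append_of_le_length hh]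
  simp; omega

/-- Gromov product -/
def cp (x y : FreeGroup A) : ℕ := cpl x.toWord y.toWord

theorem norm_inv_mul (x y : FreeGroup A) :
    (x⁻¹ * y).norm + 2 * cp x y = x.norm + y.norm := by
  obtain ⟨l, a, b, h1, h2, h3, h4⟩ := cpl_split x.toWord y.toWord
  have hx : x = FreeGroup.mk l * FreeGroup.mk a := by
    rw [FreeGroup.mul_mk, ← h1, FreeGroup.mk_toWord]
  have hy : y = FreeGroup.mk l * FreeGroup.mk b := by
    rw [FreeGroup.mul_mk, ← h2, FreeGroup.mk_toWord]
  have e : x⁻¹ * y = FreeGroup.mk (FreeGroup.invRev a ++ b) := by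
    rw [← FreeGroup.mul_mk, ← FreeGroup.inv_mk]
    nth_rewrite 1 [hx]
    nth_rewrite 1 [hy]
    group
  have ra : FreeGroup.IsReduced (FreeGroup.invRev a) := by
    have : FreeGroup.IsReduced (x⁻¹).toWord := FreeGroup.isReduced_toWord
    rw [FreeGroup.toWord_inv, h1, FreeGroup.invRev_append] at this
    exact this.infix ⟨[], FreeGroup.invRev l, by simp⟩
  have rb : FreeGroup.IsReduced b := by
    have : FreeGroup.IsReduced y.toWord := FreeGroup.isReduced_toWord
    rw [h2] at this
    exact this.infix ⟨l, [], by simp⟩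
  have rab : FreeGroup.IsReduced (FreeGroup.invRev a ++ b) := by
    refine List.isChain_append.2 ⟨ra, rb, ?_⟩
    intro u hu v hv
    cases a with
    | nil => simp at hu
    | cons c a =>
      simp [FreeGroup.invRev] at hu
      have := h4 c (by simp) v hv
      subst hu
      rcases c with ⟨c1, c2⟩; rcases v with ⟨v1, v2⟩
      simp only
      rintro rfl
      cases c2 <;> cases v2 <;> simp_all
  have hn : (x⁻¹ * y).norm = a.length + b.length := by
    rw [e, FreeGroup.norm, FreeGroup.toWord_mk, rab.reduce_eq]; simp
  have hnx : x.norm = l.length + a.length := by rw [FreeGroup.norm, h1]; simp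
  have hny : y.norm = l.length + b.length := by rw [FreeGroup.norm, h2]; simp
  have : cp x y = l.length := h3.symm
  omega

theorem cp_ultra (x y z : FreeGroup A) : min (cp x y) (cp y z) ≤ cp x z := cpl_ultra _ _ _

theorem toWord_of_norm (L : List (A × Bool)) (h : (FreeGroup.mk L).norm = L.length) :
    (FreeGroup.mk L).toWord = L := by
  rw [FreeGroup.toWord_mk]
  have h1 : FreeGroup.Red L (FreeGroup.reduce L) := FreeGroup.reduce.red
  exact h1.sublist.eq_of_length (by rw [← h, FreeGroup.norm, FreeGroup.toWord_mk])

theorem cp_self_lt (x : FreeGroup A) (hx : x ≠ 1) : 2 * cp x⁻¹ x < x.norm := by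
  by_contra hc
  push Not at hc
  rw [cp, FreeGroup.toWord_inv] at hc
  set X := x.toWord with hX
  have hn : x.norm = X.length := rfl
  have key : ∀ i, (hi : i < cpl (FreeGroup.invRev X) X) → (FreeGroup.invRev X)[i]? = X[i]? := by
    intro i hi
    have := (cpl_take _ _ _ (le_of_eq rfl : cpl (FreeGroup.invRev X) X ≤ _)).1
    have := congrArg (fun l => l[i]?) this
    simpa [List.getElem?_take, hi] using this
  have h0 : 0 < X.length := by
    rcases Nat.eq_zero_or_pos X.length with h | h
    · exact absurd (FreeGroup.norm_eq_zero.1 (hn.trans h)) hx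
    · exact h
  have k2 := key ((X.length - 1) / 2) (by omega)
  have hlt : (X.length - 1) / 2 < X.length := by omega
  have hlt2 : X.length - 1 - (X.length - 1) / 2 < X.length := by omega
  rw [List.getElem?_eq_getElem (by simpa using hlt), List.getElem?_eq_getElem hlt] at k2
  simp [FreeGroup.invRev] at k2
  have hr : FreeGroup.IsReduced X := FreeGroup.isReduced_toWord
  rcases Nat.even_or_odd' X.length with ⟨m, hm | hm⟩
  · have hch := List.isChain_iff_getElem.1 hr ((X.length - 1) / 2) (by omega)
    have e : X.length - 1 - (X.length - 1) / 2 = (X.length - 1) / 2 + 1 := by omega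
    simp only [e] at k2
    rw [← k2] at hch
    simp at hch
  · have e : X.length - 1 - (X.length - 1) / 2 = (X.length - 1) / 2 := by omega
    simp only [e] at k2
    have := congrArg Prod.snd k2
    simp at this

end Nielsen
end Orb

namespace Orb
set_option linter.unusedSectionVars false
section Nielsen2
variable {A : Type} [DecidableEq A] [Fintype A]

noncomputable def code (x : A × Bool) : ℕ := (Fintype.equivFin (A × Bool) x : ℕ)

theorem code_lt (x : A × Bool) : code x < Fintype.card (A × Bool) := Fin.isLt _

theorem code_inj {x y : A × Bool} (h : code x = code y) : x = y :=
  (Fintype.equivFin (A × Bool)).injective (Fin.ext h)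

noncomputable def wval : List (A × Bool) → ℕ
  | [] => 0
  | a :: l => code a * (Fintype.card (A × Bool)) ^ l.length + wval l

theorem wval_append (p s : List (A × Bool)) :
    wval (p ++ s) = wval p * (Fintype.card (A × Bool)) ^ s.length + wval s := by
  induction p with
  | nil => simp [wval]
  | cons a l ih => simp only [List.cons_append, wval, ih, List.length_append, pow_add]; ring

theorem wval_lt (l : List (A × Bool)) : wval l < (Fintype.card (A × Bool)) ^ l.length := by
  induction l with
  | nil => simp [wval]
  | cons a l ih =>
    have h := code_lt a
    simp only [wval, List.length_cons]
    calc _ < code a * (Fintype.card (A × Bool)) ^ l.length + (Fintype.card (A × Bool)) ^ l.length := by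
          omega
      _ = (code a + 1) * (Fintype.card (A × Bool)) ^ l.length := by ring
      _ ≤ Fintype.card (A × Bool) * (Fintype.card (A × Bool)) ^ l.length := Nat.mul_le_mul_right _ h
      _ = _ := by ring

theorem wval_inj : ∀ {l m : List (A × Bool)}, l.length = m.length → wval l = wval m → l = m
  | [], [], _, _ => rfl
  | a :: l, b :: m, hl, hv => by
    simp only [List.length_cons, Nat.add_right_cancel_iff] at hl
    simp only [wval] at hv
    have h1 := wval_lt l
    have h2 := wval_lt m
    rw [← hl] at hv h2
    have hpos : 0 < (Fintype.card (A × Bool)) ^ l.length := by omega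
    have e1 : code a = code b := by
      have := congrArg (· / (Fintype.card (A × Bool)) ^ l.length) hv
      simp only [mul_comm (code a), mul_comm (code b), Nat.mul_add_div hpos, Nat.div_eq_of_lt h1,
        Nat.div_eq_of_lt h2, add_zero] at this
      exact this
    rw [e1] at hv
    have e2 : wval l = wval m := by omega
    rw [code_inj e1, wval_inj hl e2]

noncomputable def rk (x : FreeGroup A) : ℕ :=
  wval (x.toWord.take ((x.norm + 1) / 2)) + wval ((x⁻¹).toWord.take ((x.norm + 1) / 2))

theorem rk_inv (x : FreeGroup A) : rk x⁻¹ = rk x := by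
  simp only [rk, FreeGroup.norm_inv_eq, inv_inv]; omega

theorem rk_lt (y z : FreeGroup A) (P Q b : List (A × Bool)) (hy : y.toWord = P ++ FreeGroup.invRev Q)
    (hz : z.toWord = Q ++ b) (hPQ : P.length = Q.length) (h2 : 2 * Q.length ≤ z.norm)
    (hn : (y * z).norm = z.norm) (hv : wval P < wval Q) : rk (y * z) < rk z := by
  have e : y * z = FreeGroup.mk (P ++ b) := by
    rw [← FreeGroup.mk_toWord (x := y), ← FreeGroup.mk_toWord (x := z), hy, hz, ← FreeGroup.mul_mk,
      ← FreeGroup.mul_mk, ← FreeGroup.mul_mk, ← FreeGroup.inv_mk]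
    group
  have hzl : z.norm = Q.length + b.length := by rw [FreeGroup.norm, hz]; simp
  have hw : (y * z).toWord = P ++ b := by
    rw [e]; apply toWord_of_norm; rw [← e, hn, hzl]; simp [hPQ]
  have hb : (z.norm + 1) / 2 ≤ (FreeGroup.invRev b).length := by simp; omega
  unfold rk
  rw [hn, FreeGroup.toWord_inv, FreeGroup.toWord_inv, hw, hz, FreeGroup.invRev_append,
    FreeGroup.invRev_append, List.take_append_of_le_length hb, List.take_append_of_le_length hb]
  rw [List.take_append, List.take_append, List.take_of_length_le (l := P) (by omega),
    List.take_of_length_le (l := Q) (by omega), wval_append, wval_append, hPQ]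
  have hpos : 0 < (Fintype.card (A × Bool)) ^
      (List.take ((z.norm + 1) / 2 - Q.length) b).length := by
    have := wval_lt (List.take ((z.norm + 1) / 2 - Q.length) b); omega
  have := Nat.mul_lt_mul_of_pos_right hv hpos
  omega

/-- signed letter -/
def sl {G : Type*} [Group G] {n : ℕ} (T : Fin n → G) (a : Fin n × Bool) : G :=
  cond a.2 (T a.1) (T a.1)⁻¹

def li {n : ℕ} (a : Fin n × Bool) : Fin n × Bool := (a.1, !a.2)

theorem sl_li {G : Type*} [Group G] {n : ℕ} (T : Fin n → G) (a : Fin n × Bool) :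
    sl T (li a) = (sl T a)⁻¹ := by
  rcases a with ⟨i, b⟩; cases b <;> simp [sl, li]

structure MinT {n : ℕ} (T : Fin n → FreeGroup A) : Prop where
  ne : ∀ i, T i ≠ 1
  m1 : ∀ a b : Fin n × Bool, a.1 ≠ b.1 → (sl T a).norm ≤ (sl T a * sl T b).norm
  m2 : ∀ a b : Fin n × Bool, a.1 ≠ b.1 → (sl T a * sl T b).norm = (sl T a).norm →
    rk (sl T a) ≤ rk (sl T a * sl T b)

variable {n : ℕ} {T : Fin n → FreeGroup A}

theorem cp_comm (x y : FreeGroup A) : cp x y = cp y x := by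
  have h1 := norm_inv_mul x y
  have h2 := norm_inv_mul y x
  have : (y⁻¹ * x).norm = (x⁻¹ * y).norm := by
    rw [← FreeGroup.norm_inv_eq]; simp
  omega

theorem cp_refl (x : FreeGroup A) : cp x x = x.norm := by
  have h1 := norm_inv_mul x x
  simp at h1; omega

namespace MinT

theorem sl_ne (h : MinT T) (a : Fin n × Bool) : sl T a ≠ 1 := by
  rcases a with ⟨i, b⟩; have := h.ne i; cases b <;> simpa [sl] using this

theorem pos (h : MinT T) (a : Fin n × Bool) : 0 < (sl T a).norm := by
  have := h.sl_ne a
  rcases Nat.eq_zero_or_pos (sl T a).norm with h | h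
  · exact absurd (FreeGroup.norm_eq_zero.1 h) this
  · exact h

theorem m1l (h : MinT T) (a b : Fin n × Bool) (hab : a.1 ≠ b.1) : (sl T a).norm ≤ (sl T b * sl T a).norm := by
  have := h.m1 (li a) (li b) hab
  rw [sl_li, sl_li, ← mul_inv_rev, FreeGroup.norm_inv_eq, FreeGroup.norm_inv_eq] at this
  exact this

theorem m2l (h : MinT T) (a b : Fin n × Bool) (hab : a.1 ≠ b.1)
    (hn : (sl T b * sl T a).norm = (sl T a).norm) : rk (sl T a) ≤ rk (sl T b * sl T a) := by
  have := h.m2 (li a) (li b) hab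
  rw [sl_li, sl_li, ← mul_inv_rev, FreeGroup.norm_inv_eq, FreeGroup.norm_inv_eq, rk_inv, rk_inv]
    at this
  exact this hn

theorem n1 (h : MinT T) (a b : Fin n × Bool) (hab : a.1 = b.1 → a.2 = b.2) :
    2 * cp (sl T a)⁻¹ (sl T b) ≤ (sl T a).norm ∧ 2 * cp (sl T a)⁻¹ (sl T b) ≤ (sl T b).norm ∧
    (a.1 = b.1 → 2 * cp (sl T a)⁻¹ (sl T b) < (sl T b).norm) := by
  by_cases e : a.1 = b.1
  · have : a = b := Prod.ext e (hab e)
    subst this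
    have := cp_self_lt _ (h.sl_ne a)
    omega
  · have h1 := h.m1 a b e
    have h2 := h.m1l b a (Ne.symm e)
    have h3 := norm_inv_mul (sl T a)⁻¹ (sl T b)
    rw [inv_inv, FreeGroup.norm_inv_eq] at h3
    refine ⟨by omega, by omega, fun h => absurd h e⟩

theorem n2 (h : MinT T) (a b c : Fin n × Bool) (hab : a.1 = b.1 → a.2 = b.2) (hbc : b.1 = c.1 → b.2 = c.2) :
    cp (sl T a)⁻¹ (sl T b) + cp (sl T b)⁻¹ (sl T c) < (sl T b).norm := by
  by_contra hc
  obtain ⟨u1, u2, u3⟩ := h.n1 a b hab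
  obtain ⟨v1, v2, v3⟩ := h.n1 b c hbc
  have hbpos := h.pos b
  have nab : a.1 ≠ b.1 := fun e => by have := u3 e; omega
  have nbc : b.1 ≠ c.1 := fun e => by
    have := v3 e
    have e2 : b = c := Prod.ext e (hbc e)
    rw [e2] at hc u2 v2 this
    omega
  set x := sl T a
  set y := sl T b
  set z := sl T c
  obtain ⟨k, hk⟩ : ∃ k, k = cp x⁻¹ y := ⟨_, rfl⟩
  have hk2 : cp y⁻¹ z = k := by omega
  have hky : y.norm = 2 * k := by omega
  obtain ⟨t1, t2, t3⟩ := cpl_take _ _ k (le_of_eq hk)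
  obtain ⟨s1, s2, s3⟩ := cpl_take _ _ k (le_of_eq hk2.symm)
  set P := y.toWord.take k with hP
  set Q := z.toWord.take k with hQ
  have lP : P.length = k := by simp [hP]; omega
  have lQ : Q.length = k := by simp [hQ]; omega
  have wy : y.toWord = P ++ FreeGroup.invRev Q := by
    have e1 : (y⁻¹).toWord = Q ++ (y⁻¹).toWord.drop k := by rw [← s1, List.take_append_drop]
    have e2 : y.toWord = FreeGroup.invRev ((y⁻¹).toWord.drop k) ++ FreeGroup.invRev Q := by
      rw [← FreeGroup.invRev_append, ← e1, FreeGroup.toWord_inv, FreeGroup.invRev_invRev]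
    have hl : (FreeGroup.invRev ((y⁻¹).toWord.drop k)).length = k := by
      have : (y⁻¹).toWord.length = 2 * k := by rw [← hky, ← FreeGroup.norm_inv_eq (x := y)]; rfl
      rw [FreeGroup.invRev_length, List.length_drop, this]; omega
    have : P = FreeGroup.invRev ((y⁻¹).toWord.drop k) := by
      rw [hP]; nth_rewrite 1 [e2]; rw [List.take_left' hl]
    rw [this]; exact e2
  have wyi : (y⁻¹).toWord = Q ++ FreeGroup.invRev P := by
    rw [FreeGroup.toWord_inv, wy, FreeGroup.invRev_append, FreeGroup.invRev_invRev]
  have wz : z.toWord = Q ++ z.toWord.drop k := by rw [hQ, List.take_append_drop]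
  have wx : (x⁻¹).toWord = P ++ (x⁻¹).toWord.drop k := by rw [← t1, List.take_append_drop]
  have nyz : (y * z).norm = z.norm := by
    have := norm_inv_mul y⁻¹ z
    rw [inv_inv, FreeGroup.norm_inv_eq] at this
    omega
  have nyx : (x * y).norm = x.norm := by
    have := norm_inv_mul x⁻¹ y
    rw [inv_inv, FreeGroup.norm_inv_eq] at this
    omega
  rcases lt_trichotomy (wval P) (wval Q) with hv | hv | hv
  · have := rk_lt y z P Q _ wy wz (by omega) (by omega) nyz hv
    exact absurd (h.m2l c b (Ne.symm nbc) nyz) (not_le.2 this)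
  · have := wval_inj (by omega) hv
    rw [this] at wy
    have : y = 1 := by
      rw [← FreeGroup.mk_toWord (x := y), wy, ← FreeGroup.mul_mk, ← FreeGroup.inv_mk,
        mul_inv_cancel]
    exact h.sl_ne b this
  · have := rk_lt y⁻¹ x⁻¹ Q P _ wyi wx (by omega) (by rw [FreeGroup.norm_inv_eq]; omega)
      (by rw [← mul_inv_rev, FreeGroup.norm_inv_eq, FreeGroup.norm_inv_eq]; exact nyx) hv
    rw [← mul_inv_rev, rk_inv, rk_inv] at this
    exact absurd (h.m2 a b nab nyx) (not_le.2 this)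

theorem growth (h : MinT T) (L : List (Fin n × Bool)) : ∀ a, FreeGroup.IsReduced (L ++ [a]) →
    ∃ r, r ≤ cp ((L ++ [a]).map (sl T)).prod⁻¹ (sl T a)⁻¹ ∧
      L.length + r ≤ ((L ++ [a]).map (sl T)).prod.norm ∧
      ∀ b : Fin n × Bool, (a.1 = b.1 → a.2 = b.2) → cp (sl T a)⁻¹ (sl T b) < r := by
  induction L using List.reverseRecOn with
  | nil =>
    intro a _
    refine ⟨(sl T a).norm, ?_, by simp, ?_⟩
    · simp [cp_refl, FreeGroup.norm_inv_eq]
    · intro b hb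
      have := h.n1 a b hb
      have := h.pos a
      omega
  | append_singleton L a ih =>
    intro b hr
    obtain ⟨r, h1, h2, h3⟩ := ih a (hr.infix ⟨[], [b], by simp⟩)
    have hab : a.1 = b.1 → a.2 = b.2 := by
      have : FreeGroup.IsReduced ([a, b]) := hr.infix ⟨L, [], by simp⟩
      simpa [FreeGroup.IsReduced] using this
    rw [List.map_append, List.prod_append]
    set w := ((L ++ [a]).map (sl T)).prod
    simp only [List.map_cons, List.map_nil, List.prod_singleton, List.length_append,
      List.length_singleton]
    have hc := h3 b hab
    have q1 := cp_ultra w⁻¹ (sl T a)⁻¹ (sl T b)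
    have q2 := cp_ultra (sl T a)⁻¹ w⁻¹ (sl T b)
    rw [cp_comm (sl T a)⁻¹ w⁻¹] at q2
    have q3 := norm_inv_mul w⁻¹ (sl T b)
    have q4 := norm_inv_mul (w * sl T b)⁻¹ (sl T b)⁻¹
    rw [inv_inv, FreeGroup.norm_inv_eq] at q3
    rw [inv_inv, mul_inv_cancel_right, FreeGroup.norm_inv_eq, FreeGroup.norm_inv_eq] at q4
    obtain ⟨p1, p2, -⟩ := h.n1 a b hab
    refine ⟨(sl T b).norm - cp (sl T a)⁻¹ (sl T b), by omega, by omega, ?_⟩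
    intro d hd
    have := h.n2 a b d hab hd
    omega

theorem length_le (h : MinT T) (w : FreeGroup (Fin n)) : w.norm ≤ (FreeGroup.lift T w).norm := by
  have e : FreeGroup.lift T w = (w.toWord.map (sl T)).prod := by
    conv_lhs => rw [← FreeGroup.mk_toWord (x := w)]
    rfl
  rw [e]
  have hr : FreeGroup.IsReduced w.toWord := FreeGroup.isReduced_toWord
  change w.toWord.length ≤ _
  rcases List.eq_nil_or_concat w.toWord with h0 | ⟨L, a, h0⟩
  · simp [h0]
  · rw [List.concat_eq_append] at h0
    rw [h0] at hr ⊢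
    obtain ⟨r, h1, h2, h3⟩ := h.growth L a hr
    have := h3 a (fun _ => rfl)
    simp only [List.length_append, List.length_singleton]
    omega

end MinT
end Nielsen2
end Orb

namespace Orb
section Nielsen3

theorem NE_single {G : Type*} [Group G] {n : ℕ} {T T' : Fin n → G} (h : NielsenStep T T') :
    NielsenEquiv T T' := Relation.ReflTransGen.single h

theorem NE_trans {G : Type*} [Group G] {n : ℕ} {T T' T'' : Fin n → G} (h : NielsenEquiv T T')
    (h' : NielsenEquiv T' T'') : NielsenEquiv T T'' := Relation.ReflTransGen.trans h h'

theorem NE_map {G H : Type*} [Group G] [Group H] (f : G →* H) {n : ℕ} {T T' : Fin n → G}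
    (h : NielsenEquiv T T') : NielsenEquiv (f ∘ T) (f ∘ T') := by
  induction h with
  | refl => exact Relation.ReflTransGen.refl
  | tail _ hs ih =>
    refine NE_trans ih (NE_single ?_)
    cases hs with
    | inv i => rw [Function.comp_update, map_inv]; exact NielsenStep.inv (f ∘ _) i
    | swap i j hij => exact NielsenStep.swap (f ∘ _) i j hij
    | mul i j hij => rw [Function.comp_update, map_mul]; exact NielsenStep.mul (f ∘ _) i j hij

theorem NE_mulr {G : Type*} [Group G] {n : ℕ} (T : Fin n → G) (i j : Fin n) (hij : i ≠ j)
    (c : Bool) : NielsenEquiv T (Function.update T i (T i * sl T (j, c))) := by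
  cases c with
  | true => exact NE_single (NielsenStep.mul T i j hij)
  | false =>
    have s1 := NE_single (NielsenStep.inv T j)
    have s2 := NE_single (NielsenStep.mul (Function.update T j (T j)⁻¹) i j hij)
    have s3 := NE_single (NielsenStep.inv (Function.update (Function.update T j (T j)⁻¹) i
      (Function.update T j (T j)⁻¹ i * Function.update T j (T j)⁻¹ j)) j)
    have := NE_trans s1 (NE_trans s2 s3)
    convert this using 1
    funext k
    by_cases h1 : k = i
    · subst h1; simp [hij, sl]
    · by_cases h2 : k = j
      · subst h2; simp [h1]
      · simp [h1, h2]

theorem NE_move {G : Type*} [Group G] {n : ℕ} (T : Fin n → G) (a b : Fin n × Bool)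
    (hij : a.1 ≠ b.1) : ∃ T', NielsenEquiv T T' ∧ (∀ k, k ≠ a.1 → T' k = T k) ∧
      T' a.1 = sl T a * sl T b := by
  rcases a with ⟨i, c⟩
  rcases b with ⟨j, d⟩
  simp only at hij ⊢
  cases c with
  | true =>
    exact ⟨_, NE_mulr T i j hij d, fun k hk => by simp [hk], by simp [sl]⟩
  | false =>
    refine ⟨_, NE_trans (NE_single (NielsenStep.inv T i)) (NE_mulr _ i j hij d),
      fun k hk => by simp [hk], ?_⟩
    simp [sl, Ne.symm hij]

theorem sum_change {G : Type*} {n : ℕ} (f : G → ℕ) (T T' : Fin n → G) (i : Fin n)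
    (h : ∀ k, k ≠ i → T' k = T k) : ∑ k, f (T' k) + f (T i) = ∑ k, f (T k) + f (T' i) := by
  rw [← Finset.sum_erase_add _ _ (Finset.mem_univ i), ← Finset.sum_erase_add (f := fun k => f (T k))
    _ (Finset.mem_univ i)]
  have : ∑ x ∈ Finset.univ.erase i, f (T' x) = ∑ x ∈ Finset.univ.erase i, f (T x) :=
    Finset.sum_congr rfl fun x hx => by rw [h x (Finset.ne_of_mem_erase hx)]
  omega

variable {A : Type} [DecidableEq A] [Fintype A] {n : ℕ}

theorem exists_min (T : Fin n → FreeGroup A) : ∃ T', NielsenEquiv T T' ∧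
    ((∃ i, T' i = 1) ∨ MinT T') := by
  obtain ⟨T1, h1, m1⟩ := (measure fun S : Fin n → FreeGroup A => ∑ k, (S k).norm).wf.has_min
    {S | NielsenEquiv T S} ⟨T, Relation.ReflTransGen.refl⟩
  obtain ⟨T2, ⟨h2, e2⟩, m2⟩ := (measure fun S : Fin n → FreeGroup A => ∑ k, rk (S k)).wf.has_min
    {S | NielsenEquiv T S ∧ ∑ k, (S k).norm = ∑ k, (T1 k).norm} ⟨T1, h1, rfl⟩
  simp only [Set.mem_ofPred_eq, InvImage, WellFoundedRelation.rel, not_lt] at m1 m2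
  refine ⟨T2, h2, ?_⟩
  by_cases hne : ∃ i, T2 i = 1
  · exact Or.inl hne
  push Not at hne
  refine Or.inr ⟨hne, ?_, ?_⟩
  · intro a b hab
    obtain ⟨T', q1, q2, q3⟩ := NE_move T2 a b hab
    have := m1 T' (NE_trans h2 q1)
    have s := sum_change FreeGroup.norm T2 T' a.1 q2
    have e : (sl T2 a).norm = (T2 a.1).norm := by
      rcases a with ⟨i, b⟩; cases b <;> simp [sl]
    rw [← q3, e]
    omega
  · intro a b hab hn
    obtain ⟨T', q1, q2, q3⟩ := NE_move T2 a b hab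
    have s := sum_change FreeGroup.norm T2 T' a.1 q2
    have s' := sum_change rk T2 T' a.1 q2
    have e : (sl T2 a).norm = (T2 a.1).norm := by
      rcases a with ⟨i, b⟩; cases b <;> simp [sl]
    have e' : rk (sl T2 a) = rk (T2 a.1) := by
      rcases a with ⟨i, b⟩; cases b <;> simp [sl, rk_inv]
    rw [← q3, e] at hn
    have := m2 T' ⟨NE_trans h2 q1, by omega⟩
    rw [← q3, e']
    omega

theorem NE_perm {G : Type*} [Group G] {n : ℕ} (T : Fin n → G) (σ : Equiv.Perm (Fin n)) :
    NielsenEquiv T (T ∘ σ) := by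
  induction σ using Equiv.Perm.swap_induction_on' with
  | one => exact Relation.ReflTransGen.refl
  | mul_swap f x y hxy ih =>
    refine NE_trans ih ?_
    have := NE_single (NielsenStep.swap (T ∘ f) x y hxy)
    exact this

theorem NE_signs {G : Type*} [Group G] {n : ℕ} (T U : Fin n → G) (s : Finset (Fin n)) :
    (∀ i ∈ s, T i = U i ∨ T i = (U i)⁻¹) → (∀ i ∉ s, T i = U i) → NielsenEquiv T U := by
  induction s using Finset.induction_on generalizing T with
  | empty =>
    intro _ h
    have : T = U := funext fun i => h i (by simp)
    rw [this]; exact Relation.ReflTransGen.refl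
  | insert a s ha ih =>
    intro h1 h2
    rcases h1 a (Finset.mem_insert_self _ _) with h | h
    · refine ih T (fun i hi => h1 i (Finset.mem_insert_of_mem hi)) fun i hi => ?_
      by_cases e : i = a
      · rw [e, h]
      · exact h2 i (by simp [e, hi])
    · refine NE_trans (NE_single (NielsenStep.inv T a)) (ih _ (fun i hi => ?_) fun i hi => ?_)
      · have : i ≠ a := fun e => ha (e ▸ hi)
        simpa [this] using h1 i (Finset.mem_insert_of_mem hi)
      · by_cases e : i = a
        · subst e; simp [h]
        · simpa [e] using h2 i (by simp [e, hi])

theorem nielsen_free {m n : ℕ} (T : Fin n → FreeGroup (Fin m))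
    (hT : Subgroup.closure (Set.range T) = ⊤) :
    (∃ T', NielsenEquiv T T' ∧ ∃ i, T' i = 1) ∨
      ∃ hn : n = m, NielsenEquiv T (fun i => FreeGroup.of (Fin.cast hn i)) := by
  obtain ⟨T1, h1, h2 | h2⟩ := exists_min T
  · exact Or.inl ⟨T1, h1, h2⟩
  right
  -- generation is preserved
  have hgen : ∀ S, NielsenEquiv T S → Subgroup.closure (Set.range S) = ⊤ := by
    intro S hS
    induction hS with
    | refl => exact hT
    | @tail T _ _ hs ih =>
      rw [eq_top_iff, ← ih, Subgroup.closure_le]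
      rintro _ ⟨k, rfl⟩
      cases hs with
      | inv i =>
        by_cases e : k = i
        · subst e
          have : Function.update T k (T k)⁻¹ k ∈
              Subgroup.closure (Set.range (Function.update T k (T k)⁻¹)) :=
            Subgroup.subset_closure ⟨k, rfl⟩
          rw [Function.update_self] at this
          simpa using this
        · exact Subgroup.subset_closure ⟨k, by simp [e]⟩
      | swap i j hij => exact Subgroup.subset_closure ⟨Equiv.swap i j k, by simp⟩
      | mul i j hij =>
        have hj : T j ∈ Subgroup.closure (Set.range (Function.update T i (T i * T j))) :=
          Subgroup.subset_closure ⟨j, by simp [Ne.symm hij]⟩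
        by_cases e : k = i
        · subst e
          have : Function.update T k (T k * T j) k ∈
              Subgroup.closure (Set.range (Function.update T k (T k * T j))) :=
            Subgroup.subset_closure ⟨k, rfl⟩
          rw [Function.update_self] at this
          simpa using mul_mem this (inv_mem hj)
        · exact Subgroup.subset_closure ⟨k, by simp [e]⟩
  have hs : Function.Surjective (FreeGroup.lift T1) := by
    rw [← MonoidHom.range_eq_top, FreeGroup.range_lift_eq_closure]
    exact hgen T1 h1
  have hi : Function.Injective (FreeGroup.lift T1) := by
    rw [injective_iff_map_eq_one]
    intro w hw
    have := h2.length_le w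
    rw [hw, FreeGroup.norm_one] at this
    exact FreeGroup.norm_eq_zero.1 (by omega)
  have hn : n = m := by
    have e := Equiv.ofFreeGroupEquiv (MulEquiv.ofBijective (FreeGroup.lift T1) ⟨hi, hs⟩)
    simpa using Fintype.card_congr e
  subst hn
  refine ⟨rfl, ?_⟩
  have hx : ∀ k : Fin n, ∃ i : Fin n, T1 i = FreeGroup.of k ∨ T1 i = (FreeGroup.of k)⁻¹ := by
    intro k
    obtain ⟨w, hw⟩ := hs (FreeGroup.of k)
    have hl := h2.length_le w
    rw [hw, FreeGroup.norm_of] at hl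
    have e : FreeGroup.lift T1 w = (w.toWord.map (sl T1)).prod := by
      conv_lhs => rw [← FreeGroup.mk_toWord (x := w)]
      rfl
    rw [hw] at e
    have hl' : w.toWord.length ≤ 1 := hl
    match hww : w.toWord with
    | [] =>
      rw [hww] at e
      exact absurd e (by simp)
    | [a] =>
      rw [hww] at e
      simp only [List.map_cons, List.map_nil, List.prod_singleton] at e
      refine ⟨a.1, ?_⟩
      rcases a with ⟨i, b⟩
      cases b with
      | true => left; simpa [sl] using e.symm
      | false => right; rw [e]; simp [sl]
    | a :: b :: l => rw [hww] at hl'; simp at hl'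
  choose σ hσ using hx
  have σi : Function.Injective σ := by
    intro k l hkl
    have h1 := hσ k
    have h2 := hσ l
    rw [← hkl] at h2
    by_contra hne
    have hab : ∀ x y : FreeGroup (Fin n), x = y → FreeGroup.lift (fun q : Fin n =>
      (Multiplicative.ofAdd (if q = k then (1 : ℤ) else 0))) x = FreeGroup.lift (fun q : Fin n =>
      (Multiplicative.ofAdd (if q = k then (1 : ℤ) else 0))) y := fun x y e => by rw [e]
    rcases h1 with h1 | h1 <;> rcases h2 with h2 | h2 <;>
    · have := hab _ _ (h1.symm.trans h2)
      have hne' : l ≠ k := fun e => hne e.symm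
      simp [hne'] at this
  have σb : Function.Bijective σ := Finite.injective_iff_bijective.1 σi
  refine NE_trans h1 (NE_trans (NE_perm T1 (Equiv.ofBijective σ σb)) ?_)
  refine NE_signs _ _ Finset.univ (fun i _ => ?_) (fun i hi => absurd (Finset.mem_univ i) hi)
  exact hσ i

theorem reducible_of_one {G : Type*} [Group G] {n : ℕ} (T T' : Fin n → G)
    (h : NielsenEquiv T T') (i : Fin n) (hi : T' i = 1) : Reducible T := by
  have hn : 0 < n := i.pos
  refine ⟨hn, _, NE_trans h (NE_perm T' (Equiv.swap i ⟨n - 1, by omega⟩)), ?_⟩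
  simp [hi]

end Nielsen3
end Orb

namespace Orb
section Final
variable (p q : ℕ)

/-- The cyclic boundary word of the orbifold. -/
def RR (hp : 1 ≤ p) [NeZero (2 * p + (q + 1))] (i : ZMod (2 * p + (q + 1))) : Fin p ⊕ Fin (q + 1) :=
  if h : i.val < 2 * p then Sum.inl ⟨i.val / 2, by omega⟩
  else Sum.inr ⟨i.val - 2 * p, by have := ZMod.val_lt i; omega⟩

variable (hp : 1 ≤ p) [NeZero (2 * p + (q + 1))]

theorem RR_eq_inl (i : ZMod (2 * p + (q + 1))) (k : Fin p) :
    RR p q hp i = Sum.inl k ↔ i.val = 2 * k ∨ i.val = 2 * k + 1 := by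
  unfold RR
  have := k.isLt
  split_ifs with h
  · simp [Fin.ext_iff]; omega
  · simp; omega

theorem RR_eq_inr (i : ZMod (2 * p + (q + 1))) (k : Fin (q + 1)) :
    RR p q hp i = Sum.inr k ↔ i.val = 2 * p + k := by
  unfold RR
  split_ifs with h
  · simp; omega
  · simp [Fin.ext_iff]; omega

theorem prod_sq {M : Type*} [Monoid M] (g : ℕ → M) (k : ℕ) :
    ((List.range (2 * k)).map fun j => g (j / 2)).prod = ((List.range k).map fun j => g j ^ 2).prod := by
  induction k with
  | zero => simp
  | succ k ih =>
    rw [show 2 * (k + 1) = 2 * k + 1 + 1 from by ring, List.range_succ, List.range_succ]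
    simp only [List.map_append, List.prod_append, List.map_cons, List.map_nil, List.prod_singleton, ih]
    rw [List.range_succ, show 2 * k / 2 = k by omega, show (2 * k + 1) / 2 = k by omega]
    simp [pow_two, mul_assoc]

theorem cyc_RR {M : Type} [Group M] (f : Fin p ⊕ Fin (q + 1) → M) :
    cyc (fun i => f (RR p q hp i)) 0 =
      (List.ofFn fun j : Fin p => f (Sum.inl j) ^ 2).prod *
        (List.ofFn fun i : Fin (q + 1) => f (Sum.inr i)).prod := by
  have e1 : (List.ofFn fun j : Fin p => f (Sum.inl j) ^ 2) =
      (List.range p).map (fun j => (if h : j < p then f (Sum.inl ⟨j, h⟩) else 1) ^ 2) := by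
    apply List.ext_getElem
    · simp
    · intro i h1 h2
      have : i < p := by simpa using h1
      simp [this]
  have e2 : (List.ofFn fun j : Fin (q + 1) => f (Sum.inr j)) =
      (List.range (q + 1)).map (fun j => f (RR p q hp ((2 * p + j : ℕ) : ZMod _))) := by
    apply List.ext_getElem
    · simp
    · intro i h1 h2
      have : i < q + 1 := by simpa using h1
      rw [List.getElem_ofFn, List.getElem_map, List.getElem_range]
      congr 1
      symm
      rw [RR_eq_inr, ZMod.val_natCast, Nat.mod_eq_of_lt (by omega)]
  rw [e1, e2, ← prod_sq (fun j => if h : j < p then f (Sum.inl ⟨j, h⟩) else 1), cyc, List.range_add,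
    List.map_append, List.prod_append, List.map_map]
  congr 1
  · congr 1
    apply List.map_congr_left
    intro j hj
    have hj' : j < 2 * p := by simpa using hj
    have hlt : j / 2 < p := by omega
    simp only [hlt, dif_pos, zero_add]
    congr 1
    rw [RR_eq_inl, ZMod.val_natCast, Nat.mod_eq_of_lt (by omega)]
    simp; omega
  · simp [Function.comp_def]

/-- holonomy group -/
abbrev GG := PresentedGroup (coneRelsN p (q + 1))

def WW : FreeGroup (Fin (p + q)) :=
  (List.ofFn fun j : Fin p => (FreeGroup.of (Fin.castAdd q j)) ^ 2).prod *
    (List.ofFn fun i : Fin q => FreeGroup.of (Fin.natAdd p i)).prod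

def PSI : Fin p ⊕ Fin (q + 1) → FreeGroup (Fin (p + q))
  | Sum.inl j => FreeGroup.of (Fin.castAdd q j)
  | Sum.inr i => Fin.lastCases (motive := fun _ => FreeGroup (Fin (p + q))) (WW p q)⁻¹
      (fun i => FreeGroup.of (Fin.natAdd p i)) i

def PRF (k : Fin (p + q)) : GG p q :=
  Fin.addCases (motive := fun _ => GG p q) (fun j => PresentedGroup.of (Sum.inl j))
    (fun i => PresentedGroup.of (Sum.inr i.castSucc)) k

theorem rel_one : (List.ofFn fun j : Fin p => (PresentedGroup.of (Sum.inl j) : GG p q) ^ 2).prod *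
        (List.ofFn fun i : Fin (q + 1) => (PresentedGroup.of (Sum.inr i) : GG p q)).prod = 1 := by
  have : PresentedGroup.mk (coneRelsN p (q + 1)) (coneRelatorN p (q + 1)) = 1 :=
    PresentedGroup.one_of_mem (Or.inr rfl)
  rw [coneRelatorN, map_mul, map_list_prod, map_list_prod, List.map_ofFn, List.map_ofFn] at this
  exact this

theorem rel_last : (PresentedGroup.of (Sum.inr (Fin.last q)) : GG p q) =
    FreeGroup.lift (PRF p q) (WW p q)⁻¹ := by
  have h := rel_one p q
  rw [List.ofFn_succ', List.concat_eq_append, List.prod_append, List.prod_singleton,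
    ← mul_assoc] at h
  rw [map_inv, eq_comm, inv_eq_of_mul_eq_one_right]
  rw [← h, WW, map_mul, map_list_prod, map_list_prod, List.map_ofFn, List.map_ofFn]
  simp [Function.comp_def, PRF]

noncomputable def DD : Dat (Fin p ⊕ Fin (q + 1)) (GG p q) (FreeGroup (Fin (p + q))) (2 * p + (q + 1)) where
  R := RR p q hp
  S := fun x => ∃ k, x = Sum.inr k
  hol := PresentedGroup.of
  psi := PSI p q
  pr := FreeGroup.lift (PRF p q)
  hS := by
    rintro i j ⟨k, hk⟩ h
    rw [hk] at h
    rw [RR_eq_inr] at h hk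
    exact ZMod.val_injective _ (h.trans hk.symm)
  hA := by
    intro i h
    obtain ⟨k, hk⟩ : ∃ k, RR p q hp i = Sum.inl k := by
      cases e : RR p q hp i with
      | inl k => exact ⟨k, rfl⟩
      | inr k => exact absurd ⟨k, e⟩ h
    rw [hk]
    have hkl := k.isLt
    have v0 : ((2 * (k : ℕ) : ℕ) : ZMod (2 * p + (q + 1))).val = 2 * k := by
      rw [ZMod.val_natCast, Nat.mod_eq_of_lt (by omega)]
    have v1 : (((2 * (k : ℕ) : ℕ) : ZMod (2 * p + (q + 1))) + 1).val = 2 * k + 1 := by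
      rw [← Nat.cast_succ, ZMod.val_natCast, Nat.mod_eq_of_lt (by omega)]
    refine ⟨((2 * (k : ℕ) : ℕ) : ZMod _), ?_, ?_, ?_⟩
    · rw [RR_eq_inl]; exact Or.inl v0
    · rw [RR_eq_inl]; exact Or.inr v1
    · intro j hj
      rw [RR_eq_inl] at hj
      rcases hj with hj | hj
      · exact Or.inl (ZMod.val_injective _ (hj.trans v0.symm))
      · exact Or.inr (ZMod.val_injective _ (hj.trans v1.symm))
  hex := ⟨((2 * p : ℕ) : ZMod _), 0, by
    rw [RR_eq_inr, ZMod.val_natCast, Nat.mod_eq_of_lt (by omega)]; simp⟩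
  hall := by
    rintro (k | k)
    · refine ⟨((2 * (k : ℕ) : ℕ) : ZMod _), ?_⟩
      have hkl := k.isLt
      rw [RR_eq_inl, ZMod.val_natCast, Nat.mod_eq_of_lt (by omega)]
      exact Or.inl rfl
    · refine ⟨((2 * p + (k : ℕ) : ℕ) : ZMod _), ?_⟩
      have hkl := k.isLt
      rw [RR_eq_inr, ZMod.val_natCast, Nat.mod_eq_of_lt (by omega)]
  h10 := by
    haveI : Fact (1 < 2 * p + (q + 1)) := ⟨by omega⟩
    exact one_ne_zero
  hol_sq := by
    rintro x ⟨k, rfl⟩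
    have : PresentedGroup.mk (coneRelsN p (q + 1)) (FreeGroup.of (Sum.inr k) ^ 2) = 1 :=
      PresentedGroup.one_of_mem (Or.inl ⟨k, rfl⟩)
    rw [pow_two, map_mul] at this
    exact this
  hN := by
    intro w hw
    have e : FreeGroup.lift (PresentedGroup.of (rels := coneRelsN p (q + 1))) =
        PresentedGroup.mk (coneRelsN p (q + 1)) := by
      ext x; simp [PresentedGroup.of]
    rw [e] at hw
    have h2 : w ∈ Subgroup.normalClosure (coneRelsN p (q + 1)) := PresentedGroup.mk_eq_one_iff.1 hw
    refine Subgroup.normalClosure_mono ?_ h2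
    rintro v (⟨i, rfl⟩ | rfl)
    · exact Or.inl ⟨Sum.inr i, ⟨i, rfl⟩, pow_two _⟩
    · right
      rw [Set.mem_singleton_iff, cyc_RR p q hp (fun x => FreeGroup.of x)]
      rfl
  hol_cyc := by
    rw [cyc_RR p q hp]; exact rel_one p q
  pr_psi := by
    rintro (k | k)
    · simp [PSI, PRF]
    · refine Fin.lastCases ?_ (fun k => ?_) k
      · rw [rel_last]; simp [PSI]
      · simp [PSI, PRF]
  psi_cyc := by
    rw [cyc_RR p q hp, List.ofFn_succ', List.concat_eq_append, List.prod_append,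
      List.prod_singleton, ← mul_assoc]
    simp only [PSI, Fin.lastCases_last, Fin.lastCases_castSucc]
    exact mul_inv_cancel (WW p q)
  psi_gen := by
    rw [eq_top_iff, ← FreeGroup.closure_range_of, Subgroup.closure_le]
    rintro _ ⟨k, rfl⟩
    refine Fin.addCases (fun j => ?_) (fun j => ?_) k
    · exact Subgroup.subset_closure ⟨Sum.inl j, rfl⟩
    · exact Subgroup.subset_closure ⟨Sum.inr j.castSucc, by simp [PSI]⟩

end Final
end Orb

theorem nielsen_nonorientable_orbifold_order_two (p r : ℕ) (hp : 1 ≤ p) (hr : 1 ≤ r)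
    (hlarge : 2 ≤ p ∨ 2 ≤ r) {n : ℕ}
    (T : Fin n → PresentedGroup (coneRelsN p r))
    (hT : Subgroup.closure (Set.range T) = ⊤) :
    Reducible T ∨
    ∃ (hn : n = p + r - 1) (i : Fin r),
      NielsenEquiv T (fun j : Fin n =>
        if hj : (j : ℕ) < p then
          PresentedGroup.of (Sum.inl (⟨(j : ℕ), hj⟩ : Fin p))
        else
          PresentedGroup.of (Sum.inr
            (if _hlt : (j : ℕ) - p < (i : ℕ) then
              (⟨(j : ℕ) - p, by have := i.isLt; omega⟩ : Fin r)
            else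
              (⟨(j : ℕ) - p + 1, by have := j.isLt; omega⟩ : Fin r)))) := by
  obtain ⟨q, rfl⟩ : ∃ q, r = q + 1 := ⟨r - 1, by omega⟩
  haveI : NeZero (2 * p + (q + 1)) := ⟨by omega⟩
  have hs : Function.Surjective (FreeGroup.lift (Orb.DD p q hp).hol) := by
    rw [← MonoidHom.range_eq_top, FreeGroup.range_lift_eq_closure]
    exact PresentedGroup.closure_range_of _
  obtain ⟨t, ht, htg⟩ := Orb.lift_tuple hs T hT
  have hTt : T = (Orb.DD p q hp).pr ∘ t := funext fun i => (ht i).symm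
  rcases Orb.nielsen_free t htg with ⟨t', h1, i, hi⟩ | ⟨hn, h1⟩
  · left
    have := Orb.NE_map (Orb.DD p q hp).pr h1
    rw [← hTt] at this
    exact Orb.reducible_of_one _ _ this i (by simp [hi])
  · right
    refine ⟨by omega, Fin.last q, ?_⟩
    subst hn
    have := Orb.NE_map (Orb.DD p q hp).pr h1
    rw [← hTt] at this
    convert this using 1
    funext j
    refine Fin.addCases (fun k => ?_) (fun k => ?_) j
    · simp [Orb.DD, Orb.PRF]
    · simp [Orb.DD, Orb.PRF]
      rfl
end

section
/- Let A and B be finitely generated groups and let G = A ∗ B be their free product. Then rk(G) = rk(A) + rk(B), where rk(H) denotes the rank of a finitely generated group H, i.e. the smallest number of elements in a generating set of H. -/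
namespace GrushkoRank

open Equiv

universe u v w

/-- A map `f : E → X` into an `A`-set realizes the labelled arrows in `L`. -/
def Sat {E : Type} {A : Type u} {X : Type w} [Group A] (φ : A →* Perm X)
    (L : Multiset (E × A × E)) (f : E → X) : Prop :=
  ∀ t ∈ L, φ t.2.1 (f t.1) = f t.2.2

/-- Every realization of the labelled graph is constant with value a common fixed point. -/
def Good (A : Type u) (B : Type v) [Group A] [Group B] (E : Type) (LA : Multiset (E × A × E))
    (LB : Multiset (E × B × E)) : Prop :=
  ∀ (X : Type (max u v)) (φ : A →* Perm X) (ψ : B →* Perm X) (f : E → X),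
    Sat φ LA f → Sat ψ LB f →
    (∀ a x, φ a (f x) = f x) ∧ (∀ b x, ψ b (f x) = f x) ∧ ∀ x y, f x = f y

theorem Good.symm {A : Type u} {B : Type v} [Group A] [Group B] {E : Type}
    {LA : Multiset (E × A × E)} {LB : Multiset (E × B × E)} (h : Good A B E LA LB) :
    Good.{v, u} B A E LB LA := fun X φ ψ f h1 h2 =>
  let ⟨p, q, r⟩ := h X ψ φ f h2 h1
  ⟨q, p, r⟩

theorem exists_arrow {A : Type u} [Group A] {E : Type} {LA : Multiset (E × A × E)} {e e' : E}
    (hne : e ≠ e')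
    (hent : ∀ (Y : Type w) (φ : A →* Perm Y) (h : E → Y), Sat φ LA h → h e = h e') :
    ∃ t ∈ LA, ∃ z ≠ e, ∃ d : A, ∀ (Y : Type w) (φ : A →* Perm Y) (h : E → Y),
      h e = φ d (h z) → φ t.2.1 (h t.1) = h t.2.2 := by
  classical
  by_contra hcon
  have key : ∀ t ∈ LA, (t.1 = e ↔ t.2.2 = e) := by
    rintro ⟨x, c, y⟩ ht
    by_contra hxy
    apply hcon
    by_cases hx : x = e
    · have hy : y ≠ e := fun hy => hxy (by simp [hx, hy])
      refine ⟨_, ht, y, hy, c⁻¹, fun Y φ h hh => ?_⟩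
      subst hx
      simp [hh]
    · have hy : y = e := by
        by_contra hy
        exact hxy (by simp [hx, hy])
      refine ⟨_, ht, x, hx, c, fun Y φ h hh => ?_⟩
      subst hy
      simp [hh]
  have := hent (ULift.{w} Bool) 1 (fun x => ⟨decide (x = e)⟩) (by
    intro t ht
    have := key t ht
    simp [this])
  simp [hne.symm] at this

theorem fold {A : Type u} {B : Type v} [Group A] [Group B] {E : Type}
    {LA : Multiset (E × A × E)} {LB : Multiset (E × B × E)} (hG : Good A B E LA LB) {e e' : E}
    (hne : e ≠ e')
    (hent : ∀ (Y : Type (max u v)) (φ : A →* Perm Y) (h : E → Y), Sat φ LA h → h e = h e') :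
    ∃ (LA' : Multiset ({x : E // x ≠ e} × A × {x : E // x ≠ e}))
      (LB' : Multiset ({x : E // x ≠ e} × B × {x : E // x ≠ e})),
      LA'.card + 1 = LA.card ∧ LB'.card = LB.card ∧ Good A B {x : E // x ≠ e} LA' LB' := by
  classical
  obtain ⟨t, ht, z, hz, d, htd⟩ := exists_arrow hne hent
  obtain ⟨L, rfl⟩ := Multiset.exists_cons_of_mem ht
  let r : E → {x : E // x ≠ e} := fun x => if hx : x = e then ⟨z, hz⟩ else ⟨x, hx⟩
  let δ : E → A := fun x => if x = e then d else 1
  let ρ : E → {x : E // x ≠ e} := fun x => if hx : x = e then ⟨e', hne.symm⟩ else ⟨x, hx⟩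
  refine ⟨L.map (fun s => (r s.1, (δ s.2.2)⁻¹ * s.2.1 * δ s.1, r s.2.2)),
    LB.map (fun s => (ρ s.1, s.2.1, ρ s.2.2)), by simp, by simp, ?_⟩
  intro X φ ψ f hA hB
  let h : E → X := fun x => φ (δ x) (f (r x))
  have hsub : ∀ x : {x : E // x ≠ e}, h x.1 = f x := by
    rintro ⟨x, hx⟩
    simp [h, δ, r, hx]
  have hSA : Sat φ (t ::ₘ L) h := by
    intro s hs
    rcases Multiset.mem_cons.1 hs with rfl | hs
    · apply htd
      have := hsub ⟨z, hz⟩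
      simp only at this
      rw [this]
      simp [h, δ, r]
    · have := hA _ (Multiset.mem_map_of_mem _ hs)
      simp only [h]
      simp only at this
      rw [← this]
      simp [map_mul]
  have hee : h e = h e' := hent X φ h hSA
  have hρ : ∀ x, f (ρ x) = h x := by
    intro x
    rw [← hsub]
    by_cases hx : x = e
    · subst hx
      simp [ρ, hee]
    · simp [ρ, hx]
  have hSB : Sat ψ LB h := by
    intro s hs
    have := hB _ (Multiset.mem_map_of_mem _ hs)
    simpa [hρ] using this
  obtain ⟨p, q, k⟩ := hG X φ ψ h hSA hSB
  refine ⟨fun a x => ?_, fun b x => ?_, fun x y => ?_⟩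
  · rw [← hsub]; exact p a _
  · rw [← hsub]; exact q b _
  · rw [← hsub, ← hsub]; exact k _ _

/-- The product of `A`-sets. -/
def piPerm {A : Type u} [Group A] {I : Type} (Y : I → Type w) (φ : ∀ i, A →* Perm (Y i)) :
    A →* Perm (∀ i, Y i) where
  toFun a := Equiv.piCongrRight fun i => φ i a
  map_one' := by ext; simp
  map_mul' := by intros; ext; simp

theorem exists_injective {A : Type u} [Group A] {E : Type} {LA : Multiset (E × A × E)}
    (hno : ∀ e e' : E, e ≠ e' → ¬ ∀ (Y : Type w) (φ : A →* Perm Y) (h : E → Y),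
      Sat φ LA h → h e = h e') :
    ∃ (Y : Type w) (φ : A →* Perm Y) (h : E → Y), Sat φ LA h ∧ Function.Injective h := by
  have : ∀ i : {p : E × E // p.1 ≠ p.2}, ∃ (Y : Type w) (φ : A →* Perm Y) (h : E → Y),
      Sat φ LA h ∧ h i.1.1 ≠ h i.1.2 := by
    intro i
    have := hno _ _ i.2
    push Not at this
    exact this
  choose Y φ h hs hn using this
  refine ⟨∀ i, Y i, piPerm Y φ, fun e i => h i e, ?_, ?_⟩
  · intro t ht
    funext i
    exact hs i t ht
  · intro x y hxy
    by_contra hne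
    exact hn ⟨(x, y), hne⟩ (congrFun hxy ⟨(x, y), hne⟩)

theorem exists_entail {A : Type u} {B : Type v} [Group A] [Group B] {E : Type} [Finite E]
    {LA : Multiset (E × A × E)} {LB : Multiset (E × B × E)} (hG : Good A B E LA LB)
    {e₁ e₂ : E} (h12 : e₁ ≠ e₂) :
    (∃ e e' : E, e ≠ e' ∧ ∀ (Y : Type (max u v)) (φ : A →* Perm Y) (h : E → Y),
      Sat φ LA h → h e = h e') ∨
    (∃ e e' : E, e ≠ e' ∧ ∀ (Y : Type (max u v)) (φ : B →* Perm Y) (h : E → Y),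
      Sat φ LB h → h e = h e') := by
  by_contra hcon
  rw [not_or] at hcon
  obtain ⟨h1, h2⟩ := hcon
  obtain ⟨Y, φ, f, hf, hfi⟩ := exists_injective.{u, max u v} (LA := LA)
    (fun e e' hne h => h1 ⟨e, e', hne, h⟩)
  obtain ⟨Z, ψ, g, hg, hgi⟩ := exists_injective.{v, max u v} (LA := LB)
    (fun e e' hne h => h2 ⟨e, e', hne, h⟩)
  obtain ⟨n, ⟨i⟩⟩ := Finite.exists_equiv_fin E
  obtain ⟨σ, hσ⟩ : ∃ σ : Perm (Y ⊕ Z), ∀ e, σ (Sum.inr (g e)) = Sum.inl (f e) := by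
    have := (Equiv.Perm.isMultiplyPretransitive (Y ⊕ Z) n).exists_smul_eq
      (x := ⟨fun k => Sum.inr (g (i.symm k)), fun a b hab => by
        simpa using hgi (Sum.inr_injective hab)⟩)
      (y := ⟨fun k => Sum.inl (f (i.symm k)), fun a b hab => by
        simpa using hfi (Sum.inl_injective hab)⟩)
    obtain ⟨σ, hσ⟩ := this
    refine ⟨σ, fun e => ?_⟩
    have : σ (Sum.inr (g (i.symm (i e)))) = Sum.inl (f (i.symm (i e))) :=
      DFunLike.congr_fun hσ (i e)
    simpa using this
  let Φ : A →* Perm (Y ⊕ Z) := (Equiv.Perm.sumCongrHom Y Z).comp (φ.prod 1)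
  let Ψ : B →* Perm (Y ⊕ Z) := (MulAut.conj σ).toMonoidHom.comp
    ((Equiv.Perm.sumCongrHom Y Z).comp ((1 : B →* Perm Y).prod ψ))
  have hσ' : ∀ e, σ⁻¹ (Sum.inl (f e)) = Sum.inr (g e) := fun e => by
    rw [← hσ]; simp
  have := (hG (Y ⊕ Z) Φ Ψ (fun e => Sum.inl (f e)) ?_ ?_).2.2 e₁ e₂
  · exact h12 (hfi (Sum.inl_injective this))
  · intro t ht
    have := hf t ht
    simp [Φ, this]
  · intro t ht
    have := hg t ht
    simp only [Ψ, MonoidHom.comp_apply, MulEquiv.coe_toMonoidHom, MulAut.conj_apply,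
      Equiv.Perm.mul_apply, hσ']
    rw [← hσ]
    simp [this]

theorem base_left {A : Type u} {B : Type v} [Group A] [Group B] {E : Type} [Nonempty E]
    {LA : Multiset (E × A × E)} {LB : Multiset (E × B × E)} (hG : Good A B E LA LB) {a : ℕ}
    (hA : ∀ n : ℕ, (∃ T : Fin n → A, Subgroup.closure (Set.range T) = ⊤) → a ≤ n) :
    a ≤ LA.card := by
  obtain ⟨l, rfl⟩ : ∃ l : List (E × A × E), (l : Multiset _) = LA := Quot.exists_rep LA
  rw [Multiset.coe_card]
  apply hA
  let T : Fin l.length → A := fun i => (l.get i).2.1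
  refine ⟨T, ?_⟩
  let H := Subgroup.closure (Set.range T)
  let φ : A →* Perm (ULift.{v} (A ⧸ H)) := MulAction.toPermHom A _
  have := (hG _ φ 1 (fun _ => ⟨((1 : A) : A ⧸ H)⟩) ?_ ?_).1
  · rw [eq_top_iff]
    intro x _
    have h := congrArg ULift.down (this x (Classical.arbitrary E))
    have h' : ((x * 1 : A) : A ⧸ H) = ((1 : A) : A ⧸ H) := h
    rw [mul_one, eq_comm, QuotientGroup.eq] at h'
    simpa using h'
  · intro t ht
    obtain ⟨i, hi⟩ := List.mem_iff_get.1 (Multiset.mem_coe.1 ht)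
    have hm : t.2.1 ∈ H := Subgroup.subset_closure ⟨i, by simp [T, ← hi]⟩
    apply ULift.ext
    change ((t.2.1 * 1 : A) : A ⧸ H) = ((1 : A) : A ⧸ H)
    rw [mul_one, eq_comm, QuotientGroup.eq]
    simpa using hm
  · intro t _
    simp

theorem main {A : Type u} {B : Type v} [Group A] [Group B] {a b n : ℕ}
    (hA : ∀ n : ℕ, (∃ T : Fin n → A, Subgroup.closure (Set.range T) = ⊤) → a ≤ n)
    (hB : ∀ n : ℕ, (∃ T : Fin n → B, Subgroup.closure (Set.range T) = ⊤) → b ≤ n) (m : ℕ) :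
    ∀ (E : Type) [Finite E] (LA : Multiset (E × A × E)) (LB : Multiset (E × B × E)),
      Nat.card E = m + 1 → Good A B E LA LB → LA.card + LB.card = n + m → a + b ≤ n := by
  induction m with
  | zero =>
    intro E _ LA LB hE hG hc
    have : Nonempty E := (Nat.card_pos_iff.1 (by omega)).1
    have h1 := base_left hG hA
    have h2 := base_left hG.symm hB
    omega
  | succ m ih =>
    intro E _ LA LB hE hG hc
    have : Nontrivial E := Finite.one_lt_card_iff_nontrivial.1 (by omega)
    obtain ⟨e₁, e₂, h12⟩ := exists_pair_ne E
    have hcard : ∀ e : E, Nat.card {x : E // x ≠ e} = m + 1 := by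
      intro e
      classical
      have := Fintype.ofFinite E
      rw [Nat.card_eq_fintype_card] at hE ⊢
      rw [Fintype.card_subtype_compl, hE, Fintype.card_subtype_eq]
      omega
    rcases exists_entail hG h12 with ⟨e, e', hne, h⟩ | ⟨e, e', hne, h⟩
    · obtain ⟨LA', LB', h1, h2, h3⟩ := fold hG hne h
      exact ih _ LA' LB' (hcard e) h3 (by omega)
    · obtain ⟨LB', LA', h1, h2, h3⟩ := fold hG.symm hne h
      exact ih _ LA' LB' (hcard e) h3.symm (by omega)

/-- As `Good`, with additional arrows labelled in the free product. -/
def Good' (A : Type u) (B : Type v) [Group A] [Group B] (E : Type) (LA : Multiset (E × A × E))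
    (LB : Multiset (E × B × E)) (LG : Multiset (E × Monoid.Coprod A B × E)) : Prop :=
  ∀ (X : Type (max u v)) (φ : A →* Perm X) (ψ : B →* Perm X) (f : E → X),
    Sat φ LA f → Sat ψ LB f → Sat (Monoid.Coprod.lift φ ψ) LG f →
    (∀ a x, φ a (f x) = f x) ∧ (∀ b x, ψ b (f x) = f x) ∧ ∀ x y, f x = f y

/-- Move an arrow along a map of vertices. -/
def mv {E F : Type} {A : Type u} (i : E → F) (t : E × A × E) : F × A × F := (i t.1, t.2.1, i t.2.2)

theorem Sat.of_map {E F : Type} {A : Type u} {X : Type w} [Group A] {φ : A →* Perm X}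
    {L : Multiset (E × A × E)} {i : E → F} {f : F → X} (h : Sat φ (L.map (mv i)) f) :
    Sat φ L (f ∘ i) := fun t ht => h _ (Multiset.mem_map_of_mem (mv i) ht)

theorem sat_cons {E : Type} {A : Type u} {X : Type w} [Group A] {φ : A →* Perm X}
    {L : Multiset (E × A × E)} {t} {f : E → X} :
    Sat φ (t ::ₘ L) f ↔ φ t.2.1 (f t.1) = f t.2.2 ∧ Sat φ L f := by
  simp [Sat]

theorem main' {A : Type u} {B : Type v} [Group A] [Group B] {a b n : ℕ}
    (hA : ∀ n : ℕ, (∃ T : Fin n → A, Subgroup.closure (Set.range T) = ⊤) → a ≤ n)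
    (hB : ∀ n : ℕ, (∃ T : Fin n → B, Subgroup.closure (Set.range T) = ⊤) → b ≤ n) (k : ℕ) :
    ∀ (E : Type) [Finite E] [Nonempty E] (LA : Multiset (E × A × E)) (LB : Multiset (E × B × E))
      (LG : Multiset (E × Monoid.Coprod A B × E)), LG.card = k →
      Good' A B E LA LB LG → LA.card + LB.card + LG.card + 1 = n + Nat.card E → a + b ≤ n := by
  induction k with
  | zero =>
    intro E _ _ LA LB LG hk hG hc
    have hE : 0 < Nat.card E := Nat.card_pos
    rw [Multiset.card_eq_zero] at hk
    subst hk
    refine main hA hB (Nat.card E - 1) E LA LB (by omega) ?_ (by simp at hc; omega)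
    intro X φ ψ f h1 h2
    exact hG X φ ψ f h1 h2 (by intro t ht; simp at ht)
  | succ k ih =>
    suffices H : ∀ (g : Monoid.Coprod A B) (E : Type) [Finite E] [Nonempty E]
        (LA : Multiset (E × A × E)) (LB : Multiset (E × B × E))
        (LG : Multiset (E × Monoid.Coprod A B × E)) (x y : E), LG.card = k →
        Good' A B E LA LB ((x, g, y) ::ₘ LG) →
        LA.card + LB.card + LG.card + 1 + 1 = n + Nat.card E → a + b ≤ n by
      intro E _ _ LA LB LG hk hG hc
      obtain ⟨⟨x, g, y⟩, ht⟩ := Multiset.card_pos_iff_exists_mem.1 (by omega : 0 < LG.card)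
      obtain ⟨L, rfl⟩ := Multiset.exists_cons_of_mem ht
      rw [Multiset.card_cons] at hk hc
      exact H g E LA LB L x y (by omega) hG (by omega)
    intro g
    induction g using Monoid.Coprod.induction_on' with
    | one =>
      intro E _ _ LA LB LG x y hk hG hc
      refine ih E ((x, 1, y) ::ₘ LA) LB LG hk ?_ (by rw [Multiset.card_cons]; omega)
      intro X φ ψ f h1 h2 h3
      rw [sat_cons] at h1
      refine hG X φ ψ f h1.2 h2 (sat_cons.2 ⟨?_, h3⟩)
      simpa using h1.1
    | inl_mul c g IH =>
      intro E _ _ LA LB LG x y hk hG hc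
      refine IH (Option E) ((none, c, some y) ::ₘ LA.map (mv some)) (LB.map (mv some))
        (LG.map (mv some)) (some x) none (by simpa using hk) ?_ (by simp; omega)
      intro X φ ψ f h1 h2 h3
      rw [sat_cons] at h1 h3
      simp only at h1 h3
      obtain ⟨p, q, r⟩ := hG X φ ψ (f ∘ some) h1.2.of_map h2.of_map
        (sat_cons.2 ⟨by simp [h3.1, h1.1], h3.2.of_map⟩)
      have hn : f none = f (some y) := by
        rw [← (Equiv.injective (φ c)).eq_iff, h1.1]
        exact (p c y).symm
      have ho : ∀ o, f o = f (some y) := by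
        rintro (_ | o)
        · exact hn
        · exact r o y
      refine ⟨fun a o => ?_, fun a o => ?_, fun o o' => ?_⟩
      · rw [ho]; exact p a y
      · rw [ho]; exact q a y
      · rw [ho, ho o']
    | inr_mul c g IH =>
      intro E _ _ LA LB LG x y hk hG hc
      refine IH (Option E) (LA.map (mv some)) ((none, c, some y) ::ₘ LB.map (mv some))
        (LG.map (mv some)) (some x) none (by simpa using hk) ?_ (by simp; omega)
      intro X φ ψ f h1 h2 h3
      rw [sat_cons] at h2 h3
      simp only at h2 h3
      obtain ⟨p, q, r⟩ := hG X φ ψ (f ∘ some) h1.of_map h2.2.of_map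
        (sat_cons.2 ⟨by simp [h3.1, h2.1], h3.2.of_map⟩)
      have hn : f none = f (some y) := by
        rw [← (Equiv.injective (ψ c)).eq_iff, h2.1]
        exact (q c y).symm
      have ho : ∀ o, f o = f (some y) := by
        rintro (_ | o)
        · exact hn
        · exact r o y
      refine ⟨fun a o => ?_, fun a o => ?_, fun o o' => ?_⟩
      · rw [ho]; exact p a y
      · rw [ho]; exact q a y
      · rw [ho, ho o']

theorem lower {A : Type u} {B : Type v} [Group A] [Group B] {a b n : ℕ}
    (hA : ∀ n : ℕ, (∃ T : Fin n → A, Subgroup.closure (Set.range T) = ⊤) → a ≤ n)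
    (hB : ∀ n : ℕ, (∃ T : Fin n → B, Subgroup.closure (Set.range T) = ⊤) → b ≤ n)
    (T : Fin n → Monoid.Coprod A B) (hT : Subgroup.closure (Set.range T) = ⊤) : a + b ≤ n := by
  refine main' hA hB n Unit 0 0 (Finset.univ.val.map fun i : Fin n => ((), T i, ())) (by simp) ?_
    (by simp)
  intro X φ ψ f _ _ h
  have key : ∀ g, Monoid.Coprod.lift φ ψ g (f ()) = f () := by
    intro g
    have hg : g ∈ Subgroup.closure (Set.range T) := by rw [hT]; trivial
    induction hg using Subgroup.closure_induction with
    | mem x hx =>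
      obtain ⟨i, rfl⟩ := hx
      exact h ((), T i, ()) (Multiset.mem_map.2 ⟨i, by simp, rfl⟩)
    | one => simp
    | mul x y _ _ hx hy => simp [hx, hy]
    | inv x _ hx =>
      rw [map_inv, Equiv.Perm.inv_eq_iff_eq]
      exact hx.symm
  refine ⟨fun a _ => ?_, fun b _ => ?_, fun _ _ => rfl⟩
  · simpa using key (Monoid.Coprod.inl a)
  · simpa using key (Monoid.Coprod.inr b)

theorem upper {A : Type u} {B : Type v} [Group A] [Group B] {a b : ℕ}
    (S : Fin a → A) (hS : Subgroup.closure (Set.range S) = ⊤)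
    (T : Fin b → B) (hT : Subgroup.closure (Set.range T) = ⊤) :
    ∃ R : Fin (a + b) → Monoid.Coprod A B, Subgroup.closure (Set.range R) = ⊤ := by
  refine ⟨Fin.append (fun i => Monoid.Coprod.inl (S i)) (fun i => Monoid.Coprod.inr (T i)), ?_⟩
  rw [eq_top_iff, ← Monoid.Coprod.range_inl_sup_range_inr, sup_le_iff]
  constructor
  · rw [MonoidHom.range_eq_map, ← hS, MonoidHom.map_closure, Subgroup.closure_le]
    rintro _ ⟨_, ⟨i, rfl⟩, rfl⟩
    exact Subgroup.subset_closure ⟨Fin.castAdd b i, by simp⟩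
  · rw [MonoidHom.range_eq_map, ← hT, MonoidHom.map_closure, Subgroup.closure_le]
    rintro _ ⟨_, ⟨i, rfl⟩, rfl⟩
    exact Subgroup.subset_closure ⟨Fin.natAdd a i, by simp⟩

end GrushkoRank

/-- **Grushko's rank formula.** If `A` and `B` are finitely generated groups with ranks
`a` and `b` respectively (where the rank of a group is the least `n` such that the group
is generated by some `n`-tuple of its elements), then the free product `A ∗ B` has rank
`a + b`. -/
theorem rank_free_product {A B : Type*} [Group A] [Group B] (a b : ℕ)
    (hA : IsLeast {n : ℕ | ∃ T : Fin n → A, Subgroup.closure (Set.range T) = ⊤} a)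
    (hB : IsLeast {n : ℕ | ∃ T : Fin n → B, Subgroup.closure (Set.range T) = ⊤} b) :
    IsLeast {n : ℕ | ∃ T : Fin n → Monoid.Coprod A B,
      Subgroup.closure (Set.range T) = ⊤} (a + b) := by
  obtain ⟨⟨S, hS⟩, hA'⟩ := hA
  obtain ⟨⟨T, hT⟩, hB'⟩ := hB
  refine ⟨GrushkoRank.upper S hS T hT, ?_⟩
  rintro n ⟨R, hR⟩
  exact GrushkoRank.lower (fun _ h => hA' h) (fun _ h => hB' h) R hR
end

section
/- Let G be the free product of a family (C_i)_{i ∈ I} of cyclic groups. Then every subgroup H of G is isomorphic to a free product of a family of cyclic groups. -/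
universe u

open Monoid in
/-- Core of the argument: the covering-space computation. -/
theorem kurosh_core {ι : Type u} (C : ι → Type u) [∀ i, Group (C i)]
    {A : Type u} [MulAction (CoprodI C) A] (a₀ : A) (D : A → ℕ) (t : A → ι)
    (rep : ι → A → A) (w : ∀ i, A → C i) (s : A → CoprodI C)
    (hD : ∀ a, a ≠ a₀ → D (rep (t a) a) < D a)
    (hrep : ∀ i (x : C i) a, rep i ((CoprodI.of x : CoprodI C) • a) = rep i a)
    (hw : ∀ i a, (CoprodI.of (w i a) : CoprodI C) • rep i a = a)
    (hw1 : ∀ i a, rep i a = a → w i a = 1)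
    (hs0 : s a₀ = 1)
    (hs : ∀ a, a ≠ a₀ → s a = CoprodI.of (w (t a) a) * s (rep (t a) a))
    {K : Type u} [Group K] (φ : K →* CoprodI C)
    (E : ι → A → K) (σ : ∀ i, A → C i → K)
    (hE1 : ∀ i a, rep i a = a → E i a = 1)
    (hE2 : ∀ a, a ≠ a₀ → E (t a) a = 1)
    (hσm : ∀ i a x y, rep i a = a → (CoprodI.of x : CoprodI C) • a = a →
      (CoprodI.of y : CoprodI C) • a = a → σ i a (x * y) = σ i a x * σ i a y)
    (hφE : ∀ i a, φ (E i a) = (s a)⁻¹ * CoprodI.of (w i a) * s (rep i a))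
    (hφσ : ∀ i a x, rep i a = a → (CoprodI.of x : CoprodI C) • a = a →
      φ (σ i a x) = (s a)⁻¹ * CoprodI.of x * s a)
    (hgen : ∀ S : Subgroup K, (∀ i a, E i a ∈ S) →
      (∀ i a x, rep i a = a → (CoprodI.of x : CoprodI C) • a = a → σ i a x ∈ S) → S = ⊤) :
    Function.Injective φ ∧ φ.range = MulAction.stabilizer (CoprodI C) a₀ := by
  have hrr : ∀ i a, rep i (rep i a) = rep i a := fun i a => by
    conv_rhs => rw [← hw i a]
    rw [hrep]
  have hσ1 : ∀ i a, rep i a = a → σ i a 1 = 1 := fun i a h => by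
    have := hσm i a 1 1 h (by simp) (by simp)
    simpa using this
  -- stabilizer element
  have hst : ∀ i (x : C i) a, (CoprodI.of ((w i ((CoprodI.of x : CoprodI C) • a))⁻¹ * x * w i a) :
      CoprodI C) • rep i a = rep i a := fun i x a => by
    have h2 := hw i ((CoprodI.of x : CoprodI C) • a)
    rw [hrep] at h2
    rw [map_mul, map_mul, mul_smul, mul_smul, hw, map_inv, inv_smul_eq_iff, h2]
  let c : ∀ i, C i → A → K := fun i x a =>
    E i ((CoprodI.of x : CoprodI C) • a) *
      σ i (rep i a) ((w i ((CoprodI.of x : CoprodI C) • a))⁻¹ * x * w i a) * (E i a)⁻¹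
  have hc1 : ∀ i a, c i 1 a = 1 := fun i a => by
    simp [c, hσ1 _ _ (hrr i a)]
  have hcm : ∀ i x y a, c i (x * y) a = c i x ((CoprodI.of y : CoprodI C) • a) * c i y a := by
    intro i x y a
    have h1 := hst i x ((CoprodI.of y : CoprodI C) • a)
    have h2 := hst i y a
    rw [hrep] at h1
    have h3 := hσm i (rep i a) _ _ (hrr i a) h1 h2
    have e : ((w i ((CoprodI.of x : CoprodI C) • (CoprodI.of y : CoprodI C) • a))⁻¹ * x *
        w i ((CoprodI.of y : CoprodI C) • a)) *
        ((w i ((CoprodI.of y : CoprodI C) • a))⁻¹ * y * w i a) =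
        (w i ((CoprodI.of x : CoprodI C) • (CoprodI.of y : CoprodI C) • a))⁻¹ * (x * y) * w i a := by
      group
    rw [e] at h3
    simp only [c, map_mul, mul_smul, hrep, h3]
    group
  let P : CoprodI C →* Function.End (A × K) := CoprodI.lift fun i =>
    { toFun := fun x p => ((CoprodI.of x : CoprodI C) • p.1, c i x p.1 * p.2)
      map_one' := by
        funext p
        simp only [hc1, map_one, one_smul, one_mul]
        rfl
      map_mul' := fun x y => by
        funext p
        change _ = ((CoprodI.of x : CoprodI C) • ((CoprodI.of y : CoprodI C) • p.1),
          c i x ((CoprodI.of y : CoprodI C) • p.1) * (c i y p.1 * p.2))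
        simp only [hcm, map_mul, mul_smul, mul_assoc] }
  have hPof : ∀ i (x : C i) a k, P (CoprodI.of x) (a, k) =
      ((CoprodI.of x : CoprodI C) • a, c i x a * k) := fun i x a k => by
    simp only [P, CoprodI.lift_of]; rfl
  have hPmul : ∀ g h p, P (g * h) p = P g (P h p) := fun g h p => by
    rw [map_mul]; rfl
  have hPone : ∀ p, P 1 p = p := fun p => by rw [map_one]; rfl
  have hPinv : ∀ g p q, P g p = q → P g⁻¹ q = p := fun g p q h => by
    rw [← h, ← hPmul, inv_mul_cancel, hPone]
  have hP1 : ∀ g p, (P g p).1 = g • p.1 := by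
    intro g
    induction g using CoprodI.induction_on with
    | one => intro p; rw [hPone, one_smul]
    | of i x => rintro ⟨a, k⟩; rw [hPof]
    | mul g h hg hh => intro p; rw [hPmul, hg, hh, mul_smul]
  have hφc : ∀ i x a, s ((CoprodI.of x : CoprodI C) • a) * φ (c i x a) = CoprodI.of x * s a := by
    intro i x a
    simp only [c, map_mul, map_inv, hφE, hφσ i _ _ (hrr i a) (hst i x a), hrep]
    group
  have hP2 : ∀ g p, s (P g p).1 * φ (P g p).2 = g * (s p.1 * φ p.2) := by
    intro g
    induction g using CoprodI.induction_on with
    | one => intro p; rw [hPone, one_mul]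
    | of i x => rintro ⟨a, k⟩; rw [hPof]; simp only [map_mul]; rw [← mul_assoc, hφc, mul_assoc]
    | mul g h hg hh => intro p; rw [hPmul, hg, hh, mul_assoc]
  have hPw : ∀ i a k, P (CoprodI.of (w i a)) (rep i a, k) = (a, E i a * k) := by
    intro i a k
    rw [hPof]
    simp only [c, hw, hrr, hw1 i _ (hrr i a), hE1 i _ (hrr i a)]
    simp [hσ1 _ _ (hrr i a)]
  have hPs : ∀ n a, D a = n → ∀ k, P (s a) (a₀, k) = (a, k) := by
    intro n
    induction n using Nat.strong_induction_on with
    | _ n ih =>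
      intro a han k
      by_cases ha : a = a₀
      · subst ha; rw [hs0, hPone]
      · rw [hs a ha, hPmul, ih _ (han ▸ hD a ha) _ rfl, hPw, hE2 a ha, one_mul]
  have hPs' : ∀ a k, P (s a) (a₀, k) = (a, k) := fun a => hPs _ a rfl
  have hPsi : ∀ a k, P (s a)⁻¹ (a, k) = (a₀, k) := fun a k => hPinv _ _ _ (hPs' a k)
  have hPφ : ∀ k k', P (φ k) (a₀, k') = (a₀, k * k') := by
    let S : Subgroup K :=
      { carrier := {k | ∀ k', P (φ k) (a₀, k') = (a₀, k * k')}
        one_mem' := fun k' => by rw [map_one, hPone, one_mul]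
        mul_mem' := fun {a b} ha hb k' => by
          rw [map_mul, hPmul, hb, ha, mul_assoc]
        inv_mem' := fun {a} ha k' => by
          rw [map_inv]
          apply hPinv
          rw [ha, mul_inv_cancel_left] }
    have hS : S = ⊤ := by
      apply hgen
      · intro i a k'
        rw [hφE, hPmul, hPmul, hPs', hPw, hPsi]
      · intro i a x ha hx k'
        rw [hφσ i a x ha hx, hPmul, hPmul, hPs', hPof, hx, hPsi]
        simp [c, hx, hE1 i a ha, hw1 i a ha, ha]
    intro k
    have : k ∈ S := hS ▸ Subgroup.mem_top k
    exact this
  constructor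
  · intro k k' h
    have h1 := hPφ k 1
    rw [h, hPφ k' 1] at h1
    simpa using (congrArg Prod.snd h1).symm
  · ext g
    constructor
    · rintro ⟨k, rfl⟩
      rw [MulAction.mem_stabilizer_iff]
      have := hP1 (φ k) (a₀, 1)
      rw [hPφ] at this
      exact this.symm
    · intro hg
      rw [MulAction.mem_stabilizer_iff] at hg
      refine ⟨(P g (a₀, 1)).2, ?_⟩
      have h1 := hP1 g (a₀, 1)
      have h2 := hP2 g (a₀, 1)
      rw [h1] at h2
      simpa [hg, hs0] using h2

open Monoid in
/-- Existence of the tree data. -/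
theorem kurosh_tree {ι : Type u} (C : ι → Type u) [∀ i, Group (C i)]
    {A : Type u} [MulAction (CoprodI C) A] [MulAction.IsPretransitive (CoprodI C) A] (a₀ : A)
    (i₀ : ι) :
    ∃ (D : A → ℕ) (t : A → ι) (rep : ι → A → A) (w : ∀ i, A → C i) (s : A → CoprodI C),
    (∀ a, a ≠ a₀ → D (rep (t a) a) < D a) ∧
    (∀ i (x : C i) a, rep i ((CoprodI.of x : CoprodI C) • a) = rep i a) ∧
    (∀ i a, (CoprodI.of (w i a) : CoprodI C) • rep i a = a) ∧
    (∀ i a, rep i a = a → w i a = 1) ∧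
    (s a₀ = 1) ∧
    (∀ a, a ≠ a₀ → s a = CoprodI.of (w (t a) a) * s (rep (t a) a)) := by
  classical
  let pr : List (Σ i, C i) → CoprodI C := fun l => (l.map fun x => CoprodI.of x.2).prod
  have hex : ∀ a : A, ∃ n, ∃ l : List (Σ i, C i), l.length = n ∧ pr l • a₀ = a := by
    intro a
    obtain ⟨g, rfl⟩ := MulAction.exists_smul_eq (CoprodI C) a₀ a
    suffices ∃ l, pr l = g by
      obtain ⟨l, rfl⟩ := this
      exact ⟨_, l, rfl, rfl⟩
    induction g using CoprodI.induction_on with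
    | one => exact ⟨[], rfl⟩
    | of i x => exact ⟨[⟨i, x⟩], by simp [pr]⟩
    | mul g h hg hh =>
      obtain ⟨l, rfl⟩ := hg
      obtain ⟨l', rfl⟩ := hh
      exact ⟨l ++ l', by simp [pr]⟩
  let D : A → ℕ := fun a => Nat.find (hex a)
  have hDle : ∀ l, D (pr l • a₀) ≤ l.length := fun l => Nat.find_min' _ ⟨l, rfl, rfl⟩
  have hstep : ∀ a, ∃ i, a ≠ a₀ → ∃ (x : C i) (b : A), (CoprodI.of x : CoprodI C) • a = b ∧ D b < D a := by
    intro a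
    obtain ⟨l, hl, hla⟩ := Nat.find_spec (hex a)
    rcases l with _ | ⟨⟨i, x⟩, l⟩
    · exact ⟨i₀, fun h => absurd (by simpa [pr] using hla.symm) h⟩
    · refine ⟨i, fun _ => ⟨x⁻¹, pr l • a₀, ?_, ?_⟩⟩
      · rw [← hla, map_inv, inv_smul_eq_iff, ← mul_smul]
        simp [pr]
      · have h1 := hDle l
        have h2 : l.length + 1 = D a := by simpa using hl
        omega
  choose t ht using hstep
  have hmin : ∀ S : Set A, ∃ b, S.Nonempty → b ∈ S ∧ ∀ a ∈ S, D b ≤ D a := by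
    intro S
    by_cases hS : S.Nonempty
    · refine ⟨Function.argminOn D S hS, fun _ => ⟨Function.argminOn_mem _ _ _, fun a ha =>
        Function.argminOn_le _ _ ha⟩⟩
    · exact ⟨a₀, fun h => absurd h hS⟩
  choose f hf using hmin
  let O : ι → A → Set A := fun i a => {b | ∃ x : C i, (CoprodI.of x : CoprodI C) • a = b}
  have hOne : ∀ i a, (O i a).Nonempty := fun i a => ⟨a, 1, by simp⟩
  let rep : ι → A → A := fun i a => f (O i a)
  have hw : ∀ i a, ∃ x : C i, (CoprodI.of x : CoprodI C) • rep i a = a ∧ (rep i a = a → x = 1) := by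
    intro i a
    by_cases h : rep i a = a
    · exact ⟨1, by simp [h], fun _ => rfl⟩
    · obtain ⟨x, hx⟩ := (hf _ (hOne i a)).1
      refine ⟨x⁻¹, ?_, fun h' => absurd h' h⟩
      rw [map_inv, inv_smul_eq_iff]
      exact hx.symm
  choose w hw1 hw2 using hw
  have hD : ∀ a, a ≠ a₀ → D (rep (t a) a) < D a := by
    intro a ha
    obtain ⟨x, b, hb, hlt⟩ := ht a ha
    exact lt_of_le_of_lt ((hf _ (hOne (t a) a)).2 b ⟨x, hb⟩) hlt
  let s : A → CoprodI C := (measure D).wf.fix fun a ih =>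
    if h : a = a₀ then 1 else CoprodI.of (w (t a) a) * ih (rep (t a) a) (hD a h)
  refine ⟨D, t, rep, w, s, hD, ?_, hw1, hw2, ?_, ?_⟩
  · intro i x a
    have : O i ((CoprodI.of x : CoprodI C) • a) = O i a := by
      ext b
      constructor
      · rintro ⟨y, rfl⟩
        exact ⟨y * x, by simp [mul_smul]⟩
      · rintro ⟨y, rfl⟩
        exact ⟨y * x⁻¹, by simp [mul_smul]⟩
    simp only [rep, this]
  · simp only [s]
    rw [WellFounded.fix_eq]
    simp
  · intro a ha
    simp only [s]
    rw [WellFounded.fix_eq]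
    simp [ha]

theorem cyclic_subgroup_equiv {C : Type u} [Group C] (hC : ∃ c : C, Subgroup.zpowers c = ⊤)
    (S : Subgroup C) : ∃ m : ℕ, Nonempty (Multiplicative (ZMod m) ≃* S) := by
  obtain ⟨c, hc⟩ := hC
  have : IsCyclic C := ⟨c, fun x => by
    have : x ∈ (⊤ : Subgroup C) := Subgroup.mem_top x
    rwa [← hc] at this⟩
  exact ⟨Nat.card S, ⟨zmodCyclicMulEquiv (inferInstance : IsCyclic S)⟩⟩

/-- **Kurosh subgroup theorem for free products of cyclic groups.** Every subgroup of a
free product of a family of cyclic groups is isomorphic to a free product of a family of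
cyclic groups.  (Here a cyclic group is one generated by a single element; every cyclic
group is isomorphic to `Multiplicative (ZMod m)` for a unique `m ≥ 0`, with `m = 0`
giving the infinite cyclic group.) -/
theorem subgroup_of_free_product_of_cyclics {ι : Type u} (C : ι → Type u)
    [∀ i, Group (C i)] (hC : ∀ i, ∃ c : C i, Subgroup.zpowers c = ⊤)
    (H : Subgroup (Monoid.CoprodI C)) :
    ∃ (κ : Type u) (m : κ → ℕ),
      Nonempty (H ≃* Monoid.CoprodI (fun k => Multiplicative (ZMod (m k)))) := by
  classical
  rcases isEmpty_or_nonempty ι with hι | ⟨⟨i₀⟩⟩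
  · refine ⟨PEmpty, fun _ => 0, ⟨?_⟩⟩
    have h1 : ∀ x : Monoid.CoprodI C, x = 1 := fun x =>
      DFunLike.congr_fun (Monoid.CoprodI.ext_hom (MonoidHom.id _) 1 fun i => isEmptyElim i) x
    have h2 : ∀ x : Monoid.CoprodI (fun _ : PEmpty.{u+1} => Multiplicative (ZMod 0)), x = 1 :=
      fun x => DFunLike.congr_fun
        (Monoid.CoprodI.ext_hom (MonoidHom.id _) 1 fun i => isEmptyElim i) x
    exact
      { toFun := fun _ => 1
        invFun := fun _ => 1
        left_inv := fun x => Subtype.ext ((h1 _).trans (h1 _).symm)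
        right_inv := fun x => (h2 _).symm
        map_mul' := fun _ _ => by simp }
  let A := Monoid.CoprodI C ⧸ H
  let a₀ : A := ((1 : Monoid.CoprodI C) : A)
  obtain ⟨D, t, rep, w, s, hD, hrep, hw, hw1, hs0, hs⟩ := kurosh_tree C a₀ i₀
  let St : ∀ i, A → Subgroup (C i) := fun i a =>
    (MulAction.stabilizer (Monoid.CoprodI C) a).comap Monoid.CoprodI.of
  have hStm : ∀ i a x, x ∈ St i a ↔ (Monoid.CoprodI.of x : Monoid.CoprodI C) • a = a :=
    fun i a x => by simp [St, Subgroup.mem_comap, MulAction.mem_stabilizer_iff]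
  choose n hn using fun i a => cyclic_subgroup_equiv (hC i) (St i a)
  let θ : ∀ i a, Multiplicative (ZMod (n i a)) ≃* St i a := fun i a => (hn i a).some
  let N := {p : ι × A // rep p.1 p.2 ≠ p.2 ∧ ¬ (p.2 ≠ a₀ ∧ p.1 = t p.2)}
  let R := {p : ι × A // rep p.1 p.2 = p.2}
  let m : N ⊕ R → ℕ := Sum.elim (fun _ => 0) (fun r => n r.1.1 r.1.2)
  let K := Monoid.CoprodI (fun k => Multiplicative (ZMod (m k)))
  let e : N → K := fun p => Monoid.CoprodI.of
    (M := fun k => Multiplicative (ZMod (m k))) (i := Sum.inl p) (Multiplicative.ofAdd (1 : ℤ))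
  let f : ∀ r : R, St r.1.1 r.1.2 →* K := fun r =>
    (Monoid.CoprodI.of (M := fun k => Multiplicative (ZMod (m k))) (i := Sum.inr r)).comp
      (θ r.1.1 r.1.2).symm.toMonoidHom
  let E : ι → A → K := fun i a =>
    if h : rep i a ≠ a ∧ ¬ (a ≠ a₀ ∧ i = t a) then e ⟨(i, a), h⟩ else 1
  let σ : ∀ i, A → C i → K := fun i a x =>
    if h : rep i a = a ∧ x ∈ St i a then f ⟨(i, a), h.1⟩ ⟨x, h.2⟩ else 1
  let gE : ι → A → Monoid.CoprodI C := fun i a =>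
    (s a)⁻¹ * Monoid.CoprodI.of (w i a) * s (rep i a)
  let φ₀ : ∀ k : N ⊕ R, Multiplicative (ZMod (m k)) →* Monoid.CoprodI C := fun k =>
    match k with
    | Sum.inl p => (zpowersHom (Monoid.CoprodI C) (gE p.1.1 p.1.2) : Multiplicative ℤ →* _)
    | Sum.inr r => ((MulAut.conj (s r.1.2)⁻¹).toMonoidHom.comp
        ((Monoid.CoprodI.of (M := C)).comp (St r.1.1 r.1.2).subtype)).comp
          (θ r.1.1 r.1.2).toMonoidHom
  let φ : K →* Monoid.CoprodI C := Monoid.CoprodI.lift φ₀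
  have hφe : ∀ p, φ (e p) = gE p.1.1 p.1.2 := by
    intro p
    refine (Monoid.CoprodI.lift_of φ₀ _).trans ?_
    change zpowersHom (Monoid.CoprodI C) (gE p.1.1 p.1.2) (Multiplicative.ofAdd (1 : ℤ)) = _
    simp
  have hφf : ∀ r x, φ (f r x) = (s r.1.2)⁻¹ * Monoid.CoprodI.of (x : C r.1.1) * s r.1.2 := by
    intro r x
    refine (Monoid.CoprodI.lift_of φ₀ _).trans ?_
    change (MulAut.conj (s r.1.2)⁻¹) (Monoid.CoprodI.of
      ((θ r.1.1 r.1.2 ((θ r.1.1 r.1.2).symm x) : St r.1.1 r.1.2) : C r.1.1)) = _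
    simp
  obtain ⟨hinj, hran⟩ := kurosh_core C a₀ D t rep w s hD hrep hw hw1 hs0 hs φ E σ
    (fun i a h => by simp [E, h])
    (fun a h => by simp [E, h])
    (fun i a x y h hx hy => by
      rw [← hStm] at hx hy
      have hxy := mul_mem hx hy
      simp only [σ, h, hx, hy, hxy, and_self, dite_true]
      rw [← map_mul]
      rfl)
    (fun i a => by
      by_cases h : rep i a ≠ a ∧ ¬ (a ≠ a₀ ∧ i = t a)
      · simp only [E, dif_pos h, hφe, gE]
      · simp only [E, dif_neg h, map_one]
        by_cases h1 : rep i a = a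
        · simp [h1, hw1 i a h1]
        · have h2 : a ≠ a₀ ∧ i = t a := by
            by_contra h3
            exact h ⟨h1, h3⟩
          obtain ⟨h2, rfl⟩ := h2
          rw [mul_assoc, ← hs a h2, inv_mul_cancel])
    (fun i a x h hx => by
      rw [← hStm] at hx
      simp only [σ, dif_pos (And.intro h hx), hφf])
    (fun S hSE hSσ => by
      have hle : (Monoid.CoprodI.lift (fun k => Monoid.CoprodI.of
          (M := fun k => Multiplicative (ZMod (m k))) (i := k))).range ≤ S := by
        apply Monoid.CoprodI.lift_range_le
        rintro (p | r) _ ⟨x, rfl⟩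
        · have h1 : e p ∈ S := by
            have := hSE p.1.1 p.1.2
            simpa only [E, dif_pos p.2] using this
          have h2 : (Monoid.CoprodI.of (M := fun k => Multiplicative (ZMod (m k)))
              (i := Sum.inl p)) x = e p ^ (Multiplicative.toAdd (x : Multiplicative ℤ) : ℤ) := by
            rw [← map_zpow]
            congr 1
            have h3 : ∀ y : Multiplicative ℤ,
                y = (Multiplicative.ofAdd (1 : ℤ)) ^ (Multiplicative.toAdd y) := fun y => by
              rw [← ofAdd_zsmul]
              simp
            exact h3 x
          rw [h2]
          exact S.zpow_mem h1 _
        · have h1 := (θ r.1.1 r.1.2 x).2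
          have h2 := hSσ r.1.1 r.1.2 (θ r.1.1 r.1.2 x) r.2 ((hStm _ _ _).1 h1)
          simp only [σ, dif_pos (And.intro r.2 h1)] at h2
          convert h2 using 1
          change _ = Monoid.CoprodI.of (M := fun k => Multiplicative (ZMod (m k)))
            (i := Sum.inr r) ((θ r.1.1 r.1.2).symm (θ r.1.1 r.1.2 x))
          exact congrArg (Monoid.CoprodI.of (M := fun k => Multiplicative (ZMod (m k)))
            (i := Sum.inr r)) ((θ r.1.1 r.1.2).symm_apply_apply x).symm
      rw [Monoid.CoprodI.lift_of', MonoidHom.range_eq_top.2 (fun x => ⟨x, rfl⟩)] at hle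
      exact top_le_iff.1 hle)
  have hH : φ.range = H := by
    rw [hran]
    exact MulAction.stabilizer_quotient H
  exact ⟨N ⊕ R, m, ⟨((MonoidHom.ofInjective hinj).trans (MulEquiv.subgroupCongr hH)).symm⟩⟩
end
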